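/- Every simple conformal algebra of finite type over an algebraically closed field F of characteristic 0 is isomorphic either to the Virasoro conformal algebra R_W or to the current conformal algebra R(G) for some finite-dimensional simple Lie algebra G over F. -/

import Mathlib

/-- A conformal algebra over a field `F` of characteristic 0. -/
structure ConformalAlgebra (F : Type*) (R : Type*) [Field F] [CharZero F]
    [AddCommGroup R] [Module F R] where
  D : R →ₗ[F] R
  prod : ℕ → R →ₗ[F] R →ₗ[F] R
  locality : ∀ u v : R, ∃ N : ℕ, ∀ n ≥ N, prod n u v = 0
  sesqui_zero : ∀ u v : R, prod 0 (D u) v = 0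
  sesqui : ∀ (n : ℕ) (u v : R), prod (n + 1) (D u) v = -(((n + 1 : ℕ) : F)) • prod n u v
  skew : ∀ (n N : ℕ) (u v : R), (∀ j ≥ N, prod (n + j) v u = 0) →
    prod n u v = ∑ j ∈ Finset.range N,
      ((-1 : F) ^ (n + j + 1) * ((j.factorial : F)⁻¹)) • ((D ^ j) (prod (n + j) v u))
  jacobi : ∀ (m n : ℕ) (u v w : R),
    prod m u (prod n v w) - prod n v (prod m u w) =
      ∑ j ∈ Finset.range (m + 1), ((m.choose j : F)) • prod (m + n - j) (prod j u v) w

/-!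
A simple conformal algebra `R` of finite type has trivial center, so it is free of finite rank over
`F[∂]` and sits in `W = F[T;T⁻¹]^r`, with `∂` acting as `T`. The operators `u⁽ⁿ⁾` span a Lie algebra
`L` acting on `W`, on which `δ = [·, ∂]` is a surjective, locally nilpotent derivation.

Choose a basis of `W` and real weights of its members for which `L` raises weighted degrees by as
little as possible, say by `P ≥ 0`. Weights can be rounded so that `P` has bounded denominator, so
the minimum is attained. At the minimum the leading symbols do not generate a nilpotent algebra, for
otherwise perturbing the weights along a flag would lower `P`. Comparing leading terms in `[x, y]`,
the symbols represent `L` if `P = 0` and commute if `P > 0`. In the latter case, taking traces of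
products with powers of a symbol excludes `P > 1`, makes a nonzero functional vanish on all brackets
if `P < 1`, and yields a functional `θ` with `θ [x, y] = θ (δ x) θ y - θ (δ y) θ x` if `P = 1`.

So either `L` has a proper ideal of finite codimension, hence a finite-dimensional simple quotient
`𝔤`, or it has such a functional, that is, it acts by vector fields on the formal line. In both
cases the large modes `u⁽ⁿ⁾` of each `u` are killed, and simplicity makes an element of `R`
determined by the images of its modes. The elements for which only the mode of index `0` survives
then generate `R` freely over `F[∂]`: they form a copy of `𝔤`, or are the multiples of a Virasoro
element.
-/

namespace ConformalAlgebra

open LaurentPolynomial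

section LaurentDegree

variable {F : Type*} [Field F]

/-- The `k`-th divided-power derivative `∂ᵏ / k!` on Laurent polynomials. -/
noncomputable def laurentHasseDeriv (k : ℕ) : F[T;T⁻¹] →ₗ[F] F[T;T⁻¹] :=
  Finsupp.lsum F (fun n : ℤ => LinearMap.toSpanSingleton F F[T;T⁻¹]
    (AddMonoidAlgebra.single (n - k) ((Ring.choose n k : ℤ) : F))) ∘ₗ
    (AddMonoidAlgebra.coeffLinearEquiv (S := F) (M := ℤ) F).toLinearMap

lemma laurentHasseDeriv_single (k : ℕ) (n : ℤ) (c : F) :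
    laurentHasseDeriv k (AddMonoidAlgebra.single n c : F[T;T⁻¹]) =
      AddMonoidAlgebra.single (n - k) (((Ring.choose n k : ℤ) : F) * c) := by
  change Finsupp.lsum F _ (Finsupp.single n c) = _
  rw [Finsupp.lsum_single, LinearMap.toSpanSingleton_apply, AddMonoidAlgebra.smul_single,
    smul_eq_mul, mul_comm]

lemma coeff_laurentHasseDeriv (k : ℕ) (f : F[T;T⁻¹]) (n : ℤ) :
    (laurentHasseDeriv k f).coeff n = ((Ring.choose (n + k) k : ℤ) : F) * f.coeff (n + k) := by
  induction f using LaurentPolynomial.induction_on' with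
  | add p q hp hq => simp [map_add, hp, hq, mul_add]
  | C_mul_T m a =>
    rw [← single_eq_C_mul_T, laurentHasseDeriv_single]
    simp only [AddMonoidAlgebra.coeff_single, Finsupp.single_apply]
    by_cases h : m = n + k
    · subst h; simp
    · rw [if_neg h, if_neg (by lia), mul_zero]

@[simp] lemma laurentHasseDeriv_zero (f : F[T;T⁻¹]) : laurentHasseDeriv 0 f = f := by
  ext n; simp [coeff_laurentHasseDeriv]

lemma laurentHasseDeriv_succ_one (k : ℕ) : laurentHasseDeriv (k + 1) (1 : F[T;T⁻¹]) = 0 := by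
  rw [AddMonoidAlgebra.one_def, laurentHasseDeriv_single, Ring.choose_zero_succ]
  simp

lemma coeff_T_mul (m : ℤ) (f : F[T;T⁻¹]) (n : ℤ) : (T m * f).coeff n = f.coeff (n - m) := by
  rw [T, AddMonoidAlgebra.coeff_single_mul_apply]
  simp [sub_eq_neg_add]

lemma laurentHasseDeriv_succ_T_one_mul (k : ℕ) (f : F[T;T⁻¹]) :
    laurentHasseDeriv (k + 1) (T 1 * f) =
      T 1 * laurentHasseDeriv (k + 1) f + laurentHasseDeriv k f := by
  ext n
  have pascal := Ring.choose_succ_succ (n + k : ℤ) k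
  simp only [coeff_laurentHasseDeriv, coeff_T_mul, AddMonoidAlgebra.coeff_add, Finsupp.add_apply]
  rw [show n + ((k + 1 : ℕ) : ℤ) = n + k + 1 by push_cast; ring,
    show n - 1 + ((k + 1 : ℕ) : ℤ) = n + k by push_cast; ring, add_sub_cancel_right, pascal]
  push_cast
  ring

/-- `DegLE a f` says that `f` has degree at most the real number `a`. Real bounds are needed since
rows and columns of matrices will be given real weights. -/
def DegLE (a : ℝ) (f : F[T;T⁻¹]) : Prop := ∀ n : ℤ, a < n → f.coeff n = 0

open Classical in
/-- The coefficient of `f` at a real exponent `a`; it is `0` if `a` is not an integer. -/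
noncomputable def coeffAt (a : ℝ) : F[T;T⁻¹] →ₗ[F] F :=
  if (⌊a⌋ : ℝ) = a then
    Finsupp.lapply ⌊a⌋ ∘ₗ (AddMonoidAlgebra.coeffLinearEquiv (S := F) (M := ℤ) F).toLinearMap
  else 0

lemma coeffAt_intCast (n : ℤ) (f : F[T;T⁻¹]) : coeffAt (n : ℝ) f = f.coeff n := by
  simp [coeffAt]

lemma coeffAt_of_forall_ne {a : ℝ} (h : ∀ n : ℤ, (n : ℝ) ≠ a) (f : F[T;T⁻¹]) :
    coeffAt a f = 0 := by
  rw [coeffAt, if_neg (h _), LinearMap.zero_apply]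

lemma DegLE.mono {a b : ℝ} {f : F[T;T⁻¹]} (hf : DegLE a f) (hab : a ≤ b) : DegLE b f :=
  fun n hn => hf n (hab.trans_lt hn)

lemma degLE_zero (a : ℝ) : DegLE a (0 : F[T;T⁻¹]) := fun _ _ => rfl

lemma DegLE.add {a : ℝ} {f g : F[T;T⁻¹]} (hf : DegLE a f) (hg : DegLE a g) : DegLE a (f + g) :=
  fun n hn => by rw [AddMonoidAlgebra.coeff_add, Finsupp.add_apply, hf n hn, hg n hn, add_zero]

lemma DegLE.smul {a : ℝ} {f : F[T;T⁻¹]} (c : F) (hf : DegLE a f) : DegLE a (c • f) :=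
  fun n hn => by rw [AddMonoidAlgebra.coeff_smul, Finsupp.smul_apply, hf n hn, smul_zero]

lemma DegLE.sum {α : Type*} {a : ℝ} {s : Finset α} {f : α → F[T;T⁻¹]}
    (hf : ∀ i ∈ s, DegLE a (f i)) : DegLE a (∑ i ∈ s, f i) :=
  Finset.sum_induction f (DegLE a) (fun _ _ => DegLE.add) (degLE_zero a) hf

lemma DegLE.mul {a b : ℝ} {f g : F[T;T⁻¹]} (hf : DegLE a f) (hg : DegLE b g) :
    DegLE (a + b) (f * g) := by
  intro n hn
  rw [AddMonoidAlgebra.coeff_mul_apply_left, Finsupp.sum]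
  refine Finset.sum_eq_zero fun m _ => ?_
  rcases lt_or_ge a m with hm | hm
  · rw [hf m hm, zero_mul]
  · rw [hg (-m + n) (by push_cast; linarith), mul_zero]

lemma DegLE.coeffAt_eq_zero {a b : ℝ} {f : F[T;T⁻¹]} (hf : DegLE a f) (hab : a < b) :
    coeffAt b f = 0 := by
  by_cases h : ∃ n : ℤ, (n : ℝ) = b
  · obtain ⟨n, rfl⟩ := h
    rw [coeffAt_intCast, hf n hab]
  · exact coeffAt_of_forall_ne (not_exists.mp h) f

lemma DegLE.coeffAt_mul {a b : ℝ} {f g : F[T;T⁻¹]} (hf : DegLE a f) (hg : DegLE b g) :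
    coeffAt (a + b) (f * g) = coeffAt a f * coeffAt b g := by
  by_cases hab : ∃ n : ℤ, (n : ℝ) = a + b
  · obtain ⟨n, hn⟩ := hab
    have vanish (m : ℤ) (hm : (m : ℝ) ≠ a) : f.coeff m * g.coeff (-m + n) = 0 := by
      rcases hm.lt_or_gt with hm | hm
      · rw [hg (-m + n) (by push_cast; linarith), mul_zero]
      · rw [hf m hm, zero_mul]
    rw [← hn, coeffAt_intCast, AddMonoidAlgebra.coeff_mul_apply_left, Finsupp.sum]
    by_cases ha : ∃ m : ℤ, (m : ℝ) = a
    · obtain ⟨m, rfl⟩ := ha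
      rw [show b = ((-m + n : ℤ) : ℝ) by push_cast; linarith, coeffAt_intCast, coeffAt_intCast]
      refine Finset.sum_eq_single m (fun l _ hl => vanish l (by exact_mod_cast hl)) fun h => ?_
      rw [Finsupp.notMem_support_iff.mp h, zero_mul]
    · rw [coeffAt_of_forall_ne (not_exists.mp ha), zero_mul]
      exact Finset.sum_eq_zero fun m _ => vanish m (not_exists.mp ha m)
  · rw [coeffAt_of_forall_ne (not_exists.mp hab)]
    by_cases ha : ∃ m : ℤ, (m : ℝ) = a
    · obtain ⟨m, rfl⟩ := ha
      rw [coeffAt_of_forall_ne (a := b), mul_zero]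
      rintro n rfl
      exact hab ⟨m + n, by push_cast; rfl⟩
    · rw [coeffAt_of_forall_ne (not_exists.mp ha), zero_mul]

lemma DegLE.laurentHasseDeriv {a : ℝ} {f : F[T;T⁻¹]} (hf : DegLE a f) (k : ℕ) :
    DegLE (a - k) (laurentHasseDeriv k f) := fun n hn => by
  rw [coeff_laurentHasseDeriv, hf (n + k) (by push_cast; linarith), mul_zero]

lemma exists_degLE (f : F[T;T⁻¹]) : ∃ a : ℝ, DegLE a f := by
  obtain ⟨a, ha⟩ := f.coeff.support.bddAbove
  refine ⟨a, fun n hn => Finsupp.notMem_support_iff.mp fun hmem => ?_⟩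
  exact (Int.cast_lt.mp hn).not_ge (ha (Finset.mem_coe.mpr hmem))

/-- Every weight can be given a value in `F`, compatibly with the embedding of the integers. -/
lemma exists_addMonoidHom_real_map_one (F : Type*) [Field F] [CharZero F] :
    ∃ lam : ℝ →+ F, lam 1 = 1 := by
  obtain ⟨g, hg⟩ := LinearMap.exists_leftInverse_of_injective
    (LinearMap.toSpanSingleton ℚ ℝ 1) (LinearMap.ker_eq_bot.mpr fun a b h => by simpa using h)
  refine ⟨(Rat.castHom F).toAddMonoidHom.comp g.toAddMonoidHom, ?_⟩
  have g_one : g 1 = 1 := by simpa using LinearMap.congr_fun hg 1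
  simp [g_one]

lemma map_intCast_of_map_one {lam : ℝ →+ F} (hlam : lam 1 = 1) (n : ℤ) : lam n = n := by
  rw [show (n : ℝ) = n • (1 : ℝ) by simp, map_zsmul, hlam, zsmul_one]

lemma coeffAt_laurentHasseDeriv_one {lam : ℝ →+ F} (hlam : lam 1 = 1) (a : ℝ) (f : F[T;T⁻¹]) :
    coeffAt (a - 1) (laurentHasseDeriv 1 f) = lam a * coeffAt a f := by
  by_cases ha : ∃ n : ℤ, (n : ℝ) = a
  · obtain ⟨n, rfl⟩ := ha
    rw [show (n : ℝ) - 1 = ((n - 1 : ℤ) : ℝ) by push_cast; ring, coeffAt_intCast, coeffAt_intCast,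
      coeff_laurentHasseDeriv, map_intCast_of_map_one hlam]
    simp
  · rw [coeffAt_of_forall_ne (not_exists.mp ha), mul_zero, coeffAt_of_forall_ne]
    exact fun n hn => ha ⟨n + 1, by push_cast; linarith⟩

end LaurentDegree

section WeightedDegree

variable {F : Type*} [Field F] {l m n : Type*}

/-- If row `i` has weight `u i` and column `j` has weight `v j`, then `M` has weighted degree at
most `s`: multiplication by `M` raises the weight by at most `s`. -/
def WDegLE (u : m → ℝ) (v : n → ℝ) (s : ℝ) (M : Matrix m n F[T;T⁻¹]) : Prop :=
  ∀ i j, DegLE (s + v j - u i) (M i j)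

/-- The leading coefficient matrix of a matrix of weighted degree at most `s`. -/
noncomputable def symbol (u : m → ℝ) (v : n → ℝ) (s : ℝ) :
    Matrix m n F[T;T⁻¹] →ₗ[F] Matrix m n F where
  toFun M := Matrix.of fun i j => coeffAt (s + v j - u i) (M i j)
  map_add' M N := by ext i j; simp
  map_smul' c M := by ext i j; simp

lemma symbol_apply (u : m → ℝ) (v : n → ℝ) (s : ℝ) (M : Matrix m n F[T;T⁻¹]) (i : m) (j : n) :
    symbol u v s M i j = coeffAt (s + v j - u i) (M i j) := rfl

variable {u : l → ℝ} {v : m → ℝ} {w : n → ℝ} {s t : ℝ}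

lemma WDegLE.mono {M : Matrix m n F[T;T⁻¹]} (hM : WDegLE v w s M) (hst : s ≤ t) :
    WDegLE v w t M := fun i j => (hM i j).mono (by linarith)

lemma wDegLE_zero : WDegLE v w s (0 : Matrix m n F[T;T⁻¹]) := fun _ _ => degLE_zero _

lemma WDegLE.add {M N : Matrix m n F[T;T⁻¹]} (hM : WDegLE v w s M) (hN : WDegLE v w s N) :
    WDegLE v w s (M + N) := fun i j => (hM i j).add (hN i j)

lemma WDegLE.smul {M : Matrix m n F[T;T⁻¹]} (c : F) (hM : WDegLE v w s M) :
    WDegLE v w s (c • M) := fun i j => (hM i j).smul c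

lemma WDegLE.sub {M N : Matrix m n F[T;T⁻¹]} (hM : WDegLE v w s M) (hN : WDegLE v w s N) :
    WDegLE v w s (M - N) := by
  rw [sub_eq_add_neg, ← neg_one_smul F N]
  exact hM.add (hN.smul _)

lemma WDegLE.sum {α : Type*} {r : Finset α} {M : α → Matrix m n F[T;T⁻¹]}
    (hM : ∀ k ∈ r, WDegLE v w s (M k)) : WDegLE v w s (∑ k ∈ r, M k) :=
  Finset.sum_induction M (WDegLE v w s) (fun _ _ => WDegLE.add) wDegLE_zero hM

lemma WDegLE.map_laurentHasseDeriv {M : Matrix m n F[T;T⁻¹]} (hM : WDegLE v w s M) (k : ℕ) :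
    WDegLE v w (s - k) (M.map (laurentHasseDeriv k)) := fun i j =>
  ((hM i j).laurentHasseDeriv k).mono (by linarith)

lemma WDegLE.symbol_eq_zero {M : Matrix m n F[T;T⁻¹]} (hM : WDegLE v w s M) (hst : s < t) :
    symbol v w t M = 0 := by
  ext i j
  exact (hM i j).coeffAt_eq_zero (by linarith)

lemma exists_wDegLE [Finite m] [Finite n] (v : m → ℝ) (w : n → ℝ) (M : Matrix m n F[T;T⁻¹]) :
    ∃ s, WDegLE v w s M := by
  choose a ha using fun p : m × n => exists_degLE (M p.1 p.2)
  obtain ⟨s, hs⟩ := Finite.bddAbove_range fun p : m × n => a p - w p.2 + v p.1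
  refine ⟨s, fun i j => (ha (i, j)).mono ?_⟩
  have : a (i, j) - w j + v i ≤ s := hs ⟨(i, j), rfl⟩
  linarith

lemma WDegLE.mul [Fintype m] {M : Matrix l m F[T;T⁻¹]} {N : Matrix m n F[T;T⁻¹]}
    (hM : WDegLE u v s M) (hN : WDegLE v w t N) : WDegLE u w (s + t) (M * N) := fun i j => by
  rw [Matrix.mul_apply]
  exact DegLE.sum fun k _ => ((hM i k).mul (hN k j)).mono (by linarith)

lemma WDegLE.symbol_mul [Fintype m] {M : Matrix l m F[T;T⁻¹]} {N : Matrix m n F[T;T⁻¹]}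
    (hM : WDegLE u v s M) (hN : WDegLE v w t N) :
    symbol u w (s + t) (M * N) = symbol u v s M * symbol v w t N := by
  ext i j
  simp only [symbol_apply, Matrix.mul_apply, map_sum]
  refine Finset.sum_congr rfl fun k _ => ?_
  rw [← (hM i k).coeffAt_mul (hN k j)]
  congr 2
  ring

lemma symbol_one [DecidableEq m] (v : m → ℝ) :
    symbol v v 0 (1 : Matrix m m F[T;T⁻¹]) = 1 := by
  ext i j
  rcases eq_or_ne i j with rfl | hij
  · rw [symbol_apply, Matrix.one_apply_eq, Matrix.one_apply_eq,
      show 0 + v i - v i = ((0 : ℤ) : ℝ) by push_cast; ring, coeffAt_intCast,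
      ← T_zero, T_apply, if_pos rfl]
  · rw [symbol_apply, Matrix.one_apply_ne hij, Matrix.one_apply_ne hij, map_zero]

lemma wDegLE_one [DecidableEq m] (v : m → ℝ) : WDegLE v v 0 (1 : Matrix m m F[T;T⁻¹]) := by
  intro i j
  rcases eq_or_ne i j with rfl | hij
  · intro n hn
    have hn0 : n ≠ 0 := by rintro rfl; simp at hn
    rw [Matrix.one_apply_eq, AddMonoidAlgebra.one_def, AddMonoidAlgebra.coeff_single,
      Finsupp.single_eq_of_ne hn0]
  · rw [Matrix.one_apply_ne hij]
    exact degLE_zero _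

section Square

variable [Fintype m] {M : Matrix m m F[T;T⁻¹]}

lemma WDegLE.pow [DecidableEq m] (hM : WDegLE v v s M) (k : ℕ) :
    WDegLE v v (k * s) (M ^ k) := by
  induction k with
  | zero => simpa using wDegLE_one v
  | succ k ih => rw [pow_succ, Nat.cast_succ, add_one_mul]; exact ih.mul hM

lemma WDegLE.symbol_pow [DecidableEq m] (hM : WDegLE v v s M) (k : ℕ) :
    symbol v v (k * s) (M ^ k) = symbol v v s M ^ k := by
  induction k with
  | zero => simpa using symbol_one v
  | succ k ih => rw [pow_succ, pow_succ, Nat.cast_succ, add_one_mul, (hM.pow k).symbol_mul hM, ih]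

lemma trace_symbol_eq_zero (v : m → ℝ) (s : ℝ) (hM : M.trace = 0) :
    (symbol v v s M).trace = 0 := by
  simp only [Matrix.trace, Matrix.diag_apply, symbol_apply, add_sub_cancel_right, ← map_sum] at hM ⊢
  rw [hM, map_zero]

lemma symbol_map_laurentHasseDeriv_one [DecidableEq m] {lam : ℝ →+ F} (hlam : lam 1 = 1)
    (v : m → ℝ) (s : ℝ) (M : Matrix m m F[T;T⁻¹]) :
    symbol v v (s - 1) (M.map (laurentHasseDeriv 1)) = lam s • symbol v v s M +
      (symbol v v s M * Matrix.diagonal (fun i => lam (v i)) -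
        Matrix.diagonal (fun i => lam (v i)) * symbol v v s M) := by
  ext i j
  simp only [Matrix.add_apply, Matrix.sub_apply, Matrix.smul_apply, Matrix.mul_diagonal,
    Matrix.diagonal_mul, smul_eq_mul, symbol_apply, Matrix.map_apply]
  rw [show s - 1 + v j - v i = s + v j - v i - 1 by ring, coeffAt_laurentHasseDeriv_one hlam,
    map_sub, map_add]
  ring

end Square

end WeightedDegree

section TraceAndCharacters

open Polynomial

variable {F : Type*} [Field F] {ι : Type*} [Fintype ι] [DecidableEq ι]

lemma trace_aeval_eq_zero {M : Matrix ι ι F} {p : F[X]}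
    (hM : ∀ k : ℕ, (M ^ (k + 1)).trace = 0) (hp : X ∣ p) : (aeval M p).trace = 0 := by
  obtain ⟨q, rfl⟩ := hp
  induction q using Polynomial.induction_on' with
  | add q r hq hr => rw [mul_add, map_add, Matrix.trace_add, hq, hr, add_zero]
  | monomial n c =>
    rw [map_mul, aeval_X, aeval_monomial, Algebra.algebraMap_eq_smul_one, smul_one_mul,
      mul_smul_comm, ← pow_succ', Matrix.trace_smul, hM, smul_zero]

/-- The Fitting idempotent of `M` is a polynomial in `M` without constant term, so its trace
vanishes, hence so does the idempotent itself. -/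
lemma isNilpotent_of_forall_trace_pow_eq_zero [CharZero F] {M : Matrix ι ι F}
    (hM : ∀ k : ℕ, (M ^ (k + 1)).trace = 0) : IsNilpotent M := by
  obtain ⟨g, hg, hXg⟩ := exists_eq_pow_rootMultiplicity_mul_and_not_dvd M.charpoly
    M.charpoly_monic.ne_zero 0
  set a := M.charpoly.rootMultiplicity 0
  rw [map_zero, sub_zero] at hg hXg
  obtain ⟨s, t, hst⟩ : IsCoprime ((X : F[X]) ^ (a + 1)) g :=
    IsCoprime.pow_left (irreducible_X.coprime_iff_not_dvd.mpr hXg)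
  have kill (p : F[X]) : aeval M (p * (X ^ a * g)) = 0 := by
    rw [map_mul, ← hg, Matrix.aeval_self_charpoly, mul_zero]
  set e := s * X ^ (a + 1) with e_def
  have e_idem : IsIdempotentElem (aeval M e) := by
    have : e * e = e - s * t * X * (X ^ a * g) := by
      rw [e_def]; linear_combination s * X ^ (a + 1) * hst
    rw [IsIdempotentElem, ← map_mul, this, map_sub, kill, sub_zero]
  have e_zero : aeval M e = 0 := by
    have trace_zero : LinearMap.trace F _ (Matrix.toLinAlgEquiv' (aeval M e)) = 0 := by
      rw [show Matrix.toLinAlgEquiv' (aeval M e) = Matrix.toLin' (aeval M e) from rfl,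
        Matrix.trace_toLin'_eq]
      exact trace_aeval_eq_zero hM (dvd_mul_of_dvd_right (dvd_pow_self X a.succ_ne_zero) s)
    exact (map_eq_zero_iff _ Matrix.toLinAlgEquiv'.injective).mp
      ((LinearMap.IsIdempotentElem.trace_eq_zero_iff (e_idem.map _)).mp trace_zero)
  refine ⟨a, ?_⟩
  have := kill t
  rwa [show t * (X ^ a * g) = X ^ a - X ^ a * e by rw [e_def]; linear_combination X ^ a * hst,
    map_sub, map_mul, e_zero, mul_zero, sub_zero, map_pow, aeval_X] at this

variable {S : Type*} [CommRing S]

lemma exists_not_isNilpotent_of_list_prod_ne_zero {L : Type*} [IsNoetherianRing S] {s : L → S}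
    (hs : ∀ k : ℕ, ∃ l : List L, l.length = k ∧ (l.map s).prod ≠ 0) :
    ∃ x, ¬ IsNilpotent (s x) := by
  by_contra! hnil
  obtain ⟨k, hk⟩ := IsNoetherianRing.isNilpotent_nilradical S
  obtain ⟨l, rfl, hl⟩ := hs k
  have prod_mem (l : List L) : (l.map s).prod ∈ nilradical S ^ l.length := by
    induction l with
    | nil => simp
    | cons x l ih =>
      rw [List.map_cons, List.prod_cons, List.length_cons, pow_succ']
      exact Ideal.mul_mem_mul (hnil x) ih
  exact hl (by simpa [hk] using prod_mem l)

variable [Algebra F S]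

lemma exists_algHom_apply_ne_zero [IsAlgClosed F] [Module.Finite F S] {x : S}
    (hx : ¬ IsNilpotent x) : ∃ χ : S →ₐ[F] F, χ x ≠ 0 := by
  obtain ⟨p, hp, hxp⟩ : ∃ p : Ideal S, p.IsPrime ∧ x ∉ p := by
    rw [← mem_nilradical, nilradical_eq_sInf, Submodule.mem_sInf] at hx
    simpa using hx
  let e := (AlgEquiv.ofBijective (Algebra.ofId F (S ⧸ p))
    (IsAlgClosed.algebraMap_bijective_of_isIntegral (k := F) (K := S ⧸ p))).symm
  refine ⟨e.toAlgHom.comp (Ideal.Quotient.mkₐ F p), fun h => hxp ?_⟩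
  exact Ideal.Quotient.eq_zero_iff_mem.mp ((map_eq_zero_iff e e.injective).mp h)

lemma exists_isNilpotent_aeval_sub [IsAlgClosed F] [Module.Finite F S] {a : S}
    (ha : Function.Injective fun χ : S →ₐ[F] F => χ a) (c : S) :
    ∃ p : F[X], IsNilpotent (aeval a p - c) := by
  classical
  let _ := Fintype.ofFinite (S →ₐ[F] F)
  refine ⟨Lagrange.interpolate Finset.univ (fun χ : S →ₐ[F] F => χ a) (fun χ => χ c), ?_⟩
  by_contra hnil
  obtain ⟨χ, hχ⟩ := exists_algHom_apply_ne_zero (F := F) hnil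
  apply hχ
  rw [map_sub, ← aeval_algHom_apply, coe_aeval_eq_eval,
    Lagrange.eval_interpolate_at_node (fun χ : S →ₐ[F] F => χ c) ha.injOn (Finset.mem_univ χ),
    sub_self]

lemma isNilpotent_of_forall_trace_pow_mul_eq_zero [CharZero F] [IsAlgClosed F]
    {φ : S →ₐ[F] Matrix ι ι F} (hφ : Function.Injective φ) {a b : S}
    (ha : Function.Injective fun χ : S →ₐ[F] F => χ a)
    (hab : ∀ k : ℕ, (φ (a ^ k * b)).trace = 0) : IsNilpotent b := by
  have : Module.Finite F S := Module.Finite.of_injective φ.toLinearMap hφ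
  have trace_aeval_mul (p : F[X]) : (φ (aeval a p * b)).trace = 0 := by
    induction p using Polynomial.induction_on' with
    | add p q hp hq => rw [map_add, add_mul, map_add, Matrix.trace_add, hp, hq, add_zero]
    | monomial n c =>
      rw [aeval_monomial, mul_assoc, ← Algebra.smul_def, map_smul, Matrix.trace_smul, hab,
        smul_zero]
  have trace_mul (c : S) : (φ (c * b)).trace = 0 := by
    obtain ⟨p, hp⟩ := exists_isNilpotent_aeval_sub ha c
    have nil := (Matrix.isNilpotent_trace_of_isNilpotent
      (((Commute.all _ b).isNilpotent_mul_right hp).map φ)).eq_zero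
    rwa [sub_mul, map_sub, Matrix.trace_sub, trace_aeval_mul, zero_sub, neg_eq_zero] at nil
  refine (IsNilpotent.map_iff hφ).mp (isNilpotent_of_forall_trace_pow_eq_zero fun k => ?_)
  rw [← map_pow, pow_succ, trace_mul]

variable {L : Type*} [AddCommGroup L] [Module F L]

/-- A generic `x` separates the characters of `S`, and then every element of `S` is a polynomial
in `s x` up to a nilpotent. -/
lemma algHom_apply_eq_zero_of_trace_eq_zero [CharZero F] [IsAlgClosed F]
    {φ : S →ₐ[F] Matrix ι ι F} (hφ : Function.Injective φ) {s B : L →ₗ[F] S}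
    (hs : Algebra.adjoin F (Set.range s) = ⊤)
    (hB : ∀ (k : ℕ) (x : L), (φ (s x ^ k * B x)).trace = 0) (χ : S →ₐ[F] F) (x : L) :
    χ (B x) = 0 := by
  have : Module.Finite F S := Module.Finite.of_injective φ.toLinearMap hφ
  by_contra hx
  let f : Option {p : (S →ₐ[F] F) × (S →ₐ[F] F) // p.1 ≠ p.2} → Module.Dual F L
    | none => χ.toLinearMap ∘ₗ B
    | some p => p.1.1.toLinearMap ∘ₗ s - p.1.2.toLinearMap ∘ₗ s
  obtain ⟨y, hy⟩ := Module.Dual.exists_forall_ne_zero_of_forall_exists f <| by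
    rintro (_ | ⟨⟨ψ₁, ψ₂⟩, hψ⟩)
    · exact ⟨x, hx⟩
    · by_contra! h
      refine hψ (AlgHom.ext_of_adjoin_eq_top hs ?_)
      rintro _ ⟨z, rfl⟩
      exact sub_eq_zero.mp (h z)
  have separates : Function.Injective fun ψ : S →ₐ[F] F => ψ (s y) := fun ψ₁ ψ₂ h => by
    by_contra hψ
    exact hy (some ⟨(ψ₁, ψ₂), hψ⟩) (sub_eq_zero.mpr h)
  have nil := isNilpotent_of_forall_trace_pow_mul_eq_zero hφ separates (fun k => hB k y)
  exact hy none (nil.map χ).eq_zero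

end TraceAndCharacters

section Characters

variable {F : Type*} [Field F] [CharZero F] [IsAlgClosed F] {ι : Type*} [Fintype ι] [DecidableEq ι]
  {L : Type*} [AddCommGroup L] [Module F L]

open scoped IsMulCommutative in
lemma exists_functional_of_commute {σ : L →ₗ[F] Matrix ι ι F} (hσ : ∀ x y, σ x * σ y = σ y * σ x)
    (hprod : ∀ k : ℕ, ∃ l : List L, l.length = k ∧ (l.map σ).prod ≠ 0) :
    ∃ θ : L →ₗ[F] F, θ ≠ 0 ∧ (∀ x, σ x = 0 → θ x = 0) ∧
      ∀ (f g : Module.End F L) (b c : L),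
        (∀ (k : ℕ) (x : L), (σ x ^ k * (σ (f x) + σ (g x) * σ b - σ c * σ x)).trace = 0) →
        ∀ x, θ (f x) + θ (g x) * θ b - θ c * θ x = 0 := by
  let S := Algebra.adjoin F (Set.range σ)
  have : IsMulCommutative S := Algebra.isMulCommutative_adjoin F <| by
    rintro _ ⟨x, rfl⟩ _ ⟨y, rfl⟩
    exact hσ x y
  have : IsNoetherianRing S := IsNoetherianRing.of_finite F S
  let s : L →ₗ[F] S := σ.codRestrict (Subalgebra.toSubmodule S)
    fun x => Algebra.subset_adjoin ⟨x, rfl⟩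
  have val_s (x : L) : (s x : Matrix ι ι F) = σ x := rfl
  have adjoin_s : Algebra.adjoin F (Set.range s) = ⊤ := by
    rw [← Algebra.adjoin_adjoin_coe_preimage (R := F) (s := Set.range σ)]
    congr 1
    ext z
    simp [Subtype.ext_iff, val_s]
  obtain ⟨x₀, hx₀⟩ := exists_not_isNilpotent_of_list_prod_ne_zero (s := s) fun k => by
    obtain ⟨l, hl, hprod⟩ := hprod k
    have val_prod : S.val (l.map s).prod = (l.map σ).prod := by
      rw [map_list_prod, List.map_map]; rfl
    exact ⟨l, hl, fun h => hprod (by rw [← val_prod, h, map_zero])⟩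
  obtain ⟨χ, hχ⟩ := exists_algHom_apply_ne_zero (F := F) hx₀
  refine ⟨χ.toLinearMap ∘ₗ s, fun h => hχ (LinearMap.congr_fun h x₀), fun x hx => ?_,
    fun f g b c htrace x => ?_⟩
  · have : s x = 0 := Subtype.ext hx
    simp [this]
  · have := algHom_apply_eq_zero_of_trace_eq_zero (φ := S.val) Subtype.val_injective
      (B := s ∘ₗ f + LinearMap.mulRight F (s b) ∘ₗ s ∘ₗ g - LinearMap.mulLeft F (s c) ∘ₗ s)
      adjoin_s (fun k x => by simpa [val_s] using htrace k x) χ x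
    simpa using this

end Characters

section SymbolAnalysis

variable {F : Type*} [Field F] {ι : Type*} {L : Type*} [LieRing L] [LieAlgebra F L]
  {δ : L →ₗ[F] L} {Z : L →ₗ[F] Matrix ι ι F[T;T⁻¹]}
  {u : ι → ℝ} {P : ℝ}

/-- The bracket formula satisfied by the matrices `Z x` of a Lie algebra action on a free module
over the Laurent polynomials for which `[x, T] = δ x`. -/
def IsMatrixAction [Fintype ι] (δ : L →ₗ[F] L) (Z : L →ₗ[F] Matrix ι ι F[T;T⁻¹]) : Prop :=
  ∀ (x y : L) (K : ℕ), (δ ^ K) x = 0 → (δ ^ K) y = 0 → Z ⁅x, y⁆ = ∑ k ∈ Finset.range K,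
    (Z ((δ ^ k) x) * (Z y).map (laurentHasseDeriv k) -
      Z ((δ ^ k) y) * (Z x).map (laurentHasseDeriv k))

/-- The leading coefficients of the matrices `Z x` in weighted degree `P`. -/
noncomputable def symbolMap (Z : L →ₗ[F] Matrix ι ι F[T;T⁻¹]) (u : ι → ℝ) (P : ℝ) :
    L →ₗ[F] Matrix ι ι F := symbol u u P ∘ₗ Z

lemma symbolMap_apply (x : L) : symbolMap Z u P x = symbol u u P (Z x) := rfl

/-- The term of first order in the bracket formula `IsMatrixAction`, before skew-symmetrization. -/
noncomputable def firstOrder [Fintype ι] (δ : L →ₗ[F] L) (Z : L →ₗ[F] Matrix ι ι F[T;T⁻¹])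
    (x y : L) : Matrix ι ι F[T;T⁻¹] :=
  Z (δ x) * (Z y).map (laurentHasseDeriv 1)

variable [Fintype ι]

lemma wDegLE_firstOrder (hdeg : ∀ x, WDegLE u u P (Z x)) (x y : L) :
    WDegLE u u (2 * P - 1) (firstOrder δ Z x y) :=
  ((hdeg _).mul ((hdeg y).map_laurentHasseDeriv 1)).mono (by push_cast; linarith)

lemma IsMatrixAction.exists_remainder (hZ : IsMatrixAction δ Z) (hnil : ∀ x : L, ∃ k, (δ ^ k) x = 0)
    (hdeg : ∀ x, WDegLE u u P (Z x)) (x y : L) :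
    ∃ Q, WDegLE u u (2 * P - 2) Q ∧ Z ⁅x, y⁆ = (Z x * Z y - Z y * Z x) +
      (firstOrder δ Z x y - firstOrder δ Z y x) + Q := by
  obtain ⟨a, ha⟩ := hnil x
  obtain ⟨b, hb⟩ := hnil y
  have expansion := hZ x y (a + b + 2) (Module.End.pow_map_zero_of_le (by lia) ha)
    (Module.End.pow_map_zero_of_le (by lia) hb)
  rw [Finset.sum_range_succ', Finset.sum_range_succ'] at expansion
  have higher (k : ℕ) (x y : L) :
      WDegLE u u (2 * P - 2) (Z x * (Z y).map (laurentHasseDeriv (k + 1 + 1))) := by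
    refine ((hdeg x).mul ((hdeg y).map_laurentHasseDeriv (k + 1 + 1))).mono ?_
    push_cast
    linarith [(Nat.cast_nonneg k : (0 : ℝ) ≤ k)]
  have tail := WDegLE.sum (r := Finset.range (a + b)) fun k _ =>
    (higher k ((δ ^ (k + 1 + 1)) x) y).sub (higher k ((δ ^ (k + 1 + 1)) y) x)
  have hasse_zero (M : Matrix ι ι F[T;T⁻¹]) : M.map (laurentHasseDeriv 0) = M := by
    ext i j : 2; simp
  simp only [zero_add, pow_zero, pow_one, hasse_zero, Module.End.one_apply] at expansion
  refine ⟨_, tail, expansion.trans ?_⟩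
  rw [add_assoc, add_comm, add_comm (Z (δ x) * _ - _)]
  rfl

lemma IsMatrixAction.symbol_commutator (hZ : IsMatrixAction δ Z)
    (hnil : ∀ x : L, ∃ k, (δ ^ k) x = 0) (hdeg : ∀ x, WDegLE u u P (Z x)) (x y : L) :
    symbol u u (P + P) (Z ⁅x, y⁆) = symbolMap Z u P x * symbolMap Z u P y -
      symbolMap Z u P y * symbolMap Z u P x := by
  obtain ⟨Q, hQ, h⟩ := hZ.exists_remainder hnil hdeg x y
  rw [h, map_add, map_add, map_sub, (hdeg x).symbol_mul (hdeg y), (hdeg y).symbol_mul (hdeg x),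
    hQ.symbol_eq_zero (by linarith),
    ((wDegLE_firstOrder hdeg x y).sub (wDegLE_firstOrder hdeg y x)).symbol_eq_zero (by linarith),
    add_zero, add_zero]
  rfl

lemma IsMatrixAction.symbolMap_lie (hZ : IsMatrixAction δ Z)
    (hnil : ∀ x : L, ∃ k, (δ ^ k) x = 0) (hdeg : ∀ x, WDegLE u u 0 (Z x)) (x y : L) :
    symbolMap Z u 0 ⁅x, y⁆ = symbolMap Z u 0 x * symbolMap Z u 0 y -
      symbolMap Z u 0 y * symbolMap Z u 0 x := by
  rw [← hZ.symbol_commutator hnil hdeg, add_zero, symbolMap_apply]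

lemma IsMatrixAction.symbolMap_commute (hZ : IsMatrixAction δ Z)
    (hnil : ∀ x : L, ∃ k, (δ ^ k) x = 0) (hdeg : ∀ x, WDegLE u u P (Z x)) (hP : 0 < P) (x y : L) :
    symbolMap Z u P x * symbolMap Z u P y = symbolMap Z u P y * symbolMap Z u P x := by
  rw [← sub_eq_zero, ← hZ.symbol_commutator hnil hdeg,
    (hdeg _).symbol_eq_zero (lt_add_of_pos_left P hP)]

/-- Differentiation multiplies the symbol by the slope up to a commutator with a diagonal matrix,
which is invisible to the trace because the symbols commute. -/
lemma trace_mul_symbol_firstOrder {lam : ℝ →+ F} (hlam : lam 1 = 1)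
    (hdeg : ∀ x, WDegLE u u P (Z x)) {x y : L} {A : Matrix ι ι F}
    (hA : Commute A (symbolMap Z u P y))
    (hδ : Commute (symbolMap Z u P (δ x)) (symbolMap Z u P y)) :
    (A * symbol u u (2 * P - 1) (firstOrder δ Z x y)).trace =
      lam P * (A * (symbolMap Z u P (δ x) * symbolMap Z u P y)).trace := by
  classical
  have comm : Commute (A * symbolMap Z u P (δ x)) (symbolMap Z u P y) := hA.mul_left hδ
  set B := A * symbolMap Z u P (δ x)
  have trace_bracket (H : Matrix ι ι F) :
      (B * (symbolMap Z u P y * H - H * symbolMap Z u P y)).trace = 0 := by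
    rw [mul_sub, Matrix.trace_sub, ← mul_assoc, comm.eq, mul_assoc, Matrix.trace_mul_comm,
      mul_assoc, sub_self]
  have product := (hdeg (δ x)).symbol_mul ((hdeg y).map_laurentHasseDeriv 1)
  rw [Nat.cast_one, symbol_map_laurentHasseDeriv_one hlam, ← symbolMap_apply, ← symbolMap_apply]
    at product
  rw [show 2 * P - 1 = P + (P - 1) by ring, firstOrder, product, ← mul_assoc, mul_add,
    Matrix.trace_add, trace_bracket, add_zero, mul_smul_comm, Matrix.trace_smul, smul_eq_mul,
    mul_assoc]

variable [DecidableEq ι]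

lemma trace_symbol_pow_mul_commutator (M N : Matrix ι ι F[T;T⁻¹]) (k : ℕ) (s : ℝ) :
    (symbol u u s (M ^ k * (M * N - N * M))).trace = 0 := by
  refine trace_symbol_eq_zero u s ?_
  rw [mul_sub, Matrix.trace_sub, ← mul_assoc, ← mul_assoc, Matrix.trace_mul_comm (M ^ k * N),
    ← mul_assoc, ← pow_succ, ← pow_succ', sub_self]

lemma IsMatrixAction.trace_pow_mul_lie (hZ : IsMatrixAction δ Z)
    (hnil : ∀ x : L, ∃ k, (δ ^ k) x = 0) (hdeg : ∀ x, WDegLE u u P (Z x)) (hP : P < 1) (k : ℕ)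
    (x y : L) : (symbolMap Z u P x ^ k * symbolMap Z u P ⁅x, y⁆).trace = 0 := by
  obtain ⟨Q, hQ, h⟩ := hZ.exists_remainder hnil hdeg x y
  have rest : WDegLE u u (2 * P - 1) (firstOrder δ Z x y - firstOrder δ Z y x + Q) :=
    ((wDegLE_firstOrder hdeg x y).sub (wDegLE_firstOrder hdeg y x)).add (hQ.mono (by linarith))
  rw [symbolMap_apply, symbolMap_apply, ← (hdeg x).symbol_pow,
    ← ((hdeg x).pow k).symbol_mul (hdeg _), h, add_assoc, mul_add, map_add, Matrix.trace_add,
    (((hdeg x).pow k).mul rest).symbol_eq_zero (by linarith), Matrix.trace_zero, add_zero,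
    trace_symbol_pow_mul_commutator]

lemma IsMatrixAction.trace_pow_mul_symbol_lie {lam : ℝ →+ F} (hlam : lam 1 = 1)
    (hZ : IsMatrixAction δ Z) (hnil : ∀ x : L, ∃ k, (δ ^ k) x = 0)
    (hdeg : ∀ x, WDegLE u u P (Z x)) (hP : 1 ≤ P) (k : ℕ) (x y : L) :
    (symbolMap Z u P x ^ k * symbol u u (2 * P - 1) (Z ⁅x, y⁆)).trace =
      lam P * (symbolMap Z u P x ^ k * (symbolMap Z u P (δ x) * symbolMap Z u P y -
        symbolMap Z u P (δ y) * symbolMap Z u P x)).trace := by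
  have comm (a b : L) : Commute (symbolMap Z u P a) (symbolMap Z u P b) :=
    hZ.symbolMap_commute hnil hdeg (by linarith) a b
  have first := (wDegLE_firstOrder (δ := δ) hdeg x y).sub (wDegLE_firstOrder (δ := δ) hdeg y x)
  obtain ⟨Q, hQ, h⟩ := hZ.exists_remainder hnil hdeg x y
  rw [symbolMap_apply, ← (hdeg x).symbol_pow,
    ← ((hdeg x).pow k).symbol_mul ((hdeg _).mono (by linarith)), h, mul_add, mul_add, map_add,
    map_add, Matrix.trace_add, Matrix.trace_add, trace_symbol_pow_mul_commutator, zero_add,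
    (((hdeg x).pow k).mul hQ).symbol_eq_zero (by linarith), Matrix.trace_zero, add_zero,
    ((hdeg x).pow k).symbol_mul first, (hdeg x).symbol_pow, map_sub, mul_sub, Matrix.trace_sub,
    ← symbolMap_apply, trace_mul_symbol_firstOrder hlam hdeg ((comm x y).pow_left k) (comm _ _),
    trace_mul_symbol_firstOrder hlam hdeg ((comm x x).pow_left k) (comm _ _), mul_sub,
    Matrix.trace_sub, mul_sub]

/-- A functional with `θ (δ x) θ y = θ (δ y) θ x` is an eigenvector of the transpose of `δ`. -/
lemma functional_eq_zero_of_surjective {V : Type*} [AddCommGroup V] [Module F V] {δ : V →ₗ[F] V}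
    (hsurj : Function.Surjective δ) (hnil : ∀ x, ∃ k, (δ ^ k) x = 0) {θ : V →ₗ[F] F}
    (hθ : ∀ x y, θ (δ x) * θ y = θ (δ y) * θ x) : θ = 0 := by
  by_contra! hne
  obtain ⟨y, hy⟩ := DFunLike.ne_iff.mp hne
  rw [LinearMap.zero_apply] at hy
  set c := θ (δ y) / θ y
  have eigen (x : V) : θ (δ x) = c * θ x := by
    rw [div_mul_eq_mul_div, ← hθ x y, mul_div_cancel_right₀ _ hy]
  obtain ⟨k, hk⟩ := hnil y
  have eigen_pow (k : ℕ) (x : V) : θ ((δ ^ k) x) = c ^ k * θ x := by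
    induction k generalizing x with
    | zero => simp
    | succ k ih => rw [pow_succ, Module.End.mul_apply, ih, eigen, pow_succ, mul_assoc]
  have c_zero : c = 0 := by
    have := eigen_pow k y
    rw [hk, map_zero] at this
    exact eq_zero_of_pow_eq_zero ((mul_eq_zero.mp this.symm).resolve_right hy)
  obtain ⟨x, rfl⟩ := hsurj y
  exact hy (by rw [eigen, c_zero, zero_mul])

lemma exists_lieIdeal_of_linearMap {V : Type*} [AddCommGroup V] [Module F V] {φ : L →ₗ[F] V}
    (hφ : φ ≠ 0) (hlie : ∀ x y : L, φ y = 0 → φ ⁅x, y⁆ = 0) :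
    ∃ J : LieIdeal F L, J ≠ ⊤ ∧ ∀ x, φ x = 0 → x ∈ J := by
  let J : LieIdeal F L := { LinearMap.ker φ with lie_mem := fun {x y} hy => hlie x y hy }
  refine ⟨J, fun h => hφ ?_, fun x hx => hx⟩
  ext x
  have : x ∈ J := h ▸ LieSubmodule.mem_top x
  exact this

/-- The conclusion of the analysis of symbols of slope `1`: a functional on the Lie algebra which
is the leading coefficient of an action by vector fields. -/
def IsVectorFieldFunctional (δ : L →ₗ[F] L) (θ : L →ₗ[F] F) : Prop :=
  θ ≠ 0 ∧ ∀ x y, θ ⁅x, y⁆ = θ (δ x) * θ y - θ (δ y) * θ x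

variable [CharZero F] [IsAlgClosed F]

lemma IsMatrixAction.exists_functional_lie_eq_zero (hZ : IsMatrixAction δ Z)
    (hnil : ∀ x : L, ∃ k, (δ ^ k) x = 0) (hdeg : ∀ x, WDegLE u u P (Z x)) (hP : 0 < P)
    (hP1 : P < 1) (hprod : ∀ k : ℕ, ∃ l : List L, l.length = k ∧
      (l.map (symbolMap Z u P)).prod ≠ 0) :
    ∃ θ : L →ₗ[F] F, θ ≠ 0 ∧ (∀ x, symbolMap Z u P x = 0 → θ x = 0) ∧ ∀ x y : L, θ ⁅x, y⁆ = 0 := by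
  obtain ⟨θ, hθ, hker, htrace⟩ :=
    exists_functional_of_commute (hZ.symbolMap_commute hnil hdeg hP) hprod
  refine ⟨θ, hθ, hker, fun x y => ?_⟩
  simpa using htrace (-LieAlgebra.ad F L y) 0 0 0 (fun k x => by
    simpa using hZ.trace_pow_mul_lie hnil hdeg hP1 k x y) x

lemma IsMatrixAction.exists_isVectorFieldFunctional (hZ : IsMatrixAction δ Z)
    (hnil : ∀ x : L, ∃ k, (δ ^ k) x = 0) (hdeg : ∀ x, WDegLE u u 1 (Z x))
    (hprod : ∀ k : ℕ, ∃ l : List L, l.length = k ∧ (l.map (symbolMap Z u 1)).prod ≠ 0) :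
    ∃ θ : L →ₗ[F] F, IsVectorFieldFunctional δ θ ∧ ∀ x, symbolMap Z u 1 x = 0 → θ x = 0 := by
  obtain ⟨θ, hθ, hker, htrace⟩ :=
    exists_functional_of_commute (hZ.symbolMap_commute hnil hdeg one_pos) hprod
  obtain ⟨lam, hlam⟩ := exists_addMonoidHom_real_map_one F
  refine ⟨θ, ⟨hθ, fun x y => ?_⟩, hker⟩
  have := htrace (-LieAlgebra.ad F L y) (-δ) y (-δ y) (fun k x => by
    have h := hZ.trace_pow_mul_symbol_lie hlam hnil hdeg le_rfl k x y
    rw [hlam, one_mul, show (2 : ℝ) * 1 - 1 = 1 by norm_num, ← symbolMap_apply, ← sub_eq_zero,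
      ← Matrix.trace_sub, ← mul_sub] at h
    rw [← h]
    simp only [LinearMap.neg_apply, LieAlgebra.ad_apply, lie_skew, map_neg, neg_mul]
    congr 2
    abel) x
  simp only [LinearMap.neg_apply, LieAlgebra.ad_apply, lie_skew, map_neg] at this
  linear_combination this

lemma IsMatrixAction.slope_le_one (hZ : IsMatrixAction δ Z) (hsurj : Function.Surjective δ)
    (hnil : ∀ x : L, ∃ k, (δ ^ k) x = 0) (hdeg : ∀ x, WDegLE u u P (Z x))
    (hrat : ∃ q : ℚ, P = q) (hprod : ∀ k : ℕ, ∃ l : List L, l.length = k ∧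
      (l.map (symbolMap Z u P)).prod ≠ 0) : P ≤ 1 := by
  by_contra! hP
  obtain ⟨q, rfl⟩ := hrat
  obtain ⟨lam, hlam⟩ := exists_addMonoidHom_real_map_one F
  have lam_ne : lam q ≠ 0 := by
    have hq : lam q = q := by
      rw [show (q : ℝ) = q • (1 : ℝ) by simp [Rat.smul_def], map_rat_smul, hlam,
        Rat.smul_one_eq_cast]
    rw [hq, Rat.cast_ne_zero]
    rintro rfl
    norm_num at hP
  obtain ⟨θ, hθ, -, htrace⟩ :=
    exists_functional_of_commute (hZ.symbolMap_commute hnil hdeg (one_pos.trans hP)) hprod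
  refine hθ (functional_eq_zero_of_surjective hsurj hnil fun x y => ?_)
  have := htrace 0 δ y (δ y) (fun k x => by
    have h := hZ.trace_pow_mul_symbol_lie hlam hnil hdeg hP.le k x y
    rw [(hdeg ⁅x, y⁆).symbol_eq_zero (by linarith), mul_zero, Matrix.trace_zero, eq_comm,
      mul_eq_zero, or_iff_right lam_ne] at h
    simpa using h) x
  simpa [sub_eq_zero] using this

theorem IsMatrixAction.exists_lieIdeal_or_functional (hZ : IsMatrixAction δ Z)
    (hsurj : Function.Surjective δ) (hnil : ∀ x : L, ∃ k, (δ ^ k) x = 0)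
    (hdeg : ∀ x, WDegLE u u P (Z x)) (hP : 0 ≤ P) (hrat : ∃ q : ℚ, P = q)
    (hprod : ∀ k : ℕ, ∃ l : List L, l.length = k ∧ (l.map (symbolMap Z u P)).prod ≠ 0) :
    (∃ J : LieIdeal F L, J ≠ ⊤ ∧ ∀ x, symbolMap Z u P x = 0 → x ∈ J) ∨
      ∃ θ : L →ₗ[F] F, IsVectorFieldFunctional δ θ ∧ ∀ x, symbolMap Z u P x = 0 → θ x = 0 := by
  rcases hP.eq_or_lt with rfl | hP
  · refine .inl (exists_lieIdeal_of_linearMap (fun h => ?_) fun x y hy => ?_)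
    · obtain ⟨l, hl, hl0⟩ := hprod 1
      obtain ⟨x, rfl⟩ := List.length_eq_one_iff.mp hl
      exact hl0 (by simp [h])
    · rw [hZ.symbolMap_lie hnil hdeg, hy, mul_zero, zero_mul, sub_zero]
  rcases (hZ.slope_le_one hsurj hnil hdeg hrat hprod).eq_or_lt with rfl | hP1
  · exact .inr (hZ.exists_isVectorFieldFunctional hnil hdeg hprod)
  · obtain ⟨θ, hθ, hker, hlie⟩ := hZ.exists_functional_lie_eq_zero hnil hdeg hP hP1 hprod
    obtain ⟨J, hJ, hθJ⟩ := exists_lieIdeal_of_linearMap hθ fun x y _ => hlie x y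
    exact .inl ⟨J, hJ, fun x hx => hθJ x (hker x hx)⟩

end SymbolAnalysis

section Rounding

variable {ι : Type*} [Fintype ι] [Nonempty ι]

/-- The monotone lift of a degree one circle map sending `t` to the largest weight in
`⋃ i, (u i + ℤ)` which is at most `t + P`. Its rotation number is the slope obtained from `P` by
rounding all degrees down to integers. -/
noncomputable def roundingLift (u : ι → ℝ) (P : ℝ) : CircleDeg1Lift where
  toFun t := Finset.univ.sup' Finset.univ_nonempty fun i => u i + ⌊t + P - u i⌋
  monotone' s t hst := Finset.sup'_mono_fun fun i _ => by gcongr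
  map_add_one' t := by
    have floor_shift (i : ι) : u i + (⌊t + 1 + P - u i⌋ : ℝ) = u i + ⌊t + P - u i⌋ + 1 := by
      rw [show t + 1 + P - u i = t + P - u i + 1 by ring, Int.floor_add_one]
      push_cast
      ring
    simp only [floor_shift]
    exact (Finset.apply_sup'_eq_sup'_comp _ (fun x : ℝ => x + 1)
      (fun x y => (max_add_add_right x y 1).symm)).symm

variable {u : ι → ℝ} {P : ℝ}

lemma roundingLift_apply (t : ℝ) : roundingLift u P t =
    Finset.univ.sup' Finset.univ_nonempty fun i => u i + (⌊t + P - u i⌋ : ℝ) := rfl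

lemma add_intCast_le_roundingLift {i : ι} {t : ℝ} {n : ℤ} (h : (n : ℝ) ≤ t + P - u i) :
    u i + n ≤ roundingLift u P t := by
  rw [roundingLift_apply]
  refine le_trans ?_ (Finset.le_sup' _ (Finset.mem_univ i))
  gcongr
  exact Int.le_floor.mpr h

lemma roundingLift_le (t : ℝ) : roundingLift u P t ≤ t + P := by
  rw [roundingLift_apply]
  refine Finset.sup'_le _ _ fun i _ => ?_
  linarith [Int.floor_le (t + P - u i)]

lemma exists_roundingLift_eq (t : ℝ) : ∃ (i : ι) (n : ℤ), roundingLift u P t = u i + n := by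
  obtain ⟨i, -, hi⟩ := Finset.exists_mem_eq_sup' Finset.univ_nonempty
    fun i => u i + (⌊t + P - u i⌋ : ℝ)
  exact ⟨i, _, hi⟩

/-- The orbit of `0` meets only `card ι` classes modulo `ℤ`, so some class recurs. -/
lemma exists_translationNumber_roundingLift_eq_div (u : ι → ℝ) (P : ℝ) :
    ∃ q : ℕ, 0 < q ∧ q ≤ Fintype.card ι ∧
      ∃ m : ℤ, (roundingLift u P).translationNumber = m / q := by
  set f := roundingLift u P
  choose c n hc using fun k : ℕ => exists_roundingLift_eq (u := u) (P := P) ((f ^ k) 0)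
  have orbit (k : ℕ) : (f ^ (k + 1)) 0 = u (c k) + n k := by
    rw [pow_succ', CircleDeg1Lift.mul_apply]
    exact hc k
  obtain ⟨a, b, hab, hcab⟩ : ∃ a b : Fin (Fintype.card ι + 1), a < b ∧ c a = c b := by
    obtain ⟨a, b, hne, h⟩ := Fintype.exists_ne_map_eq_of_card_lt
      (fun k : Fin (Fintype.card ι + 1) => c k) (by simp)
    rcases hne.lt_or_gt with hab | hab
    exacts [⟨a, b, hab, h⟩, ⟨b, a, hab, h.symm⟩]
  have q_pos : 0 < (b - a : ℕ) := Nat.sub_pos_of_lt hab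
  refine ⟨b - a, q_pos, by lia, n b - n a, ?_⟩
  refine f.translationNumber_of_map_pow_eq_add_int (x := (f ^ (a + 1 : ℕ)) 0) ?_ q_pos
  rw [← CircleDeg1Lift.mul_apply, ← pow_add, show (b - a + (a + 1) : ℕ) = b + 1 by lia, orbit,
    orbit, hcab]
  push_cast
  ring

lemma bddAbove_range_pow_sub_mul_translationNumber (f : CircleDeg1Lift) (x : ℝ) :
    BddAbove (Set.range fun k : ℕ => (f ^ k) x - k * f.translationNumber) := by
  refine ⟨⌈x⌉ + 1, ?_⟩
  rintro _ ⟨k, rfl⟩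
  have near := (abs_le.mp (f.dist_pow_map_zero_mul_translationNumber_le k)).2
  have shift : (f ^ k) x ≤ (f ^ k) 0 + ⌈x⌉ := by
    rw [← (f ^ k).map_add_int, zero_add]
    exact (f ^ k).monotone (Int.le_ceil x)
  dsimp only
  linarith

/-- The new weights are the suprema of the renormalized orbits of the old ones. -/
lemma exists_rounded_weights (u : ι → ℝ) (P : ℝ) :
    ∃ P' ≤ P, (∃ q : ℕ, 0 < q ∧ q ≤ Fintype.card ι ∧ ∃ m : ℤ, P' = m / q) ∧
      ∃ u' : ι → ℝ, ∀ i j (n : ℤ), (n : ℝ) ≤ P + u j - u i → (n : ℝ) ≤ P' + u' j - u' i := by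
  set f := roundingLift u P
  have bdd := bddAbove_range_pow_sub_mul_translationNumber f
  refine ⟨f.translationNumber, f.translationNumber_le_of_le_add roundingLift_le,
    exists_translationNumber_roundingLift_eq_div u P,
    fun i => ⨆ k : ℕ, ((f ^ k) (u i) - k * f.translationNumber), fun i j n hn => ?_⟩
  rw [le_sub_iff_add_le, ← le_sub_iff_add_le']
  refine ciSup_le fun k => ?_
  have step : (f ^ k) (u i) + n ≤ (f ^ (k + 1)) (u j) := by
    rw [← (f ^ k).map_add_int, pow_succ, CircleDeg1Lift.mul_apply]
    exact (f ^ k).monotone (add_intCast_le_roundingLift (by linarith))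
  have := le_ciSup (bdd (u j)) (k + 1)
  push_cast at this
  linarith

lemma exists_isLeast_of_exists_intCast_div {A : Set ℝ} (hA : A.Nonempty) (hpos : ∀ P ∈ A, 0 ≤ P)
    {N : ℕ} (hN : ∀ P ∈ A, ∃ P' ∈ A, P' ≤ P ∧
      ∃ q : ℕ, 0 < q ∧ q ≤ N ∧ ∃ m : ℤ, P' = m / q) :
    ∃ P, IsLeast A P ∧ ∃ q : ℚ, P = q := by
  have factorial_ne : (N.factorial : ℝ) ≠ 0 := by positivity
  have round (P) (hP : P ∈ A) : ∃ n : ℕ, (n / N.factorial : ℝ) ∈ A ∧ (n / N.factorial : ℝ) ≤ P := by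
    obtain ⟨P', hP', hle, q, hq, hqN, m, rfl⟩ := hN P hP
    obtain ⟨d, hd⟩ := Nat.dvd_factorial hq hqN
    have q_ne : (q : ℝ) ≠ 0 := by positivity
    have m_nonneg : (0 : ℝ) ≤ m := by
      have := mul_nonneg (hpos _ hP') (Nat.cast_nonneg q)
      rwa [div_mul_cancel₀ _ q_ne] at this
    lift m to ℕ using by exact_mod_cast m_nonneg
    have : ((m * d : ℕ) / N.factorial : ℝ) = m / q := by
      have d_ne : (d : ℝ) ≠ 0 := fun h => factorial_ne (by simp [hd, Nat.cast_eq_zero.mp h])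
      rw [hd]
      push_cast
      field_simp
    exact ⟨m * d, by rwa [this], by rwa [this]⟩
  classical
  have ex : ∃ n : ℕ, (n / N.factorial : ℝ) ∈ A :=
    hA.elim fun P hP => (round P hP).imp fun _ h => h.1
  refine ⟨Nat.find ex / N.factorial, ⟨Nat.find_spec ex, fun P hP => ?_⟩,
    Nat.find ex / N.factorial, by push_cast; rfl⟩
  obtain ⟨n, hn, hnP⟩ := round P hP
  refine le_trans ?_ hnP
  gcongr
  exact Nat.find_min' ex hn

end Rounding

section TwistedAction

variable {F : Type*} [Field F] {L : Type*} [LieRing L] [LieAlgebra F L]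
  {W : Type*} [AddCommGroup W] [Module F W] [Module F[T;T⁻¹] W]
  {δ : L →ₗ[F] L} {ρ : L →ₗ[F] Module.End F W} {ι κ m : Type*}

lemma linearMap_eq_zero_of_map_T_one_mul {E : F[T;T⁻¹] →ₗ[F] W} (h_one : E 1 = 0)
    (h_mul : ∀ f, E (T 1 * f) = (T 1 : F[T;T⁻¹]) • E f) : E = 0 := by
  have h_T (n : ℤ) : E (T n) = 0 := by
    induction n using Int.induction_on with
    | zero => rw [T_zero, h_one]
    | succ n ih => rw [add_comm, T_add, h_mul, ih, smul_zero]
    | pred n ih =>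
      have := h_mul (T (-n - 1))
      rw [← T_add, add_sub_cancel, ih] at this
      exact ((isUnit_T 1).smul_eq_zero.mp this.symm)
  refine LinearMap.ext fun f => ?_
  induction f using LaurentPolynomial.induction_on' with
  | add p q hp hq => rw [map_add, hp, hq, map_add]
  | C_mul_T n a => rw [← smul_eq_C_mul, map_smul, h_T, smul_zero, LinearMap.zero_apply]

/-- The operators `ρ x` obey the Leibniz rule `[ρ x, T] = ρ (δ x)`. Only linearity over `F` is
required of `ρ x`, so this is where the Laurent polynomial structure of `W` enters. -/
def IsTwisted (δ : L →ₗ[F] L) (ρ : L →ₗ[F] Module.End F W) : Prop :=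
  ∀ x w, ρ x ((T 1 : F[T;T⁻¹]) • w) = (T 1 : F[T;T⁻¹]) • ρ x w + ρ (δ x) w

variable [IsScalarTower F F[T;T⁻¹] W]

lemma IsTwisted.apply_smul (hT : IsTwisted δ ρ) {K : ℕ} {x : L} (hx : (δ ^ K) x = 0)
    (f : F[T;T⁻¹]) (w : W) :
    ρ x (f • w) = ∑ k ∈ Finset.range K, laurentHasseDeriv k f • ρ ((δ ^ k) x) w := by
  induction K generalizing x f w with
  | zero => simp_all
  | succ K ih =>
    have shift (k : ℕ) : (δ ^ k) (δ x) = (δ ^ (k + 1)) x := by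
      rw [pow_succ, Module.End.mul_apply]
    let E : F[T;T⁻¹] →ₗ[F] W :=
      ρ x ∘ₗ (LinearMap.toSpanSingleton F[T;T⁻¹] W w).restrictScalars F -
        ∑ k ∈ Finset.range (K + 1),
          (LinearMap.toSpanSingleton F[T;T⁻¹] W (ρ ((δ ^ k) x) w)).restrictScalars F ∘ₗ
            laurentHasseDeriv k
    have E_apply (f : F[T;T⁻¹]) : E f = ρ x (f • w) -
        ∑ k ∈ Finset.range (K + 1), laurentHasseDeriv k f • ρ ((δ ^ k) x) w := by simp [E]
    have E_zero : E = 0 := by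
      refine linearMap_eq_zero_of_map_T_one_mul ?_ fun f => ?_
      · rw [E_apply, Finset.sum_range_succ']
        simp [laurentHasseDeriv_succ_one]
      · have hx' : (δ ^ K) (δ x) = 0 := by rwa [shift]
        rw [E_apply, E_apply, mul_smul, hT, ih hx', Finset.sum_range_succ',
          Finset.sum_range_succ']
        simp only [laurentHasseDeriv_succ_T_one_mul, laurentHasseDeriv_zero, add_smul, mul_smul,
          Finset.sum_add_distrib, smul_sub, smul_add, Finset.smul_sum, shift]
        abel
    rw [← sub_eq_zero, ← E_apply, E_zero, LinearMap.zero_apply]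

/-- The matrices of the operators `ρ x` in a basis `e` over the Laurent polynomials. They do not
determine `ρ x` by matrix multiplication, since `ρ x` is only linear over `F`. -/
noncomputable def actionMatrix (ρ : L →ₗ[F] Module.End F W) (e : Module.Basis ι F[T;T⁻¹] W) :
    L →ₗ[F] Matrix ι ι F[T;T⁻¹] where
  toFun x := e.toMatrix fun j => ρ x (e j)
  map_add' x y := by ext i j : 1; simp [Module.Basis.toMatrix_apply]
  map_smul' c x := by
    ext i j : 1
    rw [Module.Basis.toMatrix_apply, map_smul, LinearMap.smul_apply,
      ← algebraMap_smul F[T;T⁻¹] c (ρ x (e j)), map_smul, Finsupp.smul_apply, algebraMap_smul]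
    rfl

lemma actionMatrix_apply (e : Module.Basis ι F[T;T⁻¹] W) (x : L) :
    actionMatrix ρ e x = e.toMatrix fun j => ρ x (e j) := rfl

/-- The matrix form of `IsTwisted.apply_smul`, simultaneously for a family of vectors `w j`. -/
lemma IsTwisted.toMatrix_apply [Fintype ι] (hT : IsTwisted δ ρ) (e : Module.Basis ι F[T;T⁻¹] W)
    {K : ℕ} {x : L} (hx : (δ ^ K) x = 0) (w : m → W) :
    e.toMatrix (fun j => ρ x (w j)) = ∑ k ∈ Finset.range K,
      actionMatrix ρ e ((δ ^ k) x) * (e.toMatrix w).map (laurentHasseDeriv k) := by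
  ext i j : 1
  calc e.repr (ρ x (w j)) i = e.repr (ρ x (∑ l, e.repr (w j) l • e l)) i := by rw [e.sum_repr]
    _ = ∑ l, ∑ k ∈ Finset.range K,
        laurentHasseDeriv k (e.repr (w j) l) * e.repr (ρ ((δ ^ k) x) (e l)) i := by
      simp only [map_sum, hT.apply_smul hx, map_smul, Finsupp.coe_finsetSum, Finset.sum_apply,
        Finsupp.smul_apply, smul_eq_mul]
    _ = _ := by
      rw [Finset.sum_comm, Matrix.sum_apply]
      exact Finset.sum_congr rfl fun k _ => Finset.sum_congr rfl fun l _ => mul_comm _ _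

lemma IsTwisted.isMatrixAction [Fintype ι] (hT : IsTwisted δ ρ)
    (hlie : ∀ x y, ρ ⁅x, y⁆ = ⁅ρ x, ρ y⁆) (e : Module.Basis ι F[T;T⁻¹] W) :
    IsMatrixAction δ (actionMatrix ρ e) := by
  intro x y K hx hy
  have split : actionMatrix ρ e ⁅x, y⁆ =
      e.toMatrix (fun j => ρ x (ρ y (e j))) - e.toMatrix (fun j => ρ y (ρ x (e j))) := by
    ext i j : 1
    simp only [actionMatrix_apply, Module.Basis.toMatrix_apply, hlie,
      LieRing.of_associative_ring_bracket, LinearMap.sub_apply, Module.End.mul_apply, map_sub,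
      Finsupp.sub_apply, Matrix.sub_apply]
  rw [split, hT.toMatrix_apply e hx fun j => ρ y (e j), hT.toMatrix_apply e hy fun j => ρ x (e j),
    Finset.sum_sub_distrib, actionMatrix_apply e x, actionMatrix_apply e y]

/-- All operators `ρ x` raise the weight by at most `P`. -/
def HasSlope (ρ : L →ₗ[F] Module.End F W) (e : Module.Basis ι F[T;T⁻¹] W) (u : ι → ℝ) (P : ℝ) :
    Prop := ∀ x, WDegLE u u P (actionMatrix ρ e x)

variable {e : Module.Basis ι F[T;T⁻¹] W} {u : ι → ℝ} {P t : ℝ}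

lemma IsTwisted.wDegLE_toMatrix [Finite ι] (hT : IsTwisted δ ρ)
    (hnil : ∀ x : L, ∃ k, (δ ^ k) x = 0) (hP : HasSlope ρ e u P) {v : m → ℝ} {w : m → W}
    (hw : WDegLE u v t (e.toMatrix w)) (x : L) :
    WDegLE u v (P + t) (e.toMatrix fun j => ρ x (w j)) := by
  cases nonempty_fintype ι
  obtain ⟨K, hx⟩ := hnil x
  rw [hT.toMatrix_apply e hx]
  refine WDegLE.sum fun k _ => ((hP _).mul (hw.map_laurentHasseDeriv k)).mono ?_
  linarith [(Nat.cast_nonneg k : (0 : ℝ) ≤ k)]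

lemma IsTwisted.symbol_toMatrix [Fintype ι] (hT : IsTwisted δ ρ)
    (hnil : ∀ x : L, ∃ k, (δ ^ k) x = 0) (hP : HasSlope ρ e u P) {v : m → ℝ} {w : m → W}
    (hw : WDegLE u v t (e.toMatrix w)) (x : L) :
    symbol u v (P + t) (e.toMatrix fun j => ρ x (w j)) =
      symbolMap (actionMatrix ρ e) u P x * symbol u v t (e.toMatrix w) := by
  obtain ⟨K, hx⟩ := hnil x
  rw [hT.toMatrix_apply e (Module.End.pow_map_zero_of_le K.le_succ hx),
    Finset.sum_range_succ', map_add, WDegLE.symbol_eq_zero (s := P + t - 1), zero_add,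
    symbolMap_apply, ← (hP x).symbol_mul hw]
  · congr 2
    ext i j : 2
    simp
  · refine WDegLE.sum fun k _ => ((hP _).mul (hw.map_laurentHasseDeriv (k + 1))).mono ?_
    push_cast
    linarith [(Nat.cast_nonneg k : (0 : ℝ) ≤ k)]
  · linarith

variable {e' : Module.Basis κ F[T;T⁻¹] W} {v : κ → ℝ}

lemma IsTwisted.hasSlope_of_wDegLE [Finite ι] (hT : IsTwisted δ ρ)
    (hnil : ∀ x : L, ∃ k, (δ ^ k) x = 0) (hP : HasSlope ρ e u P)
    (he : WDegLE u v 0 (e.toMatrix e')) (he' : WDegLE v u 0 (e'.toMatrix e)) :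
    HasSlope ρ e' v P := fun x => by
  cases nonempty_fintype ι
  rw [actionMatrix_apply, ← e'.toMatrix_mul_toMatrix e]
  simpa using he'.mul (hT.wDegLE_toMatrix hnil hP he x)

lemma IsTwisted.symbolMap_of_wDegLE [Fintype ι] (hT : IsTwisted δ ρ)
    (hnil : ∀ x : L, ∃ k, (δ ^ k) x = 0) (hP : HasSlope ρ e u P) (he : WDegLE u v 0 (e.toMatrix e'))
    (he' : WDegLE v u 0 (e'.toMatrix e)) (x : L) :
    symbolMap (actionMatrix ρ e') v P x = symbol v u 0 (e'.toMatrix e) *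
      (symbolMap (actionMatrix ρ e) u P x * symbol u v 0 (e.toMatrix e')) := by
  rw [← hT.symbol_toMatrix hnil hP he, ← he'.symbol_mul (hT.wDegLE_toMatrix hnil hP he x),
    e'.toMatrix_mul_toMatrix e, symbolMap_apply, actionMatrix_apply, zero_add, add_zero]

end TwistedAction

section AdaptedBases

variable {F V : Type*} [Field F] [AddCommGroup V] [Module F V] {H : ℕ → Set V} {k : ℕ}

lemma exists_antitone_linearIndepOn (hH : Antitone H) (hk : H k ⊆ {0}) :
    ∃ s : ℕ → Set V, Antitone s ∧ (∀ l, s l ⊆ H l) ∧ (∀ l, H l ⊆ Submodule.span F (s l)) ∧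
      LinearIndepOn F id (s 0) ∧ s k = ∅ := by
  induction k generalizing H with
  | zero =>
    refine ⟨fun _ => ∅, antitone_const, fun l => Set.empty_subset _, fun l => ?_,
      linearIndepOn_empty F id, rfl⟩
    simpa using (hH l.zero_le).trans hk
  | succ k ih =>
    obtain ⟨s, s_anti, s_sub, s_span, s_indep, s_k⟩ :=
      ih (H := fun l => H (l + 1)) (fun _ _ h => hH (Nat.succ_le_succ h)) hk
    obtain ⟨s₀, s₀_sub, s_le, s₀_span, s₀_indep⟩ :=
      exists_linearIndepOn_extension s_indep ((s_sub 0).trans (hH (Nat.zero_le 1)))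
    refine ⟨fun l => Nat.casesOn l s₀ s, antitone_nat_of_succ_le ?_, ?_, ?_, s₀_indep, s_k⟩
    · exact Nat.rec s_le fun l _ => s_anti l.le_succ
    · exact Nat.rec s₀_sub fun l _ => s_sub l
    · exact Nat.rec (by simpa using s₀_span) fun l _ => s_span l

lemma exists_adapted_basis {ι : Type*} (b₀ : Module.Basis ι F V) (hH : Antitone H) (hk : H k ⊆ {0})
    (hH_span : Submodule.span F (H 0) = ⊤) : ∃ (b : Module.Basis ι F V) (ℓ : ι → ℕ),
      (∀ j, b j ∈ H (ℓ j)) ∧ ∀ l, ∀ v ∈ H l, ∀ i, b.repr v i ≠ 0 → l ≤ ℓ i := by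
  obtain ⟨s, s_anti, s_sub, s_span, s_indep, s_k⟩ := exists_antitone_linearIndepOn (F := F) hH hk
  let bs : Module.Basis (s 0) F V := Module.Basis.mk s_indep <| by
    change ⊤ ≤ Submodule.span F (Set.range (Subtype.val : s 0 → V))
    rw [Subtype.range_coe, ← hH_span]
    exact Submodule.span_le.mpr (s_span 0)
  let b := bs.reindex (bs.indexEquiv b₀)
  have range_b : Set.range b = s 0 := by
    rw [Module.Basis.range_reindex, show ⇑bs = Subtype.val from Module.Basis.coe_mk _ _]
    exact Subtype.range_coe
  have lt_k {l j} (h : b j ∈ s l) : l < k := by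
    by_contra! hkl
    simpa [s_k] using s_anti hkl h
  have mem_zero (j) : b j ∈ s 0 := range_b ▸ Set.mem_range_self j
  classical
  refine ⟨b, fun j => Nat.findGreatest (fun l => b j ∈ s l) k, fun j => s_sub _ ?_,
    fun l v hv i hi => ?_⟩
  · exact Nat.findGreatest_spec (P := fun l => b j ∈ s l) k.zero_le (mem_zero j)
  · have image_b : b '' {j | b j ∈ s l} = s l := by
      change b '' (b ⁻¹' s l) = s l
      rw [Set.image_preimage_eq_iff, range_b]
      exact s_anti l.zero_le
    have mem : b i ∈ s l := b.repr_support_subset_of_mem_span {j | b j ∈ s l}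
      (by rw [image_b]; exact s_span l hv) (by simpa using hi)
    exact Nat.le_findGreatest (lt_k mem).le mem

end AdaptedBases

section HomogeneousVectors

variable {F : Type*} [Field F] {ι L : Type*} {u : ι → ℝ}

/-- A vector supported on coordinates of a single weight. -/
def IsHomogeneous (u : ι → ℝ) (v : ι → F) : Prop := ∃ c, ∀ i, v i ≠ 0 → u i = c

lemma isHomogeneous_single [DecidableEq ι] (u : ι → ℝ) (i : ι) (a : F) :
    IsHomogeneous u (Pi.single i a) :=
  ⟨u i, fun j hj => by rw [show j = i by by_contra h; simp [h] at hj]⟩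

lemma IsHomogeneous.eq_of_inverse_apply_ne_zero [Fintype ι] [DecidableEq ι] {c : ι → ℝ}
    {B B' : Matrix ι ι F} (hBB' : B * B' = 1) (hB'B : B' * B = 1)
    (hB : ∀ i j, B i j ≠ 0 → u i = c j) {i j : ι} (hij : B' i j ≠ 0) : c i = u j := by
  classical
  let p : Matrix ι ι F := Matrix.diagonal fun l => if u l = c i then 1 else 0
  let q : Matrix ι ι F := Matrix.diagonal fun l => if c l = c i then 1 else 0
  have intertwine : p * B = B * q := by
    ext l m
    by_cases hlm : B l m = 0
    · simp [p, q, hlm]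
    · simp [p, q, hB l m hlm]
  have intertwine' : B' * p = q * B' := by
    rw [← mul_one (B' * p), ← hBB', ← mul_assoc, mul_assoc B' p, intertwine, ← mul_assoc, hB'B,
      one_mul]
  have entry := congrFun (congrFun intertwine' i) j
  simp only [p, q, Matrix.mul_diagonal, Matrix.diagonal_mul, if_true, one_mul] at entry
  by_contra hne
  rw [if_neg (Ne.symm hne), mul_zero] at entry
  exact hij entry.symm

variable [Fintype ι]

/-- The images of the homogeneous vectors under `l`-fold products of the matrices `σ x`. -/
def iteratedImage (σ : L → Matrix ι ι F) (u : ι → ℝ) : ℕ → Set (ι → F)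
  | 0 => {v | IsHomogeneous u v}
  | l + 1 => {v | ∃ x, ∃ w ∈ iteratedImage σ u l, v = (σ x).mulVec w}

variable {σ : L → Matrix ι ι F}

lemma antitone_iteratedImage (hσ : ∀ x v, IsHomogeneous u v → IsHomogeneous u ((σ x).mulVec v)) :
    Antitone (iteratedImage σ u) := by
  refine antitone_nat_of_succ_le fun l => ?_
  induction l with
  | zero =>
    rintro _ ⟨x, w, hw, rfl⟩
    exact hσ x w hw
  | succ l ih =>
    rintro _ ⟨x, w, hw, rfl⟩
    exact ⟨x, w, ih hw, rfl⟩

variable [DecidableEq ι]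

lemma exists_list_of_mem_iteratedImage {l : ℕ} {v : ι → F} (hv : v ∈ iteratedImage σ u l) :
    ∃ (t : List L) (w : ι → F), t.length = l ∧ v = ((t.map σ).prod).mulVec w := by
  induction l generalizing v with
  | zero => exact ⟨[], v, rfl, by simp⟩
  | succ l ih =>
    obtain ⟨x, w, hw, rfl⟩ := hv
    obtain ⟨t, w', rfl, rfl⟩ := ih hw
    exact ⟨x :: t, w', rfl, by simp [Matrix.mulVec_mulVec]⟩

lemma exists_homogeneous_triangular_basis
    (hσ : ∀ x v, IsHomogeneous u v → IsHomogeneous u ((σ x).mulVec v)) {k : ℕ}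
    (hk : ∀ t : List L, t.length = k → (t.map σ).prod = 0) :
    ∃ (b : Module.Basis ι F (ι → F)) (ℓ : ι → ℕ), (∀ j, IsHomogeneous u (b j)) ∧
      ∀ x i j, b.repr ((σ x).mulVec (b j)) i ≠ 0 → ℓ j < ℓ i := by
  have anti := antitone_iteratedImage hσ
  have top_eq_zero : iteratedImage σ u k ⊆ {0} := fun v hv => by
    obtain ⟨t, w, ht, rfl⟩ := exists_list_of_mem_iteratedImage hv
    rw [hk t ht, Matrix.zero_mulVec]
    rfl
  have span_homogeneous : Submodule.span F (iteratedImage σ u 0) = ⊤ := by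
    rw [eq_top_iff, ← (Pi.basisFun F ι).span_eq]
    refine Submodule.span_mono (Set.range_subset_iff.mpr fun i => ?_)
    rw [Pi.basisFun_apply]
    exact isHomogeneous_single u i 1
  obtain ⟨b, ℓ, hb, hℓ⟩ :=
    exists_adapted_basis (Pi.basisFun F ι) anti top_eq_zero span_homogeneous
  exact ⟨b, ℓ, fun j => anti (Nat.zero_le _) (hb j),
    fun x i j => hℓ (ℓ j + 1) _ ⟨x, b j, hb j, rfl⟩ i⟩

/-- The matrix form of `exists_homogeneous_triangular_basis`. -/
lemma exists_homogeneous_triangularization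
    (hσ : ∀ x v, IsHomogeneous u v → IsHomogeneous u ((σ x).mulVec v)) {k : ℕ}
    (hk : ∀ t : List L, t.length = k → (t.map σ).prod = 0) :
    ∃ (B B' : Matrix ι ι F) (c : ι → ℝ) (ℓ : ι → ℕ), B * B' = 1 ∧ (∀ i j, B i j ≠ 0 → u i = c j) ∧
      (∀ i j, B' i j ≠ 0 → c i = u j) ∧ ∀ x i j, (B' * (σ x * B)) i j ≠ 0 → ℓ j < ℓ i := by
  obtain ⟨b, ℓ, hb, hℓ⟩ := exists_homogeneous_triangular_basis hσ hk
  choose c hc using hb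
  let a := Pi.basisFun F ι
  have hB (i j) (h : a.toMatrix b i j ≠ 0) : u i = c j := hc j i h
  refine ⟨a.toMatrix b, b.toMatrix a, c, ℓ, a.toMatrix_mul_toMatrix_flip b, hB, fun i j =>
    IsHomogeneous.eq_of_inverse_apply_ne_zero (a.toMatrix_mul_toMatrix_flip b)
      (b.toMatrix_mul_toMatrix_flip a) hB, fun x i j hij => hℓ x i j ?_⟩
  have columns : σ x * a.toMatrix b = a.toMatrix fun j => (σ x).mulVec (b j) := by
    ext i j
    rfl
  rwa [columns, b.toMatrix_mul_toMatrix a] at hij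

end HomogeneousVectors

section SlopeImprovement

variable {F : Type*} [Field F] {ι : Type*} {u : ι → ℝ} {P : ℝ}

/-- Weights in `[0, 1)` that differ by an integer are equal. -/
lemma isHomogeneous_symbol_mulVec [Fintype ι] (hu : ∀ i, u i ∈ Set.Ico (0 : ℝ) 1)
    (M : Matrix ι ι F[T;T⁻¹]) {v : ι → F} (hv : IsHomogeneous u v) :
    IsHomogeneous u ((symbol u u P M).mulVec v) := by
  obtain ⟨c, hc⟩ := hv
  refine ⟨Int.fract (P + c), fun i hi => ?_⟩
  obtain ⟨j, -, hj⟩ := Finset.exists_ne_zero_of_sum_ne_zero hi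
  obtain ⟨n, hn⟩ : ∃ n : ℤ, (n : ℝ) = P + u j - u i := by
    by_contra! h
    exact left_ne_zero_of_mul hj (coeffAt_of_forall_ne h _)
  rw [← hc j (right_ne_zero_of_mul hj), show P + u j = n + u i by linarith, Int.fract_intCast_add]
  exact (Int.fract_eq_self.mpr (hu i)).symm

open Filter Topology in
lemma eventually_intCast_lt_sub_mul (a r : ℝ) :
    ∀ᶠ ε in 𝓝 (0 : ℝ), ∀ n : ℤ, (n : ℝ) < a → (n : ℝ) < a - ε * r := by
  have limit : Tendsto (fun ε : ℝ => a - ε * r) (𝓝 0) (𝓝 a) :=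
    Continuous.tendsto' (by fun_prop) _ _ (by simp)
  have below : ((⌈a⌉ - 1 : ℤ) : ℝ) < a := by
    push_cast
    linarith [Int.ceil_lt_add_one a]
  filter_upwards [limit.eventually (lt_mem_nhds below)] with ε hε n hn
  refine lt_of_le_of_lt ?_ hε
  exact_mod_cast Int.le_sub_one_of_lt (Int.lt_ceil.mpr hn)

open Filter Topology in
/-- Lowering the weights by small multiples of the triangularity levels `ℓ` lowers the slope. -/
lemma exists_lt_wDegLE_of_symbol_triangular [Finite ι] {α : Type*} {Z : α → Matrix ι ι F[T;T⁻¹]}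
    {ℓ : ι → ℕ} (hZ : ∀ x, WDegLE u u P (Z x))
    (hℓ : ∀ x i j, symbol u u P (Z x) i j ≠ 0 → ℓ j < ℓ i) :
    ∃ v, ∃ P' < P, ∀ x, WDegLE v v P' (Z x) := by
  have small : ∀ᶠ ε in 𝓝[>] (0 : ℝ), ∀ p : ι × ι, ∀ n : ℤ, (n : ℝ) < P + u p.2 - u p.1 →
      (n : ℝ) < P + u p.2 - u p.1 - ε * (1 + ℓ p.2 - ℓ p.1) :=
    nhdsWithin_le_nhds (eventually_all.mpr fun p => eventually_intCast_lt_sub_mul _ _)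
  obtain ⟨ε, hε, hε_pos⟩ := (small.and self_mem_nhdsWithin).exists
  refine ⟨fun i => u i - ε * ℓ i, P - ε, sub_lt_self P hε_pos, fun x i j n hn => ?_⟩
  rcases lt_trichotomy (n : ℝ) (P + u j - u i) with h | h | h
  · linarith [hε (i, j) n h]
  · by_contra hne
    have lt : (ℓ j : ℝ) + 1 ≤ ℓ i := by
      exact_mod_cast hℓ x i j (by rwa [symbol_apply, ← h, coeffAt_intCast])
    have := mul_le_mul_of_nonneg_left lt (le_of_lt hε_pos)
    linarith
  · exact hZ x i j n h

end SlopeImprovement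

section ConstantBaseChange

lemma exists_basis_toMatrix_eq {R M ι : Type*} [CommRing R] [AddCommGroup M] [Module R M]
    [Fintype ι] [DecidableEq ι] (e : Module.Basis ι R M) {D D' : Matrix ι ι R} (h : D * D' = 1) :
    ∃ e' : Module.Basis ι R M, e.toMatrix e' = D ∧ e'.toMatrix e = D' := by
  let e' := e.map (LinearEquiv.ofLinearMap (Matrix.toLin e e D) (Matrix.toLin e e D')
    (by rw [← Matrix.toLin_mul, h, Matrix.toLin_one])
    (by rw [← Matrix.toLin_mul, mul_eq_one_comm.mp h, Matrix.toLin_one]))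
  have he' : e.toMatrix e' = D := by
    ext i j
    simp [e', Module.Basis.toMatrix_apply, Finsupp.single_apply]
  refine ⟨e', he', ?_⟩
  rw [← mul_one (e'.toMatrix e), ← h, ← mul_assoc, ← he', e'.toMatrix_mul_toMatrix_flip, one_mul]

variable {F : Type*} [Field F] {m n : Type*} {u : m → ℝ} {v : n → ℝ} {B : Matrix m n F}

lemma wDegLE_map_C (hB : ∀ i j, B i j ≠ 0 → u i = v j) :
    WDegLE u v 0 (B.map (C : F →+* F[T;T⁻¹])) := fun i j k hk => by
  rw [Matrix.map_apply, ← single_eq_C, AddMonoidAlgebra.coeff_single]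
  by_cases hij : B i j = 0
  · simp [hij]
  · rw [Finsupp.single_eq_of_ne]
    rintro rfl
    rw [hB i j hij] at hk
    simp at hk

lemma symbol_map_C (hB : ∀ i j, B i j ≠ 0 → u i = v j) :
    symbol u v 0 (B.map (C : F →+* F[T;T⁻¹])) = B := by
  ext i j
  by_cases hij : B i j = 0
  · rw [symbol_apply, Matrix.map_apply, hij, map_zero, map_zero]
  · rw [symbol_apply, hB i j hij, show 0 + v j - v j = ((0 : ℤ) : ℝ) by simp, coeffAt_intCast,
      Matrix.map_apply, C_apply, if_pos rfl]

variable {L : Type*} [LieRing L] [LieAlgebra F L]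
  {W : Type*} [AddCommGroup W] [Module F W] [Module F[T;T⁻¹] W] [IsScalarTower F F[T;T⁻¹] W]
  {δ : L →ₗ[F] L} {ρ : L →ₗ[F] Module.End F W} {ι : Type*} [Fintype ι] [DecidableEq ι]

/-- If the leading coefficients of the action generate a nilpotent algebra, then a constant change
of basis makes them strictly triangular, and the weights can be perturbed to lower the slope. -/
theorem IsTwisted.exists_hasSlope_lt (hT : IsTwisted δ ρ) (hnil : ∀ x : L, ∃ k, (δ ^ k) x = 0)
    {e : Module.Basis ι F[T;T⁻¹] W} {u : ι → ℝ} {P : ℝ} (hu : ∀ i, u i ∈ Set.Ico (0 : ℝ) 1)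
    (hP : HasSlope ρ e u P) {k : ℕ}
    (hk : ∀ t : List L, t.length = k → (t.map (symbolMap (actionMatrix ρ e) u P)).prod = 0) :
    ∃ (e' : Module.Basis ι F[T;T⁻¹] W) (u' : ι → ℝ), ∃ P' < P, HasSlope ρ e' u' P' := by
  obtain ⟨B, B', c, ℓ, hBB', hB, hB', hℓ⟩ := exists_homogeneous_triangularization
    (fun x _ hv => isHomogeneous_symbol_mulVec hu (actionMatrix ρ e x) hv) hk
  obtain ⟨e', he, he'⟩ := exists_basis_toMatrix_eq e
    (D := B.map (C : F →+* F[T;T⁻¹])) (D' := B'.map (C : F →+* F[T;T⁻¹]))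
    (by rw [← Matrix.map_mul, hBB', Matrix.map_one _ (map_zero _) (map_one _)])
  have deg : WDegLE u c 0 (e.toMatrix e') := he ▸ wDegLE_map_C hB
  have deg' : WDegLE c u 0 (e'.toMatrix e) := he' ▸ wDegLE_map_C hB'
  refine ⟨e', exists_lt_wDegLE_of_symbol_triangular (ℓ := ℓ)
    (hT.hasSlope_of_wDegLE hnil hP deg deg') fun x i j hij => hℓ x i j ?_⟩
  have conjugate := hT.symbolMap_of_wDegLE hnil hP deg deg' x
  rw [he, he', symbol_map_C hB, symbol_map_C hB', symbolMap_apply] at conjugate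
  rwa [← symbolMap_apply, ← conjugate]

end ConstantBaseChange

section ActionLattices

variable {F : Type*} [Field F] {L : Type*} [LieRing L] [LieAlgebra F L]
  {W : Type*} [AddCommGroup W] [Module F W] [Module F[T;T⁻¹] W]
  {δ : L →ₗ[F] L} {ρ : L →ₗ[F] Module.End F W} {ι : Type*}
  {e₀ e : Module.Basis ι F[T;T⁻¹] W} {u : ι → ℝ} {P : ℝ} {S : Submodule F W}

/-- A nonzero `ρ`-stable subspace `S` that absorbs every vector after multiplication by a high power
of `T`, contains no nonzero vector killed by the whole action, and meets the span of the negative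
powers of `T` (in the coordinates of `e₀`) trivially. -/
structure IsActionLattice (ρ : L →ₗ[F] Module.End F W) (e₀ : Module.Basis ι F[T;T⁻¹] W)
    (S : Submodule F W) : Prop where
  ne_bot : S ≠ ⊥
  exists_T_smul_mem : ∀ w : W, ∃ N : ℤ, ∀ n ≥ N, (T n : F[T;T⁻¹]) • w ∈ S
  apply_mem : ∀ x, ∀ w ∈ S, ρ x w ∈ S
  eq_zero_of_forall_apply_eq_zero : ∀ w ∈ S, (∀ x, ρ x w = 0) → w = 0
  eq_zero_of_degLE_neg_one : ∀ w ∈ S, (∀ i, DegLE (-1) (e₀.repr w i)) → w = 0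

lemma wDegLE_diagonal_T [DecidableEq ι] {v : ι → ℝ} {n : ι → ℤ} (h : ∀ j, v j = u j + n j) :
    WDegLE u v 0 (Matrix.diagonal fun j => (T (n j) : F[T;T⁻¹])) := by
  intro i j
  rcases eq_or_ne i j with rfl | hij
  · intro k hk
    rw [h, zero_add, add_sub_cancel_left, Int.cast_lt] at hk
    rw [Matrix.diagonal_apply_eq, T_apply, if_neg hk.ne]
  · rw [Matrix.diagonal_apply_ne _ hij]
    exact degLE_zero _

variable [IsScalarTower F F[T;T⁻¹] W]

lemma HasSlope.sub_const (hP : HasSlope ρ e u P) (c : ℝ) : HasSlope ρ e (fun j => u j - c) P :=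
  fun x i j => (hP x i j).mono (by linarith)

variable [Finite ι]

lemma HasSlope.exists_rescaled_basis (hT : IsTwisted δ ρ) (hnil : ∀ x : L, ∃ k, (δ ^ k) x = 0)
    (hP : HasSlope ρ e u P) (n : ι → ℤ) : ∃ e' : Module.Basis ι F[T;T⁻¹] W,
      (∀ j, e' j = (T (n j) : F[T;T⁻¹]) • e j) ∧ HasSlope ρ e' (fun j => u j + n j) P := by
  classical
  cases nonempty_fintype ι
  obtain ⟨e', he, he'⟩ := exists_basis_toMatrix_eq e
    (D := Matrix.diagonal fun j => T (n j)) (D' := Matrix.diagonal fun j => T (-n j))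
    (by simp_rw [Matrix.diagonal_mul_diagonal, ← T_add, add_neg_cancel, T_zero,
      Matrix.diagonal_one])
  refine ⟨e', fun j => ?_, hT.hasSlope_of_wDegLE hnil hP (he ▸ wDegLE_diagonal_T fun j => rfl)
    (he' ▸ wDegLE_diagonal_T fun j => by push_cast; ring)⟩
  rw [← e.sum_toMatrix_smul_self e' j, he, Finset.sum_eq_single j]
  · rw [Matrix.diagonal_apply_eq]
  · intro i _ hij
    rw [Matrix.diagonal_apply_ne _ hij, zero_smul]
  · simp

lemma IsActionLattice.exists_basis_mem (hS : IsActionLattice ρ e₀ S) (hT : IsTwisted δ ρ)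
    (hnil : ∀ x : L, ∃ k, (δ ^ k) x = 0) (hP : HasSlope ρ e u P) :
    ∃ (e' : Module.Basis ι F[T;T⁻¹] W) (u' : ι → ℝ),
      (∀ j, e' j ∈ S) ∧ (∀ j, u' j ∈ Set.Ico (0 : ℝ) 1) ∧ HasSlope ρ e' u' P := by
  choose N hN using fun j => hS.exists_T_smul_mem (e j)
  obtain ⟨K, hK⟩ := Finite.bddAbove_range fun j => N j + ⌊u j⌋
  obtain ⟨e', he', hP'⟩ := hP.exists_rescaled_basis hT hnil fun j => K - ⌊u j⌋
  refine ⟨e', fun j => Int.fract (u j), fun j => ?_,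
    fun j => ⟨Int.fract_nonneg _, Int.fract_lt_one _⟩, ?_⟩
  · rw [he']
    exact hN j _ (by linarith [show N j + ⌊u j⌋ ≤ K from hK ⟨j, rfl⟩])
  · convert hP'.sub_const K using 2 with j
    rw [← Int.self_sub_floor]
    push_cast
    ring

/-- The lattice bounds from below the degrees of its nonzero vectors, while an action of negative
slope could lower them indefinitely. -/
lemma IsActionLattice.slope_nonneg (hS : IsActionLattice ρ e₀ S) (hT : IsTwisted δ ρ)
    (hnil : ∀ x : L, ∃ k, (δ ^ k) x = 0) (hP : HasSlope ρ e u P) : 0 ≤ P := by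
  cases nonempty_fintype ι
  by_contra! hP_neg
  let degrees : Set ℝ :=
    {t | ∃ w ∈ S, w ≠ 0 ∧ WDegLE u (0 : Unit → ℝ) t (e.toMatrix fun _ => w)}
  have degrees_nonempty : degrees.Nonempty := by
    obtain ⟨w, hw, hw0⟩ := S.ne_bot_iff.mp hS.ne_bot
    obtain ⟨t, ht⟩ := exists_wDegLE u (0 : Unit → ℝ) (e.toMatrix fun _ => w)
    exact ⟨t, w, hw, hw0, ht⟩
  have degrees_bddBelow : BddBelow degrees := by
    obtain ⟨s, hs⟩ := exists_wDegLE 0 u (e₀.toMatrix e)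
    refine ⟨-1 - s, fun t ⟨w, hw, hw0, hwt⟩ => ?_⟩
    by_contra! hts
    refine hw0 (hS.eq_zero_of_degLE_neg_one w hw fun i => ?_)
    have := hs.mul hwt
    rw [e₀.toMatrix_mul_toMatrix e] at this
    exact (this i ()).mono (by simp only [Pi.zero_apply]; linarith)
  obtain ⟨t, ⟨w, hw, hw0, hwt⟩, ht⟩ := exists_lt_of_csInf_lt degrees_nonempty
    (show sInf degrees < sInf degrees - P by linarith)
  refine hw0 (hS.eq_zero_of_forall_apply_eq_zero w hw fun x => ?_)
  by_contra hx
  have := csInf_le degrees_bddBelow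
    ⟨ρ x w, hS.apply_mem x w hw, hx, hT.wDegLE_toMatrix hnil hP hwt x⟩
  linarith

lemma IsActionLattice.exists_isLeast_slope [Nonempty ι] (hS : IsActionLattice ρ e₀ S)
    (hT : IsTwisted δ ρ) (hnil : ∀ x : L, ∃ k, (δ ^ k) x = 0) (hP : HasSlope ρ e u P) :
    ∃ P₀ : ℝ, IsLeast {P | ∃ (e : Module.Basis ι F[T;T⁻¹] W) (u : ι → ℝ), HasSlope ρ e u P} P₀ ∧
      ∃ q : ℚ, P₀ = q := by
  cases nonempty_fintype ι
  refine exists_isLeast_of_exists_intCast_div (N := Fintype.card ι) ⟨P, e, u, hP⟩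
    (fun P ⟨e, u, hP⟩ => hS.slope_nonneg hT hnil hP) fun P ⟨e, u, hP⟩ => ?_
  obtain ⟨P', hPP', rational, u', hu'⟩ := exists_rounded_weights u P
  refine ⟨P', ⟨e, u', fun x i j n hn => hP x i j n ?_⟩, hPP', rational⟩
  by_contra! h
  exact hn.not_ge (hu' i j n h)

/-- Each alternative is a finite-dimensional obstruction for an operator to kill finitely many
vectors of the lattice. -/
theorem IsActionLattice.exists_lieIdeal_or_functional [CharZero F] [IsAlgClosed F] [Nonempty ι]
    (hS : IsActionLattice ρ e₀ S) (hT : IsTwisted δ ρ) (hlie : ∀ x y, ρ ⁅x, y⁆ = ⁅ρ x, ρ y⁆)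
    (hsurj : Function.Surjective δ) (hnil : ∀ x : L, ∃ k, (δ ^ k) x = 0)
    (hP : HasSlope ρ e u P) : ∃ w : ι → W, (∀ j, w j ∈ S) ∧
      ((∃ J : LieIdeal F L, J ≠ ⊤ ∧ Module.Finite F (L ⧸ J.toSubmodule) ∧
        ∀ x, (∀ j, ρ x (w j) = 0) → x ∈ J) ∨
      ∃ θ : L →ₗ[F] F, IsVectorFieldFunctional δ θ ∧ ∀ x, (∀ j, ρ x (w j) = 0) → θ x = 0) := by
  classical
  cases nonempty_fintype ι
  obtain ⟨P₀, ⟨⟨e₁, u₁, hP₁⟩, minimal⟩, rational⟩ := hS.exists_isLeast_slope hT hnil hP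
  obtain ⟨e₂, u₂, he₂, hu₂, hP₂⟩ := hS.exists_basis_mem hT hnil hP₁
  have not_nilpotent (k : ℕ) : ∃ l : List L, l.length = k ∧
      (l.map (symbolMap (actionMatrix ρ e₂) u₂ P₀)).prod ≠ 0 := by
    by_contra! hk
    obtain ⟨e', u', P', hP', slope⟩ := hT.exists_hasSlope_lt hnil hu₂ hP₂ hk
    exact hP'.not_ge (minimal ⟨e', u', slope⟩)
  have symbol_eq_zero (x : L) (hx : ∀ j, ρ x (e₂ j) = 0) :
      symbolMap (actionMatrix ρ e₂) u₂ P₀ x = 0 := by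
    have : actionMatrix ρ e₂ x = 0 := by
      ext i j : 1
      rw [actionMatrix_apply, Module.Basis.toMatrix_apply, hx, map_zero]
      rfl
    rw [symbolMap_apply, this, map_zero]
  refine ⟨e₂, he₂, ?_⟩
  rcases (hT.isMatrixAction hlie e₂).exists_lieIdeal_or_functional hsurj hnil hP₂
    (hS.slope_nonneg hT hnil hP₂) rational not_nilpotent with ⟨J, hJ, ker_le⟩ | ⟨θ, hθ, ker_le⟩
  · refine .inl ⟨J, hJ, ?_, fun x hx => ker_le x (symbol_eq_zero x hx)⟩
    replace ker_le : (symbolMap (actionMatrix ρ e₂) u₂ P₀).ker ≤ J.toSubmodule := ker_le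
    have : Module.Finite F (L ⧸ (symbolMap (actionMatrix ρ e₂) u₂ P₀).ker) :=
      Module.Finite.equiv (LinearMap.quotKerEquivRange _).symm
    exact Module.Finite.of_surjective (Submodule.factor ker_le) (Submodule.factor_surjective ker_le)
  · exact .inr ⟨θ, hθ, fun x hx => ker_le x (symbol_eq_zero x hx)⟩

end ActionLattices

section Basics

variable {F R : Type*} [Field F] [CharZero F] [AddCommGroup R] [Module F R]
  (C : ConformalAlgebra F R)

/-- An ideal of a conformal algebra. Closure under right multiplication follows from
skew-symmetry. -/
def IsIdeal (I : Submodule F R) : Prop :=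
  (∀ x ∈ I, C.D x ∈ I) ∧ ∀ u, ∀ w ∈ I, ∀ n, C.prod n u w ∈ I

/-- A simple conformal algebra. -/
structure IsSimple : Prop where
  exists_prod_ne_zero : ∃ (n : ℕ) (u v : R), C.prod n u v ≠ 0
  eq_bot_or_eq_top : ∀ I : Submodule F R, C.IsIdeal I → I = ⊥ ∨ I = ⊤

/-- A conformal algebra of finite type: `R` is generated over `F[∂]` by a finite-dimensional
subspace. -/
def IsFiniteType : Prop :=
  ∃ V : Submodule F R, FiniteDimensional F V ∧
    Submodule.span F {x : R | ∃ (m : ℕ) (v : R), v ∈ V ∧ x = (C.D ^ m) v} = ⊤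

variable {C}

lemma IsSimple.exists_ne_zero (hC : C.IsSimple) : ∃ a : R, a ≠ 0 :=
  let ⟨_, _, _, h⟩ := hC.exists_prod_ne_zero
  ⟨_, h⟩

variable (C)

lemma prod_D_left (n : ℕ) (u v : R) :
    C.prod n (C.D u) v = -(n : F) • C.prod (n - 1) u v := by
  cases n with
  | zero => simp [C.sesqui_zero]
  | succ n => rw [C.sesqui, Nat.add_sub_cancel]

lemma prod_D_right (n : ℕ) (a b : R) :
    C.prod n a (C.D b) = C.D (C.prod n a b) + (n : F) • C.prod (n - 1) a b := by
  obtain ⟨N, hN⟩ := C.locality b a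
  let term (j : ℕ) : R :=
    ((-1 : F) ^ (n + j + 1) * (j.factorial : F)⁻¹) • (C.D ^ j) (C.prod (n + j - 1) b a)
  have skew_D : C.prod n a (C.D b) =
      ∑ j ∈ Finset.range (N + 1), (-(n : F) • term j - (j : F) • term j) := by
    rw [C.skew n (N + 1) a (C.D b) fun j hj => by
      rw [prod_D_left, hN _ (by omega), smul_zero]]
    refine Finset.sum_congr rfl fun j _ => ?_
    rw [prod_D_left, map_smul, ← sub_smul, smul_smul, smul_smul]
    push_cast
    congr 1
    ring
  have derivative_part : -∑ j ∈ Finset.range (N + 1), (j : F) • term j = C.D (C.prod n a b) := by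
    rw [C.skew n N a b fun j hj => hN _ (by omega), Finset.sum_range_succ', map_sum]
    simp only [Nat.cast_zero, zero_smul, add_zero, ← Finset.sum_neg_distrib]
    refine Finset.sum_congr rfl fun j _ => ?_
    rw [map_smul, ← Module.End.mul_apply, ← pow_succ', smul_smul, ← neg_smul, ← add_assoc n,
      Nat.add_sub_cancel, Nat.factorial_succ]
    congr 1
    push_cast
    field_simp
    ring
  have shift_part :
      ∑ j ∈ Finset.range (N + 1), -(n : F) • term j = (n : F) • C.prod (n - 1) a b := by
    cases n with
    | zero => simp
    | succ n =>
      rw [Nat.add_sub_cancel, C.skew n (N + 1) a b fun j hj => hN _ (by omega), Finset.smul_sum]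
      refine Finset.sum_congr rfl fun j _ => ?_
      rw [smul_smul, smul_smul, Nat.add_right_comm n 1 j, Nat.add_sub_cancel]
      congr 1
      ring
  rw [skew_D, Finset.sum_sub_distrib, shift_part, sub_eq_add_neg, derivative_part, add_comm]

/-- The center of a conformal algebra. -/
def center : Submodule F R where
  carrier := {w | ∀ a n, C.prod n w a = 0}
  add_mem' h h' a n := by rw [map_add, LinearMap.add_apply, h, h', add_zero]
  zero_mem' a n := by rw [map_zero, LinearMap.zero_apply]
  smul_mem' c w h a n := by rw [map_smul, LinearMap.smul_apply, h, smul_zero]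

variable {C}

lemma prod_eq_zero_of_forall_prod_eq_zero {w : R} (h : ∀ a n, C.prod n w a = 0) (n : ℕ) (a : R) :
    C.prod n a w = 0 := by
  rw [C.skew n 0 a w fun _ _ => h a _, Finset.sum_range_zero]

lemma mem_center_of_forall_prod_eq_zero {w : R} (h : ∀ a n, C.prod n a w = 0) :
    w ∈ C.center := fun a n => by
  rw [C.skew n 0 w a fun _ _ => h a _, Finset.sum_range_zero]

lemma IsSimple.center_eq_bot (hC : C.IsSimple) : C.center = ⊥ := by
  refine (hC.eq_bot_or_eq_top C.center ⟨fun x hx a n => ?_, fun u w hw n => ?_⟩).resolve_right ?_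
  · rw [prod_D_left, hx, smul_zero]
  · rw [prod_eq_zero_of_forall_prod_eq_zero hw]
    exact zero_mem _
  · intro center_eq_top
    obtain ⟨n, u, v, huv⟩ := hC.exists_prod_ne_zero
    exact huv (center_eq_top.ge trivial v n)

lemma prod_D_pow_left_mem {I : Submodule F R} {k n : ℕ} {u v : R}
    (h : ∀ m, m + k = n → C.prod m u v ∈ I) : C.prod n ((C.D ^ k) u) v ∈ I := by
  induction k generalizing n with
  | zero => exact h n rfl
  | succ k ih =>
    rw [pow_succ', Module.End.mul_apply, prod_D_left]
    cases n with
    | zero => simp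
    | succ n => exact I.smul_mem _ (ih fun m hm => h m (by omega))

lemma exists_prod_add_D_pow_left (k n : ℕ) (u v : R) :
    ∃ c : F, c ≠ 0 ∧ C.prod (n + k) ((C.D ^ k) u) v = c • C.prod n u v := by
  induction k with
  | zero => exact ⟨1, one_ne_zero, by simp⟩
  | succ k ih =>
    obtain ⟨c, hc, h⟩ := ih
    refine ⟨-((n + (k + 1) : ℕ) : F) * c, mul_ne_zero (neg_ne_zero.mpr ?_) hc, ?_⟩
    · exact Nat.cast_ne_zero.mpr (by omega)
    · rw [pow_succ', Module.End.mul_apply, prod_D_left, ← add_assoc, Nat.add_sub_cancel, h,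
        smul_smul]

lemma exists_last_ne_zero {M : Type*} [Zero M] {f : ℕ → M} (h_eventually : ∃ N, ∀ n ≥ N, f n = 0)
    (h_ne : ∃ n, f n ≠ 0) : ∃ n, f n ≠ 0 ∧ ∀ m > n, f m = 0 := by
  obtain ⟨N, hN⟩ := h_eventually
  have bounded : BddAbove {n | f n ≠ 0} := ⟨N, fun n hn => not_lt.mp fun h => hn (hN n h.le)⟩
  exact ⟨_, Nat.sSup_mem h_ne bounded,
    fun m hm => by_contra fun h => hm.not_ge (le_csSup bounded h)⟩

open Polynomial in
lemma mem_center_of_aeval_eq_zero {p : F[X]} (hp : p ≠ 0) {w : R} (h : aeval C.D p w = 0) :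
    w ∈ C.center := by
  by_contra! hw
  obtain ⟨a, ha⟩ : ∃ a, ∃ n, C.prod n w a ≠ 0 := by
    contrapose! hw
    exact hw
  obtain ⟨n, hn, last⟩ := exists_last_ne_zero (C.locality w a) ha
  obtain ⟨c, hc, leading⟩ := exists_prod_add_D_pow_left (C := C) p.natDegree n w a
  have lower (i : ℕ) (hi : i < p.natDegree) :
      C.prod (n + p.natDegree) ((C.D ^ i) w) a = 0 := by
    rw [← Submodule.mem_bot F]
    exact prod_D_pow_left_mem fun m hm => last m (by omega)
  have expansion : C.prod (n + p.natDegree) (aeval C.D p w) a =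
      (p.leadingCoeff * c) • C.prod n w a := by
    rw [aeval_eq_sum_range, LinearMap.sum_apply, map_sum, LinearMap.sum_apply,
      Finset.sum_range_succ, Finset.sum_eq_zero fun i hi => ?_, zero_add, LinearMap.smul_apply,
      map_smul, LinearMap.smul_apply, leading, smul_smul, leadingCoeff]
    rw [LinearMap.smul_apply, map_smul, LinearMap.smul_apply, lower i (Finset.mem_range.mp hi),
      smul_zero]
  rw [h, map_zero, LinearMap.zero_apply] at expansion
  exact smul_ne_zero (mul_ne_zero (leadingCoeff_ne_zero.mpr hp) hc) hn expansion.symm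

end Basics

section ModeAlgebra

attribute [local instance] LieRing.ofAssociativeRing

variable {F R : Type*} [Field F] [CharZero F] [AddCommGroup R] [Module F R]
  (C : ConformalAlgebra F R)

lemma lie_prod (m n : ℕ) (a b : R) :
    ⁅(C.prod m a : Module.End F R), (C.prod n b : Module.End F R)⁆ =
      ∑ j ∈ Finset.range (m + 1), (m.choose j : F) • C.prod (m + n - j) (C.prod j a b) := by
  ext w
  simpa [LieRing.of_associative_ring_bracket] using C.jacobi m n a b w

/-- The Lie algebra spanned by the operators `u⁽ⁿ⁾` on `R`. -/
def modeAlgebra : LieSubalgebra F (Module.End F R) where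
  __ := Submodule.span F (Set.range fun p : ℕ × R => (C.prod p.1 p.2 : Module.End F R))
  lie_mem' := by
    set S := Set.range fun p : ℕ × R => (C.prod p.1 p.2 : Module.End F R)
    intro x y (hx : x ∈ Submodule.span F S) (hy : y ∈ Submodule.span F S)
    change ⁅x, y⁆ ∈ Submodule.span F S
    induction hx, hy using Submodule.span_induction₂ with
    | mem_mem x y hx hy =>
      obtain ⟨⟨m, a⟩, rfl⟩ := hx
      obtain ⟨⟨n, b⟩, rfl⟩ := hy
      simp only [lie_prod]
      exact Submodule.sum_mem _ fun j _ =>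
        Submodule.smul_mem _ _ (Submodule.subset_span ⟨(_, _), rfl⟩)
    | zero_left y _ => rw [zero_lie]; exact zero_mem _
    | zero_right x _ => rw [lie_zero]; exact zero_mem _
    | add_left x x' y _ _ _ h h' => rw [add_lie]; exact add_mem h h'
    | add_right x y y' _ _ _ h h' => rw [lie_add]; exact add_mem h h'
    | smul_left c x y _ _ h => rw [smul_lie]; exact Submodule.smul_mem _ _ h
    | smul_right c x y _ _ h => rw [lie_smul]; exact Submodule.smul_mem _ _ h

/-- The operator `u⁽ⁿ⁾` as an element of the mode algebra. -/
def mode (n : ℕ) : R →ₗ[F] C.modeAlgebra :=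
  (C.prod n).codRestrict C.modeAlgebra.toSubmodule fun a => Submodule.subset_span ⟨(n, a), rfl⟩

@[simp] lemma mode_apply (n : ℕ) (a w : R) : (C.mode n a : Module.End F R) w = C.prod n a w := rfl

lemma span_mode : Submodule.span F (Set.range fun p : ℕ × R => C.mode p.1 p.2) = ⊤ := by
  refine Submodule.map_injective_of_injective C.modeAlgebra.toSubmodule.injective_subtype ?_
  rw [Submodule.map_span, Submodule.map_subtype_top, ← Set.range_comp]
  rfl

variable {C}

lemma modeAlgebra_le {P : Submodule F C.modeAlgebra} (h : ∀ n a, C.mode n a ∈ P)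
    (x : C.modeAlgebra) : x ∈ P := by
  have span_le : Submodule.span F (Set.range fun p : ℕ × R => C.mode p.1 p.2) ≤ P :=
    Submodule.span_le.mpr (Set.range_subset_iff.mpr fun p => h p.1 p.2)
  exact span_le (C.span_mode ▸ Submodule.mem_top)

lemma modeAlgebra_hom_ext {M : Type*} [AddCommMonoid M] [Module F M]
    {f g : C.modeAlgebra →ₗ[F] M} (h : ∀ n a, f (C.mode n a) = g (C.mode n a)) : f = g :=
  LinearMap.ext (modeAlgebra_le (P := LinearMap.eqLocus f g) h)

variable (C)

lemma lie_mode (m n : ℕ) (a b : R) : ⁅C.mode m a, C.mode n b⁆ =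
    ∑ j ∈ Finset.range (m + 1), (m.choose j : F) • C.mode (m + n - j) (C.prod j a b) := by
  apply Subtype.ext
  rw [LieSubalgebra.coe_bracket, AddSubmonoidClass.coe_finsetSum]
  exact C.lie_prod m n a b

lemma mode_D (k : ℕ) (a : R) : C.mode k (C.D a) = -(k : F) • C.mode (k - 1) a :=
  Subtype.ext (LinearMap.ext fun w => C.prod_D_left k a w)

lemma mode_comm_D (n : ℕ) (a : R) :
    (C.mode n a : Module.End F R) * C.D - C.D * (C.mode n a : Module.End F R) =
      ((n : F) • C.mode (n - 1) a : C.modeAlgebra) :=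
  LinearMap.ext fun w => by simp [prod_D_right]

/-- The derivation `x ↦ [x, ∂]` of the mode algebra. -/
def modeDerivation : C.modeAlgebra →ₗ[F] C.modeAlgebra :=
  ((LinearMap.mulRight F C.D - LinearMap.mulLeft F C.D) ∘ₗ
    C.modeAlgebra.toSubmodule.subtype).codRestrict C.modeAlgebra.toSubmodule <|
    modeAlgebra_le (P := C.modeAlgebra.toSubmodule.comap _) fun n a => by
      change (C.mode n a : Module.End F R) * C.D - C.D * (C.mode n a : Module.End F R) ∈
        C.modeAlgebra
      rw [mode_comm_D]
      exact SetLike.coe_mem _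

variable {C}

lemma modeDerivation_apply (x : C.modeAlgebra) (w : R) :
    (C.modeDerivation x : Module.End F R) w =
      (x : Module.End F R) (C.D w) - C.D ((x : Module.End F R) w) := rfl

lemma modeDerivation_mode (n : ℕ) (a : R) :
    C.modeDerivation (C.mode n a) = (n : F) • C.mode (n - 1) a :=
  Subtype.ext (C.mode_comm_D n a)

lemma modeDerivation_surjective : Function.Surjective C.modeDerivation := by
  refine modeAlgebra_le (P := LinearMap.range C.modeDerivation) fun n a =>
    ⟨((n + 1 : ℕ) : F)⁻¹ • C.mode (n + 1) a, ?_⟩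
  rw [map_smul, modeDerivation_mode, inv_smul_smul₀ (Nat.cast_ne_zero.mpr n.succ_ne_zero),
    Nat.add_sub_cancel]

lemma modeDerivation_pow_mode (i n : ℕ) (a : R) :
    (C.modeDerivation ^ i) (C.mode n a) = (n.descFactorial i : F) • C.mode (n - i) a := by
  induction i with
  | zero => simp
  | succ i ih =>
    rw [pow_succ', Module.End.mul_apply, ih, map_smul, modeDerivation_mode, smul_smul,
      Nat.descFactorial_succ, mul_comm]
    push_cast
    rw [Nat.sub_sub]

lemma exists_modeDerivation_pow_eq_zero (x : C.modeAlgebra) :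
    ∃ k, (C.modeDerivation ^ k) x = 0 := by
  suffices x ∈ (Module.End.maxGenEigenspace C.modeDerivation 0) by
    simpa [Module.End.mem_maxGenEigenspace] using this
  refine modeAlgebra_le (fun n a => ?_) x
  rw [Module.End.mem_maxGenEigenspace]
  exact ⟨n + 1, by rw [zero_smul, sub_zero, modeDerivation_pow_mode]; simp⟩

lemma modeDerivation_lie (x y : C.modeAlgebra) :
    C.modeDerivation ⁅x, y⁆ = ⁅C.modeDerivation x, y⁆ + ⁅x, C.modeDerivation y⁆ := by
  ext w
  simp only [AddMemClass.coe_add, LieSubalgebra.coe_bracket, LinearMap.add_apply,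
    LieRing.of_associative_ring_bracket, LinearMap.sub_apply, Module.End.mul_apply,
    modeDerivation_apply, map_sub]
  abel

end ModeAlgebra

section IterateSum

variable {F L N : Type*} [Field F] [AddCommGroup L] [Module F L] [AddCommGroup N] [Module F N]
  {δ : L →ₗ[F] L}

/-- The sequence of iterates of a locally nilpotent operator at a point. -/
noncomputable def iterates (hnil : ∀ x : L, ∃ k, (δ ^ k) x = 0) : L →ₗ[F] ℕ →₀ L where
  toFun x := Finsupp.onFinset (Finset.range (hnil x).choose) (fun k => (δ ^ k) x) fun k hk => by
    contrapose! hk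
    exact Module.End.pow_map_zero_of_le (by simpa using hk) (hnil x).choose_spec
  map_add' x y := Finsupp.ext fun k => map_add (δ ^ k) x y
  map_smul' c x := Finsupp.ext fun k => map_smul (δ ^ k) c x

/-- The linear map `x ↦ ∑ k, f k (δ ^ k x)`, the sum being finite by local nilpotence. -/
noncomputable def iterateSum (hnil : ∀ x : L, ∃ k, (δ ^ k) x = 0) (f : ℕ → L →ₗ[F] N) :
    L →ₗ[F] N :=
  Finsupp.lsum F f ∘ₗ iterates hnil

lemma iterateSum_apply (hnil : ∀ x : L, ∃ k, (δ ^ k) x = 0) (f : ℕ → L →ₗ[F] N) {K : ℕ} {x : L}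
    (hx : (δ ^ K) x = 0) : iterateSum hnil f x = ∑ k ∈ Finset.range K, f k ((δ ^ k) x) := by
  refine Finsupp.sum_of_support_subset (iterates hnil x) (fun k hk => ?_) (fun k => f k)
    fun k _ => map_zero (f k)
  contrapose! hk
  rw [Finsupp.notMem_support_iff]
  exact Module.End.pow_map_zero_of_le (by simpa using hk) hx

end IterateSum

section CoordinateMap

variable {F R κ : Type*} [Field F] [AddCommGroup R] [Module F R] [DecidableEq κ]

/-- `j` identifies `R` with `F[T]^κ ⊆ F[T;T⁻¹]^κ`, taking `D` to multiplication by `T` and `v` to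
the standard basis. -/
structure IsCoordinateMap (D : Module.End F R) (j : R →ₗ[F] κ → F[T;T⁻¹]) (v : κ → R) : Prop where
  injective : Function.Injective j
  map_D : ∀ w, j (D w) = (T 1 : F[T;T⁻¹]) • j w
  map_basis : ∀ k, j (v k) = Pi.single k 1
  span_eq_top : Submodule.span F {w | ∃ (m : ℕ) (k : κ), w = (D ^ m) (v k)} = ⊤

variable {D : Module.End F R} {j : R →ₗ[F] κ → F[T;T⁻¹]} {v : κ → R}

lemma IsCoordinateMap.map_D_pow_basis (hj : IsCoordinateMap D j v) (m : ℕ) (k : κ) :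
    j ((D ^ m) (v k)) = Pi.single k (T m) := by
  induction m with
  | zero => rw [pow_zero, Module.End.one_apply, hj.map_basis, Nat.cast_zero, T_zero]
  | succ m ih =>
    rw [pow_succ', Module.End.mul_apply, hj.map_D, ih, ← Pi.single_smul, smul_eq_mul, ← T_add,
      add_comm, Nat.cast_succ]

lemma IsCoordinateMap.coeff_eq_zero (hj : IsCoordinateMap D j v) (w : R) (k : κ) {n : ℤ}
    (hn : n < 0) : (j w k).coeff n = 0 := by
  have hw : w ∈ Submodule.span F {w | ∃ (m : ℕ) (k : κ), w = (D ^ m) (v k)} :=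
    hj.span_eq_top ▸ Submodule.mem_top
  induction hw using Submodule.span_induction with
  | mem w hw =>
    obtain ⟨m, l, rfl⟩ := hw
    rw [hj.map_D_pow_basis]
    obtain rfl | hlk := eq_or_ne k l
    · rw [Pi.single_eq_same, T_apply, if_neg (by omega)]
    · rw [Pi.single_eq_of_ne hlk]; rfl
  | zero => rw [map_zero]; rfl
  | add w w' _ _ h h' =>
    rw [map_add, Pi.add_apply, AddMonoidAlgebra.coeff_add, Finsupp.add_apply, h, h', add_zero]
  | smul c w _ h =>
    rw [map_smul, Pi.smul_apply, AddMonoidAlgebra.coeff_smul, Finsupp.smul_apply, h, smul_zero]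

lemma IsCoordinateMap.exists_T_smul_mem_range [Finite κ] (hj : IsCoordinateMap D j v)
    (w : κ → F[T;T⁻¹]) : ∃ N : ℤ, ∀ n ≥ N, (T n : F[T;T⁻¹]) • w ∈ LinearMap.range j := by
  induction w using Pi.single_induction with
  | zero => exact ⟨0, fun n _ => by rw [smul_zero]; exact zero_mem _⟩
  | add w w' h h' =>
    obtain ⟨N, hN⟩ := h
    obtain ⟨N', hN'⟩ := h'
    refine ⟨max N N', fun n hn => ?_⟩
    rw [smul_add]
    exact add_mem (hN n (le_of_max_le_left hn)) (hN' n (le_of_max_le_right hn))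
  | single k f =>
    induction f using LaurentPolynomial.induction_on' with
    | add f g hf hg =>
      obtain ⟨N, hN⟩ := hf
      obtain ⟨N', hN'⟩ := hg
      refine ⟨max N N', fun n hn => ?_⟩
      rw [Pi.single_add, smul_add]
      exact add_mem (hN n (le_of_max_le_left hn)) (hN' n (le_of_max_le_right hn))
    | C_mul_T i a =>
      refine ⟨-i, fun n hn => ⟨a • (D ^ (n + i).toNat) (v k), ?_⟩⟩
      rw [map_smul, hj.map_D_pow_basis, ← Pi.single_smul, ← Pi.single_smul, smul_eq_C_mul,
        smul_eq_mul, mul_left_comm, ← T_add, Int.toNat_of_nonneg (by omega)]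

end CoordinateMap

section Extension

attribute [local instance] LieRing.ofAssociativeRing

variable {F R : Type*} [Field F] [AddCommGroup R] [Module F R]
  {L : Type*} [LieRing L] [LieAlgebra F L] {δ : L →ₗ[F] L} (hnil : ∀ x : L, ∃ k, (δ ^ k) x = 0)
  {κ : Type*} [Fintype κ]
  (j : R →ₗ[F] κ → F[T;T⁻¹]) (v : κ → R) (τ : L →ₗ[F] Module.End F R)

/-- The extension of an action `τ` on `F[T]^κ` to `F[T;T⁻¹]^κ`, given by the Leibniz formula
of `IsTwisted.apply_smul`. -/
noncomputable def extension : L →ₗ[F] Module.End F (κ → F[T;T⁻¹]) :=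
  iterateSum hnil fun k =>
    { toFun := fun x =>
        ∑ l, (LinearMap.toSpanSingleton F[T;T⁻¹] _ (j (τ x (v l)))).restrictScalars F
        ∘ₗ laurentHasseDeriv k ∘ₗ LinearMap.proj l
      map_add' := fun x y => by ext w : 1; simp [Finset.sum_add_distrib]
      map_smul' := fun c x => by
        ext w : 1
        simp only [map_smul, LinearMap.smul_apply, LinearMap.coe_sum, LinearMap.coe_comp,
          Finset.sum_apply, Function.comp_apply, LinearMap.coe_restrictScalars,
          LinearMap.toSpanSingleton_apply, Finset.smul_sum, smul_comm c, RingHom.id_apply] }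

lemma extension_apply {K : ℕ} {x : L} (hx : (δ ^ K) x = 0) (w : κ → F[T;T⁻¹]) :
    extension hnil j v τ x w =
      ∑ k ∈ Finset.range K, ∑ l, laurentHasseDeriv k (w l) • j (τ ((δ ^ k) x) (v l)) := by
  rw [extension, iterateSum_apply hnil _ hx]
  simp

lemma isTwisted_extension : IsTwisted δ (extension hnil j v τ) := by
  intro x w
  obtain ⟨K, hx⟩ := hnil x
  have hx' : (δ ^ (K + 1)) x = 0 := Module.End.pow_map_zero_of_le K.le_succ hx
  have shift (k : ℕ) : (δ ^ k) (δ x) = (δ ^ (k + 1)) x := by rw [pow_succ, Module.End.mul_apply]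
  rw [extension_apply hnil j v τ hx', extension_apply hnil j v τ hx',
    extension_apply hnil j v τ (shift K ▸ hx'), Finset.sum_range_succ', Finset.sum_range_succ']
  simp only [Pi.smul_apply, smul_eq_mul, laurentHasseDeriv_succ_T_one_mul, laurentHasseDeriv_zero,
    add_smul, Finset.sum_add_distrib, mul_smul, smul_add, Finset.smul_sum, shift]
  abel

variable [DecidableEq κ]

lemma extension_single_one (x : L) (k : κ) :
    extension hnil j v τ x (Pi.single k 1) = j (τ x (v k)) := by
  obtain ⟨K, hx⟩ := hnil x
  rw [extension_apply hnil j v τ (Module.End.pow_map_zero_of_le K.le_succ hx),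
    Finset.sum_range_succ', Finset.sum_eq_zero fun i _ => Finset.sum_eq_zero fun l _ => ?_,
    zero_add, Finset.sum_eq_single k (fun l _ hl => ?_) (by simp)]
  · simp
  · rw [Pi.single_eq_of_ne hl, map_zero, zero_smul]
  · obtain rfl | hl := eq_or_ne l k
    · rw [Pi.single_eq_same, laurentHasseDeriv_succ_one, zero_smul]
    · rw [Pi.single_eq_of_ne hl, map_zero, zero_smul]

variable {j v τ} {D : Module.End F R} (hj : IsCoordinateMap D j v)
  (hτ : ∀ x w, τ (δ x) w = τ x (D w) - D (τ x w))
include hj hτ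

lemma extension_coordinate (x : L) (z : R) : extension hnil j v τ x (j z) = j (τ x z) := by
  have hz : z ∈ Submodule.span F {w | ∃ (m : ℕ) (k : κ), w = (D ^ m) (v k)} :=
    hj.span_eq_top ▸ Submodule.mem_top
  induction hz using Submodule.span_induction with
  | zero => simp only [map_zero]
  | add z z' _ _ h h' => simp only [map_add, h, h']
  | smul c z _ h => simp only [map_smul, h]
  | mem z hz =>
    obtain ⟨m, k, rfl⟩ := hz
    induction m generalizing x with
    | zero => rw [pow_zero, Module.End.one_apply, hj.map_basis, extension_single_one]
    | succ m ih =>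
      rw [pow_succ', Module.End.mul_apply, hj.map_D, isTwisted_extension, ih, ih, ← hj.map_D,
        ← map_add, hτ, add_sub_cancel]

lemma extension_lie (hδ : ∀ x y, δ ⁅x, y⁆ = ⁅δ x, y⁆ + ⁅x, δ y⁆)
    (hlie : ∀ x y, τ ⁅x, y⁆ = ⁅τ x, τ y⁆) (x y : L) :
    extension hnil j v τ ⁅x, y⁆ = ⁅extension hnil j v τ x, extension hnil j v τ y⁆ := by
  set ρ := extension hnil j v τ
  have hρ : IsTwisted δ ρ := isTwisted_extension hnil j v τ
  obtain ⟨a, ha⟩ := hnil x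
  obtain ⟨b, hb⟩ := hnil y
  induction hs : a + b using Nat.strong_induction_on generalizing a b x y with | h s ih => ?_
  cases a with
  | zero => rw [show x = 0 from ha, zero_lie, map_zero, zero_lie]
  | succ a =>
  cases b with
  | zero => rw [show y = 0 from hb, lie_zero, map_zero, lie_zero]
  | succ b =>
  -- The defect of multiplicativity commutes with `T` and vanishes on the range of `j`.
  let defect : Module.End F (κ → F[T;T⁻¹]) := ρ ⁅x, y⁆ - ⁅ρ x, ρ y⁆
  have defect_T_one (w : κ → F[T;T⁻¹]) :
      defect ((T 1 : F[T;T⁻¹]) • w) = (T 1 : F[T;T⁻¹]) • defect w := by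
    have left := ih _ (by omega) (δ x) y a (by rwa [pow_succ] at ha) (b + 1) hb rfl
    have right := ih _ (by omega) x (δ y) (a + 1) ha b (by rwa [pow_succ] at hb) rfl
    simp only [defect, LinearMap.sub_apply, LieRing.of_associative_ring_bracket,
      Module.End.mul_apply, hρ _ _, map_add, hδ, left, right, LinearMap.add_apply, smul_sub]
    abel
  have defect_T (n : ℕ) (w : κ → F[T;T⁻¹]) :
      defect ((T n : F[T;T⁻¹]) • w) = (T n : F[T;T⁻¹]) • defect w := by
    induction n with
    | zero => rw [Nat.cast_zero, T_zero, one_smul, one_smul]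
    | succ n ih => rw [Nat.cast_succ, add_comm, T_add, mul_smul, defect_T_one, ih, mul_smul]
  rw [← sub_eq_zero]
  refine LinearMap.ext fun w => ?_
  obtain ⟨N, hN⟩ := hj.exists_T_smul_mem_range w
  obtain ⟨z, hz⟩ := hN N.toNat N.self_le_toNat
  have defect_eq_zero := defect_T N.toNat w
  rw [← hz] at defect_eq_zero
  simp only [defect, ρ, LinearMap.sub_apply, LieRing.of_associative_ring_bracket,
    Module.End.mul_apply, extension_coordinate hnil hj hτ, hlie, map_sub, sub_self]
    at defect_eq_zero
  exact (isUnit_T _).smul_eq_zero.mp defect_eq_zero.symm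

end Extension

section Freeness

open Polynomial

variable {F R : Type*} [Field F] [CharZero F] [AddCommGroup R] [Module F R]
  {C : ConformalAlgebra F R}

lemma IsFiniteType.finite_aeval (hft : C.IsFiniteType) :
    Module.Finite F[X] (Module.AEval' C.D) := by
  obtain ⟨V, hV, hspan⟩ := hft
  obtain ⟨s, rfl⟩ := Module.Finite.iff_fg.mp hV
  let of := Module.AEval'.of C.D
  let P := Submodule.span F[X] (of '' s)
  have span_le {t : Set R} (ht : ∀ x ∈ t, of x ∈ P) : ∀ x ∈ Submodule.span F t, of x ∈ P :=
    Submodule.span_le (p := (P.restrictScalars F).comap of.toLinearMap).mpr ht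
  refine ⟨⟨s.map of.toEquiv.toEmbedding, ?_⟩⟩
  rw [Finset.coe_map, eq_top_iff]
  intro x _
  obtain ⟨x, rfl⟩ := of.surjective x
  refine span_le (t := {x | ∃ (m : ℕ) (v : R), v ∈ Submodule.span F (s : Set R) ∧
    x = (C.D ^ m) v}) ?_ x (hspan ▸ Submodule.mem_top)
  rintro _ ⟨m, v, hv, rfl⟩
  rw [show of ((C.D ^ m) v) = (X ^ m : F[X]) • of v from (Module.AEval.X_pow_smul_of C.D v m).symm]
  exact P.smul_mem _ (span_le (fun x hx => Submodule.subset_span ⟨x, hx, rfl⟩) v hv)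

lemma isTorsionFree_aeval (hC : C.center = ⊥) :
    Module.IsTorsionFree F[X] (Module.AEval' C.D) := by
  rw [Module.isTorsionFree_iff_smul_eq_zero]
  intro p w hpw
  rw [or_iff_not_imp_left]
  intro hp
  have central := mem_center_of_aeval_eq_zero (C := C) (w := (Module.AEval'.of C.D).symm w) hp <| by
    rw [← map_zero (Module.AEval'.of C.D).symm, ← hpw]
    exact (Module.AEval.of_symm_smul C.D p w).symm
  rwa [hC, Submodule.mem_bot, LinearEquiv.map_eq_zero_iff] at central

lemma IsFiniteType.exists_isCoordinateMap (hft : C.IsFiniteType) (hC : C.center = ⊥) :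
    ∃ (r : ℕ) (j : R →ₗ[F] Fin r → F[T;T⁻¹]) (v : Fin r → R), IsCoordinateMap C.D j v := by
  have := hft.finite_aeval
  have := isTorsionFree_aeval hC
  obtain ⟨r, b⟩ := Module.basisOfFiniteTypeTorsionFree' (R := F[X]) (M := Module.AEval' C.D)
  let of := Module.AEval'.of C.D
  let j : R →ₗ[F] Fin r → F[T;T⁻¹] := LinearMap.pi fun k =>
    toLaurentAlg.toLinearMap ∘ₗ (b.coord k).restrictScalars F ∘ₗ of.toLinearMap
  have j_apply (w : R) (k : Fin r) : j w k = toLaurent (b.repr (of w) k) := rfl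
  refine ⟨r, j, fun k => of.symm (b k), fun w w' h => ?_, fun w => ?_, fun k => ?_, ?_⟩
  · refine of.injective (b.repr.injective (Finsupp.ext fun k => toLaurent_injective ?_))
    exact congrFun h k
  · ext1 k
    rw [Pi.smul_apply, j_apply, j_apply,
      show of (C.D w) = (X : F[X]) • of w from (Module.AEval'.X_smul_of C.D w).symm]
    simp
  · ext1 l
    rw [j_apply, LinearEquiv.apply_symm_apply, b.repr_self, Finsupp.single_apply, Pi.single_apply]
    simp only [eq_comm, apply_ite toLaurent, map_one, map_zero]
  · rw [eq_top_iff]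
    rintro w -
    rw [← of.symm_apply_apply w, ← b.sum_repr (of w), map_sum]
    refine Submodule.sum_mem _ fun k _ => ?_
    rw [Module.AEval.of_symm_smul, aeval_eq_sum_range, Finset.sum_smul]
    exact Submodule.sum_mem _ fun m _ => Submodule.smul_mem _ _ (Submodule.subset_span ⟨m, k, rfl⟩)

end Freeness

section ModeAction

attribute [local instance] LieRing.ofAssociativeRing

variable {F R : Type*} [Field F] [CharZero F] [AddCommGroup R] [Module F R]
  {C : ConformalAlgebra F R} {κ : Type*} {j : R →ₗ[F] κ → F[T;T⁻¹]} {v : κ → R}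

lemma finite_prod_basis [Finite κ] : {w | ∃ m k l, C.prod m (v k) (v l) = w}.Finite := by
  have finite_modes (k l : κ) : (Set.range fun m => C.prod m (v k) (v l)).Finite := by
    obtain ⟨N, hN⟩ := C.locality (v k) (v l)
    refine (((Set.finite_lt_nat N).image fun m => C.prod m (v k) (v l)).insert 0).subset ?_
    rintro _ ⟨m, rfl⟩
    exact (lt_or_ge m N).elim (fun hm => Or.inr ⟨m, hm, rfl⟩) fun hm => Or.inl (hN m hm)
  refine (Set.finite_iUnion fun k => Set.finite_iUnion fun l => finite_modes k l).subset ?_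
  rintro _ ⟨m, k, l, rfl⟩
  exact Set.mem_iUnion₂.mpr ⟨k, l, m, rfl⟩

lemma mode_apply_basis_mem [DecidableEq κ] (hj : IsCoordinateMap C.D j v) (x : C.modeAlgebra)
    (l : κ) :
    (x : Module.End F R) (v l) ∈ Submodule.span F {w | ∃ m k l, C.prod m (v k) (v l) = w} := by
  set S := Submodule.span F {w | ∃ m k l, C.prod m (v k) (v l) = w}
  refine modeAlgebra_le (P := S.comap (LinearMap.applyₗ (v l) ∘ₗ C.modeAlgebra.toSubmodule.subtype))
    (fun n a => ?_) x
  have ha : a ∈ Submodule.span F {w | ∃ (m : ℕ) (k : κ), w = (C.D ^ m) (v k)} :=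
    hj.span_eq_top ▸ Submodule.mem_top
  refine Submodule.span_le (p := S.comap ((C.prod n).flip (v l))).mpr ?_ ha
  rintro _ ⟨m, k, rfl⟩
  exact prod_D_pow_left_mem (I := S) fun i _ => Submodule.subset_span ⟨i, k, l, rfl⟩

variable [Fintype κ]

/-- The action of the mode algebra on `F[T;T⁻¹]^κ` extending its action on `R`. -/
noncomputable def modeAction (C : ConformalAlgebra F R) (j : R →ₗ[F] κ → F[T;T⁻¹]) (v : κ → R) :
    C.modeAlgebra →ₗ[F] Module.End F (κ → F[T;T⁻¹]) :=
  extension exists_modeDerivation_pow_eq_zero j v C.modeAlgebra.toSubmodule.subtype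

lemma isTwisted_modeAction : IsTwisted C.modeDerivation (modeAction C j v) :=
  isTwisted_extension _ j v _

variable [DecidableEq κ]

lemma modeAction_coordinate (hj : IsCoordinateMap C.D j v) (x : C.modeAlgebra) (z : R) :
    modeAction C j v x (j z) = j ((x : Module.End F R) z) :=
  extension_coordinate _ hj modeDerivation_apply x z

lemma modeAction_lie (hj : IsCoordinateMap C.D j v) (x y : C.modeAlgebra) :
    modeAction C j v ⁅x, y⁆ = ⁅modeAction C j v x, modeAction C j v y⁆ :=
  extension_lie _ hj modeDerivation_apply modeDerivation_lie (fun _ _ => rfl) x y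

lemma exists_hasSlope_modeAction (hj : IsCoordinateMap C.D j v) :
    ∃ P, HasSlope (modeAction C j v) (Pi.basisFun F[T;T⁻¹] κ) 0 P := by
  choose a ha using fun p : R × κ => exists_degLE (j p.1 p.2)
  obtain ⟨P, hP⟩ := ((finite_prod_basis (C := C) (v := v)).prod Set.finite_univ).image a |>.bddAbove
  let bounded : Submodule F R :=
    { carrier := {w | ∀ i, DegLE P (j w i)}
      add_mem' := fun hw hw' i => by rw [map_add]; exact (hw i).add (hw' i)
      zero_mem' := fun i => by rw [map_zero]; exact degLE_zero P
      smul_mem' := fun c w hw i => by rw [map_smul]; exact (hw i).smul c }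
  refine ⟨P, fun x i l => ?_⟩
  have apply_mem : (x : Module.End F R) (v l) ∈ bounded := by
    refine Submodule.span_le.mpr (fun w hw i => ?_) (mode_apply_basis_mem hj x l)
    exact (ha (w, i)).mono (hP ⟨(w, i), ⟨hw, trivial⟩, rfl⟩)
  simpa [actionMatrix_apply, Module.Basis.toMatrix_apply, ← hj.map_basis,
    modeAction_coordinate hj] using apply_mem i

lemma isActionLattice_range (hj : IsCoordinateMap C.D j v) (hC : C.IsSimple) :
    IsActionLattice (modeAction C j v) (Pi.basisFun F[T;T⁻¹] κ) (LinearMap.range j) where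
  ne_bot h := by
    obtain ⟨n, a, b, hab⟩ := hC.exists_prod_ne_zero
    have : j (C.prod n a b) ∈ LinearMap.range j := ⟨_, rfl⟩
    rw [h, Submodule.mem_bot] at this
    exact hab (hj.injective (this.trans (map_zero j).symm))
  exists_T_smul_mem := hj.exists_T_smul_mem_range
  apply_mem := by
    rintro x _ ⟨z, rfl⟩
    exact ⟨_, (modeAction_coordinate hj x z).symm⟩
  eq_zero_of_forall_apply_eq_zero := by
    rintro _ ⟨z, rfl⟩ h
    have central : z ∈ C.center := mem_center_of_forall_prod_eq_zero fun a n => hj.injective <| by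
      rw [← C.mode_apply, ← modeAction_coordinate hj, h, map_zero]
    rw [hC.center_eq_bot, Submodule.mem_bot] at central
    rw [central, map_zero]
  eq_zero_of_degLE_neg_one := by
    rintro _ ⟨z, rfl⟩ h
    ext k n
    obtain hn | hn := lt_or_ge n 0
    · exact hj.coeff_eq_zero z k hn
    · refine h k n (lt_of_lt_of_le (by norm_num) (Int.cast_nonneg hn))

end ModeAction

section Dichotomy

attribute [local instance] LieRing.ofAssociativeRing

variable {F R : Type*} [Field F] [CharZero F] [AddCommGroup R] [Module F R]
  {C : ConformalAlgebra F R}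

lemma exists_forall_mode_apply_eq_zero {κ : Type*} [Finite κ] (z : κ → R) (a : R) :
    ∃ N, ∀ m ≥ N, ∀ k, C.prod m a (z k) = 0 := by
  choose M hM using fun k => C.locality a (z k)
  obtain ⟨N, hN⟩ := Finite.bddAbove_range M
  exact ⟨N, fun m hm k => hM k m ((hN ⟨k, rfl⟩).trans hm)⟩

theorem IsSimple.exists_lieIdeal_or_functional [IsAlgClosed F] (hC : C.IsSimple)
    (hft : C.IsFiniteType) :
    (∃ J : LieIdeal F C.modeAlgebra, J ≠ ⊤ ∧ Module.Finite F (C.modeAlgebra ⧸ J.toSubmodule) ∧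
      ∀ a, ∃ N, ∀ m ≥ N, C.mode m a ∈ J) ∨
    ∃ θ, IsVectorFieldFunctional C.modeDerivation θ ∧
      ∀ a, ∃ N, ∀ m ≥ N, θ (C.mode m a) = 0 := by
  obtain ⟨r, j, v, hj⟩ := hft.exists_isCoordinateMap hC.center_eq_bot
  have lattice := isActionLattice_range hj hC
  obtain ⟨P, hP⟩ := exists_hasSlope_modeAction hj
  have : Nonempty (Fin r) := by
    by_contra! h
    obtain ⟨n, a, b, hab⟩ := hC.exists_prod_ne_zero
    exact hab (hj.injective (Subsingleton.elim _ _))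
  obtain ⟨w, hw, h⟩ := lattice.exists_lieIdeal_or_functional isTwisted_modeAction
    (modeAction_lie hj) modeDerivation_surjective exists_modeDerivation_pow_eq_zero hP
  choose z hz using hw
  have annihilates (a : R) : ∃ N, ∀ m ≥ N, ∀ k, modeAction C j v (C.mode m a) (w k) = 0 := by
    obtain ⟨N, hN⟩ := exists_forall_mode_apply_eq_zero (C := C) z a
    exact ⟨N, fun m hm k => by
      rw [← hz, modeAction_coordinate hj, mode_apply, hN m hm k, map_zero]⟩
  refine h.imp ?_ ?_
  · rintro ⟨J, hJ, hfin, mem_J⟩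
    exact ⟨J, hJ, hfin, fun a =>
      (annihilates a).imp fun N hN m hm => mem_J _ (hN m hm)⟩
  · rintro ⟨θ, hθ, apply_eq_zero⟩
    exact ⟨θ, hθ, fun a => (annihilates a).imp fun N hN m hm => apply_eq_zero _ (hN m hm)⟩

end Dichotomy

section ModeProducts

attribute [local instance] LieRing.ofAssociativeRing

variable {F R : Type*} [Field F] [CharZero F] [AddCommGroup R] [Module F R]
  {C : ConformalAlgebra F R}

open Polynomial in
/-- Both sides are the coefficient of `X ^ j` in `X ^ n = (-1 + (X + 1)) ^ n`. -/
lemma sum_neg_one_pow_mul_choose_mul_choose (A : Type*) [CommRing A] (n j : ℕ) :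
    ∑ i ∈ Finset.range (n + 1), (-1 : A) ^ i * n.choose i * (n - i).choose j =
      if j = n then 1 else 0 := by
  have expansion := congrArg (coeff · j) (add_pow (-1 : A[X]) (X + 1) n)
  rw [neg_add_cancel_comm_assoc] at expansion
  simp only [coeff_X_pow, finsetSum_coeff] at expansion
  rw [expansion]
  refine Finset.sum_congr rfl fun i _ => ?_
  have sign : (-1 : A[X]) ^ i = Polynomial.C ((-1) ^ i) := by simp
  rw [sign, ← Polynomial.C_eq_natCast, coeff_mul_C, coeff_C_mul, coeff_X_add_one_pow]
  ring

lemma mode_prod (n k : ℕ) (a b : R) : C.mode k (C.prod n a b) =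
    ∑ i ∈ Finset.range (n + 1),
      ((-1 : F) ^ i * (n.choose i : F)) • ⁅C.mode (n - i) a, C.mode (k + i) b⁆ := by
  have bracket (i : ℕ) (hi : i ∈ Finset.range (n + 1)) :
      ⁅C.mode (n - i) a, C.mode (k + i) b⁆ =
        ∑ j ∈ Finset.range (n + 1), ((n - i).choose j : F) • C.mode (n + k - j) (C.prod j a b) := by
    rw [Finset.mem_range] at hi
    rw [lie_mode, show n - i + (k + i) = n + k by omega]
    refine Finset.sum_subset (Finset.range_mono (by omega)) fun j _ hj => ?_
    rw [Nat.choose_eq_zero_of_lt (by simpa using hj), Nat.cast_zero, zero_smul]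
  rw [Finset.sum_congr rfl fun i hi => congrArg _ (bracket i hi)]
  simp only [Finset.smul_sum, smul_smul]
  rw [Finset.sum_comm]
  simp only [← Finset.sum_smul, sum_neg_one_pow_mul_choose_mul_choose, ite_smul, one_smul,
    zero_smul]
  simp

end ModeProducts

section ModeFunctionals

attribute [local instance] LieRing.ofAssociativeRing

variable {F R : Type*} [Field F] [CharZero F] [AddCommGroup R] [Module F R]
  {C : ConformalAlgebra F R} {V : Type*} [AddCommGroup V] [Module F V]

/-- The elements of `R` all of whose modes are killed by `π`. -/
def modeKernel (π : C.modeAlgebra →ₗ[F] V) : Submodule F R :=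
  ⨅ m, LinearMap.ker (π ∘ₗ C.mode m)

/-- The elements of `R` whose modes are killed by `π`, except perhaps the mode of index `0`. When
`modeKernel π = ⊥`, these are the candidates for free generators of `R` over `F[∂]`. -/
def constants (π : C.modeAlgebra →ₗ[F] V) : Submodule F R :=
  ⨅ m, LinearMap.ker (π ∘ₗ C.mode (m + 1))

variable {π : C.modeAlgebra →ₗ[F] V}

lemma mem_modeKernel {a : R} : a ∈ modeKernel π ↔ ∀ m, π (C.mode m a) = 0 := by
  simp [modeKernel]

lemma mem_constants {a : R} : a ∈ constants π ↔ ∀ m, π (C.mode (m + 1) a) = 0 := by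
  simp [constants]

lemma IsSimple.modeKernel_eq_bot (hC : C.IsSimple) (hπ : π ≠ 0)
    (h : ∀ (x : C.modeAlgebra) k, ∀ w ∈ modeKernel π, π ⁅x, C.mode k w⁆ = 0) :
    modeKernel π = ⊥ := by
  refine (hC.eq_bot_or_eq_top _ ⟨fun w hw => ?_, fun u w hw n => ?_⟩).resolve_right
    fun h_top => hπ ?_
  · exact mem_modeKernel.mpr fun m => by rw [mode_D, map_smul, mem_modeKernel.mp hw, smul_zero]
  · refine mem_modeKernel.mpr fun k => ?_
    rw [mode_prod, map_sum]
    exact Finset.sum_eq_zero fun i _ => by rw [map_smul, h _ _ w hw, smul_zero]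
  · refine modeAlgebra_hom_ext fun n a => ?_
    exact mem_modeKernel.mp (h_top ▸ Submodule.mem_top : a ∈ modeKernel π) n

lemma eq_of_forall_map_mode_eq (hker : modeKernel π = ⊥) {a b : R}
    (h : ∀ m, π (C.mode m a) = π (C.mode m b)) : a = b := by
  rw [← sub_eq_zero, ← Submodule.mem_bot F, ← hker, mem_modeKernel]
  exact fun m => by rw [map_sub, map_sub, h, sub_self]

lemma eq_of_map_mode_zero_eq (hker : modeKernel π = ⊥) {a b : R} (ha : a ∈ constants π)
    (hb : b ∈ constants π) (h : π (C.mode 0 a) = π (C.mode 0 b)) : a = b := by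
  refine eq_of_forall_map_mode_eq hker fun m => ?_
  cases m with
  | zero => exact h
  | succ m => rw [mem_constants.mp ha, mem_constants.mp hb]

lemma map_mode_D_pow {g : R} (hg : g ∈ constants π) (k m : ℕ) :
    π (C.mode k ((C.D ^ m) g)) =
      if k = m then ((-1 : F) ^ m * (m.factorial : F)) • π (C.mode 0 g) else 0 := by
  induction m generalizing k with
  | zero =>
    cases k with
    | zero => simp
    | succ k => simp [mem_constants.mp hg]
  | succ m ih =>
    rw [pow_succ', Module.End.mul_apply, mode_D, map_smul, ih]
    cases k with
    | zero => simp
    | succ k =>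
      simp only [Nat.add_sub_cancel, add_left_inj, smul_ite, smul_smul, smul_zero]
      refine if_ctx_congr Iff.rfl (fun hk => ?_) fun _ => rfl
      rw [hk, Nat.factorial_succ]
      push_cast
      congr 1
      ring

variable (F) in
lemma neg_one_pow_mul_factorial_ne_zero (m : ℕ) : (-1 : F) ^ m * (m.factorial : F) ≠ 0 :=
  mul_ne_zero (pow_ne_zero _ (neg_ne_zero.mpr one_ne_zero))
    (Nat.cast_ne_zero.mpr m.factorial_ne_zero)

lemma eq_zero_of_sum_D_pow_eq_zero (hker : modeKernel π = ⊥) {f : ℕ →₀ R}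
    (hf : ∀ m, f m ∈ constants π) (h : (f.sum fun m g => (C.D ^ m) g) = 0) : f = 0 := by
  ext k
  refine eq_of_map_mode_zero_eq hker (hf k) (zero_mem _) ?_
  have mode_sum : π (C.mode k (f.sum fun m g => (C.D ^ m) g)) =
      ((-1 : F) ^ k * (k.factorial : F)) • π (C.mode 0 (f k)) := by
    simp only [Finsupp.sum, map_sum, map_mode_D_pow (hf _), Finset.sum_ite_eq]
    refine ite_eq_left_iff.mpr fun hk => ?_
    rw [Finsupp.notMem_support_iff.mp hk, map_zero, map_zero, smul_zero]
  rw [h, map_zero, map_zero] at mode_sum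
  simpa using (smul_eq_zero.mp mode_sum.symm).resolve_left (neg_one_pow_mul_factorial_ne_zero F k)

lemma span_D_pow_constants_eq_top (hker : modeKernel π = ⊥)
    (hloc : ∀ a, ∃ N, ∀ m ≥ N, π (C.mode m a) = 0)
    (hsurj : ∀ s, ∃ g ∈ constants π, π (C.mode 0 g) = s) :
    Submodule.span F {x : R | ∃ (m : ℕ) (g : R), g ∈ constants π ∧ x = (C.D ^ m) g} = ⊤ := by
  rw [eq_top_iff]
  rintro a -
  obtain ⟨N, hN⟩ := hloc a
  choose g hg mode_zero_g using hsurj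
  let coefficient (m : ℕ) : R := g (((-1 : F) ^ m * (m.factorial : F))⁻¹ • π (C.mode m a))
  have expansion : ∑ m ∈ Finset.range N, (C.D ^ m) (coefficient m) = a := by
    refine eq_of_forall_map_mode_eq hker fun k => ?_
    simp only [map_sum, coefficient, map_mode_D_pow (hg _), mode_zero_g, Finset.sum_ite_eq,
      smul_inv_smul₀ (neg_one_pow_mul_factorial_ne_zero F _)]
    refine ite_eq_left_iff.mpr fun hk => ?_
    rw [hN k (by simpa using hk)]
  rw [← expansion]
  exact Submodule.sum_mem _ fun m _ => Submodule.subset_span ⟨m, _, hg _, rfl⟩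

end ModeFunctionals

section VirasoroGenerators

attribute [local instance] LieRing.ofAssociativeRing

variable {F R : Type*} [Field F] [CharZero F] [AddCommGroup R] [Module F R]
  {C : ConformalAlgebra F R}

/-- `e` generates `R` freely over `F[∂]` and satisfies the relations of the generator of the
Virasoro conformal algebra, so that `R` is isomorphic to it. -/
def IsVirasoroGenerator (C : ConformalAlgebra F R) (e : R) : Prop :=
  (∀ c : ℕ →₀ F, (c.sum fun m a => a • ((C.D ^ m) e)) = 0 → c = 0) ∧
  Submodule.span F (Set.range fun m : ℕ => (C.D ^ m) e) = ⊤ ∧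
  C.prod 0 e e = C.D e ∧ C.prod 1 e e = (2 : F) • e ∧ ∀ n ≥ 2, C.prod n e e = 0

variable {θ : C.modeAlgebra →ₗ[F] F}

lemma apply_lie_mode (hθ : IsVectorFieldFunctional C.modeDerivation θ) (n k : ℕ) (a b : R) :
    θ ⁅C.mode n a, C.mode k b⁆ = n * θ (C.mode (n - 1) a) * θ (C.mode k b) -
      k * θ (C.mode (k - 1) b) * θ (C.mode n a) := by
  simp only [hθ.2, modeDerivation_mode, map_smul, smul_eq_mul]

lemma apply_mode_prod (hθ : IsVectorFieldFunctional C.modeDerivation θ) (n k : ℕ) (a b : R) :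
    θ (C.mode k (C.prod n a b)) = ∑ i ∈ Finset.range (n + 1), (-1) ^ i * n.choose i *
      ((n - i : ℕ) * θ (C.mode (n - i - 1) a) * θ (C.mode (k + i) b) -
        (k + i : ℕ) * θ (C.mode (k + i - 1) b) * θ (C.mode (n - i) a)) := by
  simp only [mode_prod, map_sum, map_smul, apply_lie_mode hθ, smul_eq_mul]

lemma apply_mode_zero_prod_succ (hθ : IsVectorFieldFunctional C.modeDerivation θ) (n : ℕ)
    (a b : R) : θ (C.mode 0 (C.prod (n + 1) a b)) = 2 * (n + 1) *
      ∑ i ∈ Finset.range (n + 1),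
        (-1) ^ i * n.choose i * θ (C.mode (n - i) a) * θ (C.mode i b) := by
  simp only [apply_mode_prod hθ, mul_sub, Finset.sum_sub_distrib]
  rw [Finset.sum_range_succ, Finset.sum_range_succ' _ (n + 1)]
  simp only [Nat.sub_self, Nat.cast_zero, zero_mul, mul_zero, add_zero, zero_add,
    ← Finset.sum_sub_distrib, Finset.mul_sum]
  refine Finset.sum_congr rfl fun i hi => ?_
  have hin : i ≤ n := Finset.mem_range_succ_iff.mp hi
  have choose_left : ((n + 1).choose i : F) * (n + 1 - i : ℕ) = (n + 1) * n.choose i := by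
    exact_mod_cast (Nat.choose_mul_succ_eq n i).symm.trans (mul_comm _ _)
  have choose_right : ((n + 1).choose (i + 1) : F) * (i + 1 : ℕ) = (n + 1) * n.choose i := by
    exact_mod_cast (Nat.add_one_mul_choose_eq n i).symm
  rw [show n + 1 - i - 1 = n - i by omega, show n + 1 - (i + 1) = n - i by omega,
    Nat.add_sub_cancel, pow_succ]
  linear_combination (-1) ^ i * θ (C.mode (n - i) a) * θ (C.mode i b) * (choose_left + choose_right)

lemma apply_mode_zero_prod_self_ne_zero (hθ : IsVectorFieldFunctional C.modeDerivation θ) {a : R}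
    {N : ℕ} (h_ne : θ (C.mode N a) ≠ 0) (h_last : ∀ m > N, θ (C.mode m a) = 0) :
    θ (C.mode 0 (C.prod (2 * N + 1) a a)) ≠ 0 := by
  rw [apply_mode_zero_prod_succ hθ, Finset.sum_eq_single N]
  · rw [show 2 * N - N = N by omega]
    have choose_ne_zero : ((2 * N).choose N : F) ≠ 0 :=
      Nat.cast_ne_zero.mpr (Nat.choose_pos (by omega)).ne'
    have odd_ne_zero : 2 * (N : F) + 1 ≠ 0 := mod_cast (2 * N).succ_ne_zero
    simp [h_ne, choose_ne_zero, odd_ne_zero]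
  · intro i _ hi
    rcases lt_or_gt_of_ne hi with hi | hi
    · rw [h_last (2 * N - i) (by omega), mul_zero, zero_mul]
    · rw [h_last i hi, mul_zero]
  · exact fun h => absurd (Finset.mem_range.mpr (by omega)) h

lemma prod_self_mem_constants (hθ : IsVectorFieldFunctional C.modeDerivation θ) {a : R} {N : ℕ}
    (h_last : ∀ m > N, θ (C.mode m a) = 0) : C.prod (2 * N + 1) a a ∈ constants θ := by
  have mul_eq_zero {p q : ℕ} (h : 2 * N < p + q) : θ (C.mode p a) * θ (C.mode q a) = 0 := by
    rcases lt_or_ge N p with hp | hp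
    · rw [h_last p hp, zero_mul]
    · rw [h_last q (by omega), mul_zero]
  refine mem_constants.mpr fun m => ?_
  rw [apply_mode_prod hθ]
  refine Finset.sum_eq_zero fun i hi => ?_
  rw [Finset.mem_range] at hi
  rw [mul_assoc (Nat.cast _), mul_assoc (Nat.cast _), mul_eq_zero (by omega),
    mul_eq_zero (by omega)]
  simp

lemma IsSimple.modeKernel_functional_eq_bot (hC : C.IsSimple)
    (hθ : IsVectorFieldFunctional C.modeDerivation θ) : modeKernel θ = ⊥ := by
  refine hC.modeKernel_eq_bot hθ.1 fun x k w hw => ?_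
  simp only [hθ.2, modeDerivation_mode, map_smul, mem_modeKernel.mp hw, smul_zero, mul_zero,
    zero_mul, sub_zero]

lemma IsSimple.exists_normalized_constant (hC : C.IsSimple)
    (hθ : IsVectorFieldFunctional C.modeDerivation θ)
    (hloc : ∀ a, ∃ N, ∀ m ≥ N, θ (C.mode m a) = 0) :
    ∃ e ∈ constants θ, θ (C.mode 0 e) = 1 := by
  obtain ⟨a, ha⟩ := hC.exists_ne_zero
  obtain ⟨N, h_ne, h_last⟩ := exists_last_ne_zero (hloc a) <| by
    by_contra! h
    exact ha <| (Submodule.eq_bot_iff _).mp (hC.modeKernel_functional_eq_bot hθ) a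
      (mem_modeKernel.mpr h)
  refine ⟨(θ (C.mode 0 (C.prod (2 * N + 1) a a)))⁻¹ • C.prod (2 * N + 1) a a,
    Submodule.smul_mem _ _ (prod_self_mem_constants hθ h_last), ?_⟩
  rw [map_smul, map_smul, smul_eq_mul,
    inv_mul_cancel₀ (apply_mode_zero_prod_self_ne_zero hθ h_ne h_last)]

variable {e : R}

lemma apply_mode_normalized (he : e ∈ constants θ) (he0 : θ (C.mode 0 e) = 1) (k : ℕ) :
    θ (C.mode k e) = if k = 0 then 1 else 0 := by
  cases k with
  | zero => simp [he0]
  | succ k => simp [mem_constants.mp he]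

lemma eq_zero_of_sum_smul_D_pow_eq_zero (hker : modeKernel θ = ⊥) (he : e ∈ constants θ)
    (he0 : θ (C.mode 0 e) = 1) {c : ℕ →₀ F} (hc : (c.sum fun m a => a • (C.D ^ m) e) = 0) :
    c = 0 := by
  let coefficients : ℕ →₀ R := c.mapRange (· • e) (zero_smul F e)
  have coefficients_eq_zero : coefficients = 0 := by
    refine eq_zero_of_sum_D_pow_eq_zero hker (fun m => ?_) ?_
    · exact Submodule.smul_mem _ _ he
    · rw [Finsupp.sum_mapRange_index fun m => map_zero _]
      simpa only [map_smul] using hc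
  ext m
  simpa [coefficients, he0] using
    congrArg (fun x => θ (C.mode 0 x)) (DFunLike.congr_fun coefficients_eq_zero m)

lemma span_range_D_pow_eq_top (hker : modeKernel θ = ⊥)
    (hloc : ∀ a, ∃ N, ∀ m ≥ N, θ (C.mode m a) = 0) (he : e ∈ constants θ)
    (he0 : θ (C.mode 0 e) = 1) : Submodule.span F (Set.range fun m : ℕ => (C.D ^ m) e) = ⊤ := by
  have multiple_mem (s : F) : s • e ∈ constants θ := Submodule.smul_mem _ _ he
  have apply_multiple (s : F) : θ (C.mode 0 (s • e)) = s := by simp [he0]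
  rw [eq_top_iff, ← span_D_pow_constants_eq_top hker hloc
    fun s => ⟨s • e, multiple_mem s, apply_multiple s⟩, Submodule.span_le]
  rintro _ ⟨m, g, hg, rfl⟩
  rw [eq_of_map_mode_zero_eq hker hg (multiple_mem (θ (C.mode 0 g))) (apply_multiple _).symm,
    map_smul]
  exact Submodule.smul_mem _ _ (Submodule.subset_span ⟨m, rfl⟩)

lemma prod_normalized (hker : modeKernel θ = ⊥)
    (hθ : IsVectorFieldFunctional C.modeDerivation θ) (he : e ∈ constants θ)
    (he0 : θ (C.mode 0 e) = 1) :
    C.prod 0 e e = C.D e ∧ C.prod 1 e e = (2 : F) • e ∧ ∀ n ≥ 2, C.prod n e e = 0 := by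
  have apply_mode := apply_mode_normalized he he0
  refine ⟨?_, ?_, fun n hn => ?_⟩ <;> refine eq_of_forall_map_mode_eq hker fun k => ?_
  · rw [apply_mode_prod hθ, mode_D, map_smul]
    rcases k with _ | _ | k <;> simp [apply_mode]
  · rw [apply_mode_prod hθ]
    rcases k with _ | k <;> simp [apply_mode, Finset.sum_range_succ]
    norm_num
  · rw [apply_mode_prod hθ, map_zero, map_zero]
    refine Finset.sum_eq_zero fun i hi => ?_
    rw [Finset.mem_range] at hi
    simp only [apply_mode]
    split_ifs <;> first | omega | simp

theorem IsSimple.exists_isVirasoroGenerator (hC : C.IsSimple)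
    (hθ : IsVectorFieldFunctional C.modeDerivation θ)
    (hloc : ∀ a, ∃ N, ∀ m ≥ N, θ (C.mode m a) = 0) : ∃ e, C.IsVirasoroGenerator e := by
  obtain ⟨e, he, he0⟩ := hC.exists_normalized_constant hθ hloc
  have hker := hC.modeKernel_functional_eq_bot hθ
  exact ⟨e, fun _ => eq_zero_of_sum_smul_D_pow_eq_zero hker he he0,
    span_range_D_pow_eq_top hker hloc he he0, prod_normalized hker hθ he he0⟩

end VirasoroGenerators

section SimpleQuotients

variable {F L : Type*} [Field F] [LieRing L] [LieAlgebra F L]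

/-- The projection of a Lie algebra onto its quotient by an ideal, as a morphism of Lie
algebras. -/
def quotientHom (J : LieIdeal F L) : L →ₗ⁅F⁆ L ⧸ J where
  toLinearMap := J.toSubmodule.mkQ
  map_lie' {x y} := LieSubmodule.Quotient.mk_bracket J x y

lemma quotientHom_surjective (J : LieIdeal F L) : Function.Surjective (quotientHom J) :=
  J.toSubmodule.mkQ_surjective

lemma quotientHom_eq_zero {J : LieIdeal F L} {x : L} : quotientHom J x = 0 ↔ x ∈ J :=
  LieSubmodule.Quotient.mk_eq_zero'

lemma isSimple_quotient_of_isCoatom {J : LieIdeal F L} (hJ : IsCoatom J)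
    (h_nonabelian : ¬ IsLieAbelian (L ⧸ J)) : LieAlgebra.IsSimple F (L ⧸ J) := by
  refine ⟨fun I => ?_, h_nonabelian⟩
  have le_comap : J ≤ I.comap (quotientHom J) := fun x hx => by
    rw [LieIdeal.mem_comap, quotientHom_eq_zero.mpr hx]
    exact zero_mem I
  refine (hJ.le_iff.mp le_comap).symm.imp (fun h => ?_) fun h => ?_
  · refine (LieSubmodule.eq_bot_iff I).mpr fun y hy => ?_
    obtain ⟨x, rfl⟩ := quotientHom_surjective J y
    rwa [← LieIdeal.mem_comap, h, ← quotientHom_eq_zero] at hy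
  · refine eq_top_iff.mpr fun y _ => ?_
    obtain ⟨x, rfl⟩ := quotientHom_surjective J y
    rw [← LieIdeal.mem_comap, h]
    exact LieSubmodule.mem_top x

end SimpleQuotients

section Jets

variable {F L 𝔤 : Type*} [Field F] [LieRing L] [LieAlgebra F L] [LieRing 𝔤] [LieAlgebra F 𝔤]
  {δ : L →ₗ[F] L}

lemma eq_top_of_le_comap (hsurj : Function.Surjective δ) (hnil : ∀ x, ∃ k, (δ ^ k) x = 0)
    {p : Submodule F L} [Module.Finite F (L ⧸ p)] (hp : p ≤ p.comap δ) : p = ⊤ := by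
  have injective : Function.Injective (p.mapQ p δ hp) := by
    refine LinearMap.injective_iff_surjective.mpr fun y => ?_
    obtain ⟨y, rfl⟩ := p.mkQ_surjective y
    obtain ⟨x, rfl⟩ := hsurj y
    exact ⟨p.mkQ x, p.mapQ_apply p δ x⟩
  refine (Submodule.eq_top_iff').mpr fun x => ?_
  obtain ⟨k, hk⟩ := hnil x
  have pow_mk : (p.mapQ p δ hp ^ k) (p.mkQ x) = 0 := by
    rw [← p.mapQ_pow hp k, p.mkQ_apply, p.mapQ_apply, hk, Submodule.Quotient.mk_zero]
  rw [Module.End.pow_apply] at pow_mk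
  exact (Submodule.Quotient.mk_eq_zero p).mp
    (injective.iterate k (pow_mk.trans (iterate_map_zero _ k).symm))

lemma pow_apply_lie (hδ : ∀ x y, δ ⁅x, y⁆ = ⁅δ x, y⁆ + ⁅x, δ y⁆) (n : ℕ) (x y : L) :
    (δ ^ n) ⁅x, y⁆ = ∑ ij ∈ Finset.HasAntidiagonal.antidiagonal n,
      n.choose ij.1 • ⁅(δ ^ ij.1) x, (δ ^ ij.2) y⁆ := by
  let derivation : LieDerivation F L L := ⟨δ, fun x y => by rw [hδ, ← lie_skew y]; abel⟩
  simp only [Module.End.pow_apply]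
  exact derivation.iterate_apply_lie n x y

/-- The `n`-jet `(φ x, φ (δ x), …, φ (δ ^ (n - 1) x))` of `x` along `φ`. -/
def jet (φ : L →ₗ⁅F⁆ 𝔤) (δ : L →ₗ[F] L) (n : ℕ) : L →ₗ[F] Fin n → 𝔤 :=
  LinearMap.pi fun k => (φ : L →ₗ[F] 𝔤) ∘ₗ (δ ^ (k : ℕ))

variable {φ : L →ₗ⁅F⁆ 𝔤}

lemma mem_ker_jet {n : ℕ} {x : L} :
    x ∈ LinearMap.ker (jet φ δ n) ↔ ∀ k < n, φ ((δ ^ k) x) = 0 := by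
  simp [jet, funext_iff, Fin.forall_iff]

lemma map_pow_apply_lie (hδ : ∀ x y, δ ⁅x, y⁆ = ⁅δ x, y⁆ + ⁅x, δ y⁆) {n k : ℕ} (hk : k ≤ n)
    (x : L) {y : L} (hy : y ∈ LinearMap.ker (jet φ δ n)) :
    φ ((δ ^ k) ⁅x, y⁆) = ⁅φ x, φ ((δ ^ k) y)⁆ := by
  rw [pow_apply_lie hδ, map_sum, Finset.sum_eq_single (0, k)]
  · simp
  · rintro ⟨i, j⟩ hij hne
    have hij : i + j = k := Finset.HasAntidiagonal.mem_antidiagonal.mp hij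
    have hj : j < n := by
      by_contra! h
      exact hne (Prod.ext (by omega) (by omega))
    rw [map_nsmul, LieHom.map_lie, mem_ker_jet.mp hy j hj, lie_zero, smul_zero]
  · simp

/-- The leading coefficients `φ (δ ^ n x)` of the elements `x` with vanishing `n`-jet. -/
def leadingIdeal (hδ : ∀ x y, δ ⁅x, y⁆ = ⁅δ x, y⁆ + ⁅x, δ y⁆) (hφ : Function.Surjective φ)
    (n : ℕ) : LieIdeal F 𝔤 where
  __ := (LinearMap.ker (jet φ δ n)).map ((φ : L →ₗ[F] 𝔤) ∘ₗ δ ^ n)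
  lie_mem {z _} := by
    rintro ⟨y, hy, rfl⟩
    obtain ⟨x, rfl⟩ := hφ z
    refine ⟨⁅x, y⁆, mem_ker_jet.mpr fun k hk => ?_, map_pow_apply_lie hδ le_rfl x hy⟩
    rw [map_pow_apply_lie hδ hk.le x hy, mem_ker_jet.mp hy k hk, lie_zero]

lemma mem_leadingIdeal (hδ : ∀ x y, δ ⁅x, y⁆ = ⁅δ x, y⁆ + ⁅x, δ y⁆) {hφ : Function.Surjective φ}
    {n : ℕ} {z : 𝔤} : z ∈ leadingIdeal hδ hφ n ↔
      ∃ x, (∀ k < n, φ ((δ ^ k) x) = 0) ∧ φ ((δ ^ n) x) = z := by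
  simp only [← mem_ker_jet]
  rfl

theorem exists_jet_eq [LieAlgebra.IsSimple F 𝔤] [Module.Finite F 𝔤]
    (hδ : ∀ x y, δ ⁅x, y⁆ = ⁅δ x, y⁆ + ⁅x, δ y⁆) (hsurj : Function.Surjective δ)
    (hnil : ∀ x, ∃ k, (δ ^ k) x = 0) (hφ : Function.Surjective φ) (n : ℕ) (z : 𝔤) :
    ∃ x, (∀ k < n, φ ((δ ^ k) x) = 0) ∧ φ ((δ ^ n) x) = z := by
  suffices leadingIdeal hδ hφ n = ⊤ from
    (mem_leadingIdeal hδ).mp (this ▸ LieSubmodule.mem_top z)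
  refine (LieAlgebra.IsSimple.eq_bot_or_eq_top _).resolve_left fun h_bot => ?_
  have leading_eq_zero {x : L} (hx : ∀ k < n, φ ((δ ^ k) x) = 0) : φ ((δ ^ n) x) = 0 :=
    (LieSubmodule.eq_bot_iff _).mp h_bot _ ((mem_leadingIdeal hδ).mpr ⟨x, hx, rfl⟩)
  have stable : LinearMap.ker (jet φ δ (n + 1)) ≤ (LinearMap.ker (jet φ δ (n + 1))).comap δ := by
    intro x hx
    rw [Submodule.mem_comap]
    have shift (k : ℕ) (hk : k < n) : φ ((δ ^ k) (δ x)) = 0 :=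
      mem_ker_jet.mp hx (k + 1) (by omega)
    exact mem_ker_jet.mpr fun k hk => (Nat.lt_succ_iff_lt_or_eq.mp hk).elim (shift k)
      fun h => h ▸ leading_eq_zero shift
  have : Module.Finite F (L ⧸ LinearMap.ker (jet φ δ (n + 1))) := Submodule.CoFG.ker _
  have ker_eq_top := eq_top_of_le_comap hsurj hnil stable
  have := LieAlgebra.IsSimple.nontrivial F 𝔤
  obtain ⟨z, hz⟩ := exists_ne (0 : 𝔤)
  obtain ⟨x, rfl⟩ := hφ z
  exact hz (mem_ker_jet.mp (ker_eq_top ▸ Submodule.mem_top : x ∈ _) 0 n.succ_pos)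

end Jets

section ModesOfValues

attribute [local instance] LieRing.ofAssociativeRing

variable {F R : Type*} [Field F] [CharZero F] [AddCommGroup R] [Module F R]
  {C : ConformalAlgebra F R}

lemma mode_coe_apply {K : ℕ} {x : C.modeAlgebra} (hx : (C.modeDerivation ^ K) x = 0) (m : ℕ)
    (b : R) : C.mode m ((x : Module.End F R) b) =
      ∑ i ∈ Finset.range K, ((-1 : F) ^ i * (i.factorial : F)⁻¹) •
        ⁅(C.modeDerivation ^ i) x, C.mode (m + i) b⁆ := by
  let bracketSum : C.modeAlgebra →ₗ[F] C.modeAlgebra :=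
    iterateSum exists_modeDerivation_pow_eq_zero fun i =>
      ((-1 : F) ^ i * (i.factorial : F)⁻¹) • (LieModule.toEnd F C.modeAlgebra C.modeAlgebra :
        C.modeAlgebra →ₗ[F] Module.End F C.modeAlgebra).flip (C.mode (m + i) b)
  let modeOfValue : C.modeAlgebra →ₗ[F] C.modeAlgebra :=
    C.mode m ∘ₗ LinearMap.applyₗ b ∘ₗ C.modeAlgebra.toSubmodule.subtype
  have eq_bracketSum : modeOfValue = bracketSum := modeAlgebra_hom_ext fun n a => by
    have pow_mode_eq_zero : (C.modeDerivation ^ (n + 1)) (C.mode n a) = 0 := by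
      rw [modeDerivation_pow_mode, Nat.descFactorial_of_lt n.lt_succ_self, Nat.cast_zero, zero_smul]
    refine (mode_prod n m a b).trans ?_
    rw [iterateSum_apply _ _ pow_mode_eq_zero]
    refine Finset.sum_congr rfl fun i _ => ?_
    rw [modeDerivation_pow_mode, Nat.descFactorial_eq_factorial_mul_choose]
    simp only [LinearMap.smul_apply, LinearMap.flip_apply, map_smul, smul_smul]
    congr 1
    have := Nat.cast_ne_zero (R := F).mpr i.factorial_ne_zero
    push_cast
    field_simp
  exact (LinearMap.congr_fun eq_bracketSum x).trans (iterateSum_apply _ _ hx)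

variable {𝔤 : Type*} [LieRing 𝔤] [LieAlgebra F 𝔤] {φ : C.modeAlgebra →ₗ⁅F⁆ 𝔤}

lemma map_mode_coe_apply {K : ℕ} {x : C.modeAlgebra} (hx : (C.modeDerivation ^ K) x = 0) (m : ℕ)
    (b : R) : φ (C.mode m ((x : Module.End F R) b)) =
      ∑ i ∈ Finset.range K, ((-1 : F) ^ i * (i.factorial : F)⁻¹) •
        ⁅φ ((C.modeDerivation ^ i) x), φ (C.mode (m + i) b)⁆ := by
  simp only [mode_coe_apply hx, map_sum, map_smul, LieHom.map_lie]

lemma map_mode_coe_apply_of_jet_eq_zero {a : R} {N : ℕ} (h_last : ∀ m > N, φ (C.mode m a) = 0)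
    {x : C.modeAlgebra} (hx : ∀ k < N, φ ((C.modeDerivation ^ k) x) = 0) (m : ℕ) :
    φ (C.mode m ((x : Module.End F R) a)) = if m = 0 then ((-1 : F) ^ N * (N.factorial : F)⁻¹) •
      ⁅φ ((C.modeDerivation ^ N) x), φ (C.mode N a)⁆ else 0 := by
  obtain ⟨K, hK⟩ := exists_modeDerivation_pow_eq_zero x
  have pow_eq_zero : (C.modeDerivation ^ (K + N + 1)) x = 0 :=
    Module.End.pow_map_zero_of_le (by omega) hK
  rw [map_mode_coe_apply pow_eq_zero, Finset.sum_eq_single N]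
  · split_ifs with hm
    · rw [hm, zero_add]
    · rw [h_last (m + N) (by omega), lie_zero, smul_zero]
  · intro i _ hi
    rcases lt_or_gt_of_ne hi with hi | hi
    · rw [hx i hi, zero_lie, smul_zero]
    · rw [h_last (m + i) (by omega), lie_zero, smul_zero]
  · exact fun h => absurd (Finset.mem_range.mpr (by omega)) h

lemma map_mode_coe_apply_of_mem_constants {g : R} (hg : g ∈ constants (φ : C.modeAlgebra →ₗ[F] 𝔤))
    (x : C.modeAlgebra) (m : ℕ) : φ (C.mode m ((x : Module.End F R) g)) =
      if m = 0 then ⁅φ x, φ (C.mode 0 g)⁆ else 0 := by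
  have h_last (m : ℕ) (hm : m > 0) : φ (C.mode m g) = 0 := by
    simpa [Nat.sub_add_cancel hm] using mem_constants.mp hg (m - 1)
  simpa using map_mode_coe_apply_of_jet_eq_zero h_last (x := x) (by simp) m

lemma coe_apply_mem_constants {g : R} (hg : g ∈ constants (φ : C.modeAlgebra →ₗ[F] 𝔤))
    (x : C.modeAlgebra) :
    (x : Module.End F R) g ∈ constants (φ : C.modeAlgebra →ₗ[F] 𝔤) :=
  mem_constants.mpr fun m =>
    (map_mode_coe_apply_of_mem_constants hg x (m + 1)).trans (if_neg m.succ_ne_zero)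

end ModesOfValues

section CurrentGenerators

attribute [local instance] LieRing.ofAssociativeRing

variable {F R : Type*} [Field F] [CharZero F] [AddCommGroup R] [Module F R]
  {C : ConformalAlgebra F R} {𝔤 : Type*} [LieRing 𝔤] [LieAlgebra F 𝔤]

/-- `G` is a finite-dimensional space of free generators of `R` over `F[∂]`, which is a simple Lie
algebra for the product of index `0` and on which the higher products vanish, so that `R` is
isomorphic to the current conformal algebra of `G`. -/
def IsCurrentGenerators (C : ConformalAlgebra F R) (G : Submodule F R) : Prop :=
  FiniteDimensional F G ∧
  (∀ f : ℕ →₀ R, (∀ m : ℕ, f m ∈ G) → (f.sum fun m g => (C.D ^ m) g) = 0 → f = 0) ∧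
  Submodule.span F {x : R | ∃ (m : ℕ) (g : R), g ∈ G ∧ x = (C.D ^ m) g} = ⊤ ∧
  (∀ u ∈ G, ∀ v ∈ G, C.prod 0 u v ∈ G) ∧
  (∀ u ∈ G, ∀ v ∈ G, ∀ n ≥ 1, C.prod n u v = 0) ∧
  (∀ u ∈ G, ∀ v ∈ G, C.prod 0 u v = -C.prod 0 v u) ∧
  (∀ u ∈ G, ∀ v ∈ G, ∀ w ∈ G,
    C.prod 0 u (C.prod 0 v w) - C.prod 0 v (C.prod 0 u w) = C.prod 0 (C.prod 0 u v) w) ∧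
  (∃ u ∈ G, ∃ v ∈ G, C.prod 0 u v ≠ 0) ∧
  (∀ I : Submodule F R, I ≤ G → (∀ u ∈ G, ∀ w ∈ I, C.prod 0 u w ∈ I) → I = ⊥ ∨ I = G)

variable {φ : C.modeAlgebra →ₗ⁅F⁆ 𝔤}

lemma IsSimple.modeKernel_lieHom_eq_bot [Nontrivial 𝔤] (hC : C.IsSimple)
    (hφ : Function.Surjective φ) : modeKernel (φ : C.modeAlgebra →ₗ[F] 𝔤) = ⊥ := by
  refine hC.modeKernel_eq_bot (fun h => ?_) fun x k w hw => ?_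
  · obtain ⟨z, hz⟩ := exists_ne (0 : 𝔤)
    obtain ⟨x, rfl⟩ := hφ z
    exact hz (LinearMap.congr_fun h x)
  · have := mem_modeKernel.mp hw k
    simp_all

lemma IsSimple.not_isLieAbelian [Nontrivial 𝔤] (hC : C.IsSimple) (hφ : Function.Surjective φ) :
    ¬ IsLieAbelian 𝔤 := by
  intro _
  obtain ⟨n, u, v, h⟩ := hC.exists_prod_ne_zero
  refine h (eq_of_forall_map_mode_eq (hC.modeKernel_lieHom_eq_bot hφ) fun m => ?_)
  simp only [mode_prod, map_sum, map_smul, LieHom.coe_toLinearMap, LieHom.map_lie,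
    trivial_lie_zero, smul_zero, Finset.sum_const_zero, map_zero]

/-- The values `φ (mode 0 w)` of the elements `w` of a subspace `G` of the constants, when `G` is
stable under enough modes for these values to form an ideal. -/
def valueIdeal {G : Submodule F R} (hG : G ≤ constants (φ : C.modeAlgebra →ₗ[F] 𝔤))
    (h : ∀ z : 𝔤, ∃ x : C.modeAlgebra, φ x = z ∧ ∀ w ∈ G, (x : Module.End F R) w ∈ G) :
    LieIdeal F 𝔤 where
  __ := G.map ((φ : C.modeAlgebra →ₗ[F] 𝔤) ∘ₗ C.mode 0)
  lie_mem {z _} := by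
    rintro ⟨w, hw, rfl⟩
    obtain ⟨x, rfl, hx⟩ := h z
    exact ⟨(x : Module.End F R) w, hx w hw, map_mode_coe_apply_of_mem_constants (hG hw) x 0⟩

lemma mem_valueIdeal {G : Submodule F R} {hG : G ≤ constants (φ : C.modeAlgebra →ₗ[F] 𝔤)}
    {h : ∀ z : 𝔤, ∃ x : C.modeAlgebra, φ x = z ∧ ∀ w ∈ G, (x : Module.End F R) w ∈ G} {s : 𝔤} :
    s ∈ valueIdeal hG h ↔ ∃ g ∈ G, φ (C.mode 0 g) = s :=
  Iff.rfl

lemma prod_eq_zero_of_mem_constants (hker : modeKernel (φ : C.modeAlgebra →ₗ[F] 𝔤) = ⊥) {u v : R}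
    (hu : u ∈ constants (φ : C.modeAlgebra →ₗ[F] 𝔤))
    (hv : v ∈ constants (φ : C.modeAlgebra →ₗ[F] 𝔤)) {n : ℕ} (hn : 1 ≤ n) : C.prod n u v = 0 := by
  obtain ⟨k, rfl⟩ := Nat.exists_eq_add_of_le' hn
  refine eq_of_map_mode_zero_eq hker (coe_apply_mem_constants hv (C.mode (k + 1) u))
    (zero_mem _) ?_
  have u_mode : φ (C.mode (k + 1) u) = 0 := mem_constants.mp hu k
  refine (map_mode_coe_apply_of_mem_constants hv (C.mode (k + 1) u) 0).trans ?_
  rw [if_pos rfl, u_mode, zero_lie, map_zero, map_zero]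

lemma prod_zero_neg_of_prod_eq_zero {u v : R} (h : ∀ n ≥ 1, C.prod n v u = 0) :
    C.prod 0 u v = -C.prod 0 v u := by
  simpa using C.skew 0 1 u v fun j hj => h (0 + j) (by omega)

lemma finite_constants [Module.Finite F 𝔤]
    (hker : modeKernel (φ : C.modeAlgebra →ₗ[F] 𝔤) = ⊥) :
    Module.Finite F (constants (φ : C.modeAlgebra →ₗ[F] 𝔤)) := by
  let value : constants (φ : C.modeAlgebra →ₗ[F] 𝔤) →ₗ[F] 𝔤 :=
    ((φ : C.modeAlgebra →ₗ[F] 𝔤) ∘ₗ C.mode 0).domRestrict _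
  exact Module.Finite.of_injective value fun g g' h =>
    Subtype.ext (eq_of_map_mode_zero_eq hker g.2 g'.2 h)

variable [LieAlgebra.IsSimple F 𝔤]

lemma IsSimple.exists_mem_constants_ne_zero [Module.Finite F 𝔤] (hC : C.IsSimple)
    (hφ : Function.Surjective φ) (hloc : ∀ a, ∃ N, ∀ m ≥ N, φ (C.mode m a) = 0) :
    ∃ g ∈ constants (φ : C.modeAlgebra →ₗ[F] 𝔤), φ (C.mode 0 g) ≠ 0 := by
  have := LieAlgebra.IsSimple.nontrivial F 𝔤
  obtain ⟨a, ha⟩ := hC.exists_ne_zero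
  have a_modes : ∃ n, φ (C.mode n a) ≠ 0 := by
    by_contra! h
    refine ha ((Submodule.mem_bot F).mp ?_)
    rw [← hC.modeKernel_lieHom_eq_bot hφ]
    exact mem_modeKernel.mpr h
  obtain ⟨N, h_ne, h_last⟩ := exists_last_ne_zero (hloc a) a_modes
  obtain ⟨z, hz⟩ : ∃ z : 𝔤, ⁅z, φ (C.mode N a)⁆ ≠ 0 := by
    by_contra! h
    have mem_center : φ (C.mode N a) ∈ LieAlgebra.center F 𝔤 :=
      (LieModule.mem_maxTrivSubmodule F 𝔤 𝔤 _).mpr h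
    rw [LieAlgebra.center_eq_bot] at mem_center
    exact h_ne ((LieSubmodule.mem_bot _).mp mem_center)
  obtain ⟨x, hx, hxz⟩ := exists_jet_eq (δ := C.modeDerivation) (φ := φ) modeDerivation_lie
    modeDerivation_surjective exists_modeDerivation_pow_eq_zero hφ N z
  have map_mode := map_mode_coe_apply_of_jet_eq_zero h_last hx
  refine ⟨(x : Module.End F R) a, mem_constants.mpr fun m => ?_, ?_⟩
  · exact (map_mode (m + 1)).trans (if_neg m.succ_ne_zero)
  · rw [map_mode, if_pos rfl, hxz]
    exact smul_ne_zero (mul_ne_zero (pow_ne_zero _ (neg_ne_zero.mpr one_ne_zero))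
      (inv_ne_zero (Nat.cast_ne_zero.mpr N.factorial_ne_zero))) hz

lemma IsSimple.exists_mem_constants_map_mode_eq [Module.Finite F 𝔤] (hC : C.IsSimple)
    (hφ : Function.Surjective φ) (hloc : ∀ a, ∃ N, ∀ m ≥ N, φ (C.mode m a) = 0) (s : 𝔤) :
    ∃ g ∈ constants (φ : C.modeAlgebra →ₗ[F] 𝔤), φ (C.mode 0 g) = s := by
  have stable (z : 𝔤) : ∃ x : C.modeAlgebra, φ x = z ∧
      ∀ w ∈ constants (φ : C.modeAlgebra →ₗ[F] 𝔤),
        (x : Module.End F R) w ∈ constants (φ : C.modeAlgebra →ₗ[F] 𝔤) :=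
    let ⟨x, hx⟩ := hφ z
    ⟨x, hx, fun _ hw => coe_apply_mem_constants hw x⟩
  obtain ⟨g, hg, hg_ne⟩ := hC.exists_mem_constants_ne_zero hφ hloc
  have eq_top : valueIdeal le_rfl stable = ⊤ := by
    refine (LieAlgebra.IsSimple.eq_bot_or_eq_top _).resolve_left fun eq_bot => hg_ne ?_
    rw [← LieSubmodule.mem_bot (R := F) (L := 𝔤), ← eq_bot]
    exact mem_valueIdeal.mpr ⟨g, hg, rfl⟩
  exact mem_valueIdeal.mp (eq_top ▸ LieSubmodule.mem_top s)

lemma exists_mem_constants_prod_ne_zero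
    (hsurj : ∀ s, ∃ g ∈ constants (φ : C.modeAlgebra →ₗ[F] 𝔤), φ (C.mode 0 g) = s) :
    ∃ u ∈ constants (φ : C.modeAlgebra →ₗ[F] 𝔤), ∃ v ∈ constants (φ : C.modeAlgebra →ₗ[F] 𝔤),
      C.prod 0 u v ≠ 0 := by
  by_contra! h
  refine LieAlgebra.IsSimple.non_abelian F (L := 𝔤) ⟨fun s t => ?_⟩
  obtain ⟨u, hu, rfl⟩ := hsurj s
  obtain ⟨v, hv, rfl⟩ := hsurj t
  have bracket := map_mode_coe_apply_of_mem_constants hv (C.mode 0 u) 0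
  rwa [mode_apply, h u hu v hv, map_zero, map_zero, if_pos rfl, eq_comm] at bracket

lemma eq_bot_or_eq_constants (hker : modeKernel (φ : C.modeAlgebra →ₗ[F] 𝔤) = ⊥)
    (hsurj : ∀ s, ∃ g ∈ constants (φ : C.modeAlgebra →ₗ[F] 𝔤), φ (C.mode 0 g) = s)
    {I : Submodule F R} (hI : I ≤ constants (φ : C.modeAlgebra →ₗ[F] 𝔤))
    (h_stable : ∀ u ∈ constants (φ : C.modeAlgebra →ₗ[F] 𝔤), ∀ w ∈ I, C.prod 0 u w ∈ I) :
    I = ⊥ ∨ I = constants (φ : C.modeAlgebra →ₗ[F] 𝔤) := by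
  have stable (z : 𝔤) : ∃ x : C.modeAlgebra, φ x = z ∧ ∀ w ∈ I, (x : Module.End F R) w ∈ I :=
    let ⟨u, hu, huz⟩ := hsurj z
    ⟨C.mode 0 u, huz, h_stable u hu⟩
  refine (LieAlgebra.IsSimple.eq_bot_or_eq_top (valueIdeal hI stable)).imp
    (fun eq_bot => (Submodule.eq_bot_iff I).mpr fun w hw => ?_)
    (fun eq_top => hI.antisymm fun g hg => ?_)
  · refine eq_of_map_mode_zero_eq hker (hI hw) (zero_mem _) ?_
    rw [map_zero, map_zero]
    exact (LieSubmodule.eq_bot_iff _).mp eq_bot _ (mem_valueIdeal.mpr ⟨w, hw, rfl⟩)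
  · have value_mem : φ (C.mode 0 g) ∈ valueIdeal hI stable := eq_top ▸ LieSubmodule.mem_top _
    obtain ⟨w, hw, hwg⟩ := mem_valueIdeal.mp value_mem
    exact eq_of_map_mode_zero_eq hker (hI hw) hg hwg ▸ hw

theorem IsSimple.isCurrentGenerators_constants [Module.Finite F 𝔤] (hC : C.IsSimple)
    (hφ : Function.Surjective φ) (hloc : ∀ a, ∃ N, ∀ m ≥ N, φ (C.mode m a) = 0) :
    C.IsCurrentGenerators (constants (φ : C.modeAlgebra →ₗ[F] 𝔤)) := by
  have := LieAlgebra.IsSimple.nontrivial F 𝔤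
  have hker := hC.modeKernel_lieHom_eq_bot hφ
  have hsurj := hC.exists_mem_constants_map_mode_eq hφ hloc
  refine ⟨finite_constants hker, fun f => eq_zero_of_sum_D_pow_eq_zero hker,
    span_D_pow_constants_eq_top hker hloc hsurj,
    fun u _ v hv => coe_apply_mem_constants hv (C.mode 0 u),
    fun u hu v hv n hn => prod_eq_zero_of_mem_constants hker hu hv hn,
    fun u hu v hv => prod_zero_neg_of_prod_eq_zero fun n hn =>
      prod_eq_zero_of_mem_constants hker hv hu hn,
    fun u _ v _ w _ => ?_, exists_mem_constants_prod_ne_zero hsurj,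
    fun I => eq_bot_or_eq_constants hker hsurj⟩
  simpa using C.jacobi 0 0 u v w

end CurrentGenerators

section CurrentClassification

attribute [local instance] LieRing.ofAssociativeRing

variable {F R : Type*} [Field F] [CharZero F] [AddCommGroup R] [Module F R]
  {C : ConformalAlgebra F R}

theorem IsSimple.exists_isCurrentGenerators (hC : C.IsSimple) {J : LieIdeal F C.modeAlgebra}
    (hJ : J ≠ ⊤) [Module.Finite F (C.modeAlgebra ⧸ J)]
    (hloc : ∀ a, ∃ N, ∀ m ≥ N, C.mode m a ∈ J) : ∃ G, C.IsCurrentGenerators G := by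
  have : Nontrivial (C.modeAlgebra ⧸ J) :=
    Submodule.Quotient.nontrivial_iff.mpr fun h => hJ ((LieSubmodule.toSubmodule_eq_top _).mp h)
  obtain ⟨K, hK, -⟩ :=
    (eq_top_or_exists_le_coatom (⊥ : LieIdeal F (C.modeAlgebra ⧸ J))).resolve_left bot_ne_top
  have : Nontrivial ((C.modeAlgebra ⧸ J) ⧸ K) :=
    Submodule.Quotient.nontrivial_iff.mpr fun h => hK.1 ((LieSubmodule.toSubmodule_eq_top _).mp h)
  have hφ : Function.Surjective ((quotientHom K).comp (quotientHom J)) :=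
    (quotientHom_surjective K).comp (quotientHom_surjective J)
  have := isSimple_quotient_of_isCoatom hK (hC.not_isLieAbelian hφ)
  have : Module.Finite F ((C.modeAlgebra ⧸ J) ⧸ K) :=
    Module.Finite.of_surjective K.toSubmodule.mkQ K.toSubmodule.mkQ_surjective
  refine ⟨_, hC.isCurrentGenerators_constants hφ fun a => ?_⟩
  obtain ⟨N, hN⟩ := hloc a
  exact ⟨N, fun m hm => by
    rw [LieHom.comp_apply, quotientHom_eq_zero.mpr (hN m hm), map_zero]⟩

end CurrentClassification

end ConformalAlgebra

/-- **D'Andrea–Kac classification** (Theorem 2.3): over an algebraically closed field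
of characteristic 0, a simple conformal algebra of finite type is isomorphic either to
the Virasoro conformal algebra `R_W` (intrinsically: `R` is a free rank-one
`F[∂]`-module on a generator `e` with `e⁽⁰⁾e = ∂e`, `e⁽¹⁾e = 2e`, `e⁽ⁿ⁾e = 0` for
`n ≥ 2`) or to the current conformal algebra `R(G)` of a finite-dimensional simple
Lie algebra `G` (intrinsically: `R` is a free `F[∂]`-module over a finite-dimensional
subspace `G` on which `prod 0` is a simple Lie bracket and all higher products vanish;
such data determine the conformal structure uniquely). -/
theorem simple_finite_type_classification
    {F R : Type*} [Field F] [CharZero F] [IsAlgClosed F] [AddCommGroup R] [Module F R]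
    (C : ConformalAlgebra F R)
    -- simplicity: some product is nonzero and the only ideals are ⊥ and ⊤
    (hnz : ∃ (n : ℕ) (u v : R), C.prod n u v ≠ 0)
    (hsimple : ∀ I : Submodule F R, (∀ x ∈ I, C.D x ∈ I) →
      (∀ (u : R), ∀ w ∈ I, ∀ n : ℕ, C.prod n u w ∈ I) → I = ⊥ ∨ I = ⊤)
    -- finite type: R = F[∂]V for some finite-dimensional subspace V
    (hft : ∃ V : Submodule F R, FiniteDimensional F V ∧
      Submodule.span F {x : R | ∃ (m : ℕ) (v : R), v ∈ V ∧ x = (C.D ^ m) v} = ⊤) :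
    -- R ≅ R_W :
    (∃ e : R,
      (∀ c : ℕ →₀ F, (c.sum fun m a => a • ((C.D ^ m) e)) = 0 → c = 0) ∧
      Submodule.span F (Set.range fun m : ℕ => (C.D ^ m) e) = ⊤ ∧
      C.prod 0 e e = C.D e ∧ C.prod 1 e e = (2 : F) • e ∧ ∀ n ≥ 2, C.prod n e e = 0)
    ∨
    -- R ≅ R(G) for a finite-dimensional simple Lie algebra G :
    (∃ G : Submodule F R, FiniteDimensional F G ∧
      -- R is a free F[∂]-module over G
      (∀ f : ℕ →₀ R, (∀ m : ℕ, f m ∈ G) → (f.sum fun m g => (C.D ^ m) g) = 0 → f = 0) ∧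
      Submodule.span F {x : R | ∃ (m : ℕ) (g : R), g ∈ G ∧ x = (C.D ^ m) g} = ⊤ ∧
      -- the products of elements of G: prod 0 is a bracket on G, higher products vanish
      (∀ u ∈ G, ∀ v ∈ G, C.prod 0 u v ∈ G) ∧
      (∀ u ∈ G, ∀ v ∈ G, ∀ n ≥ 1, C.prod n u v = 0) ∧
      -- (G, prod 0) is a simple Lie algebra
      (∀ u ∈ G, ∀ v ∈ G, C.prod 0 u v = -C.prod 0 v u) ∧
      (∀ u ∈ G, ∀ v ∈ G, ∀ w ∈ G,
        C.prod 0 u (C.prod 0 v w) - C.prod 0 v (C.prod 0 u w) = C.prod 0 (C.prod 0 u v) w) ∧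
      (∃ u ∈ G, ∃ v ∈ G, C.prod 0 u v ≠ 0) ∧
      (∀ I : Submodule F R, I ≤ G → (∀ u ∈ G, ∀ w ∈ I, C.prod 0 u w ∈ I) →
        I = ⊥ ∨ I = G)) := by
  have hC : C.IsSimple := ⟨hnz, fun I hI => hsimple I hI.1 hI.2⟩
  rcases hC.exists_lieIdeal_or_functional hft with ⟨J, hJ, _, hloc⟩ | ⟨θ, hθ, hloc⟩
  · exact Or.inr (hC.exists_isCurrentGenerators hJ hloc)
  · exact Or.inl (hC.exists_isVirasoroGenerator hθ hloc)
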